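/- arXiv:1610.09833 — 4 statements merged into one kernel-verified Lean document; each statement's English description precedes it below -/
import Mathlib

section
/- Let f: ℝ → ℝ satisfy hypothesis (H). Define Δ = {(t,ρ) ∈ (0,∞) × (−π,π) : −r_t < ρ < r_t}, let Δ̄ = {(t,ρ) ∈ (0,∞) × (−π,π) : −r_t ≤ ρ ≤ r_t} be its closure in (0,∞) × (−π,π), and let F(t,ρ) = (U_t(ρ), U_t'(ρ)). Then there exists an open neighborhood Δ̃ of Δ̄ in (0,∞) × (−π,π) such that F restricted to Δ̃ is injective with everywhere invertible differential, i.e. F is a diffeomorphism from Δ̃ onto its image. -/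
open Real Set

/-- `U` is an even `C²` solution of `U'' + (cot ρ)·U' + f(U) = 0` on `(-π, π)`. -/
def IsEvenSol (f U : ℝ → ℝ) : Prop :=
  (∀ ρ ∈ Set.Ioo (-Real.pi) Real.pi, U (-ρ) = U ρ) ∧
  ContDiffOn ℝ 2 U (Set.Ioo (-Real.pi) Real.pi) ∧
  ∀ ρ ∈ Set.Ioo (-Real.pi) Real.pi, ρ ≠ 0 →
    deriv (deriv U) ρ + (Real.cos ρ / Real.sin ρ) * deriv U ρ + f (U ρ) = 0

/-- Regular even functions with explicit first and second derivatives. -/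
structure Reg (Z Y X : ℝ → ℝ) : Prop where
  even : ∀ ρ ∈ Ioo (-π) π, Z (-ρ) = Z ρ
  d1 : ∀ ρ ∈ Ioo (-π) π, HasDerivAt Z (Y ρ) ρ
  d2 : ∀ ρ ∈ Ioo (-π) π, HasDerivAt Y (X ρ) ρ
  cont : ContinuousOn X (Ioo (-π) π)

theorem neg_mem_I {ρ : ℝ} (h : ρ ∈ Ioo (-π) π) : -ρ ∈ Ioo (-π) π :=
  ⟨by linarith [h.2], by linarith [h.1]⟩

theorem Reg.oddY {Z Y X : ℝ → ℝ} (h : Reg Z Y X) : ∀ ρ ∈ Ioo (-π) π, Y (-ρ) = -Y ρ := by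
  intro ρ hρ
  have h1 : HasDerivAt (fun x => Z (-x)) (-Y (-ρ)) ρ := by
    have := HasDerivAt.comp ρ (h.d1 (-ρ) (neg_mem_I hρ)) (hasDerivAt_neg ρ)
    simpa using! this
  have h2 : HasDerivAt (fun x => Z (-x)) (Y ρ) ρ := by
    refine (h.d1 ρ hρ).congr_of_eventuallyEq ?_
    filter_upwards [isOpen_Ioo.mem_nhds hρ] with x hx using h.even x hx
  linarith [h1.unique h2]

theorem Reg.evenX {Z Y X : ℝ → ℝ} (h : Reg Z Y X) : ∀ ρ ∈ Ioo (-π) π, X (-ρ) = X ρ := by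
  intro ρ hρ
  have h1 : HasDerivAt (fun x => Y (-x)) (-X (-ρ)) ρ := by
    have := HasDerivAt.comp ρ (h.d2 (-ρ) (neg_mem_I hρ)) (hasDerivAt_neg ρ)
    simpa using! this
  have h2 : HasDerivAt (fun x => Y (-x)) (-X ρ) ρ := by
    refine (h.d2 ρ hρ).neg.congr_of_eventuallyEq ?_
    filter_upwards [isOpen_Ioo.mem_nhds hρ] with x hx using h.oddY x hx
  linarith [h1.unique h2]

theorem zero_mem_I : (0:ℝ) ∈ Ioo (-π) π := ⟨by linarith [pi_pos], pi_pos⟩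

theorem Reg.Y0 {Z Y X : ℝ → ℝ} (h : Reg Z Y X) : Y 0 = 0 := by
  have := h.oddY 0 zero_mem_I
  simp at this; linarith

theorem Reg.lin {Z Y X Z' Y' X' : ℝ → ℝ} (h : Reg Z Y X) (h' : Reg Z' Y' X') (α β : ℝ) :
    Reg (fun ρ => α * Z ρ + β * Z' ρ) (fun ρ => α * Y ρ + β * Y' ρ)
      (fun ρ => α * X ρ + β * X' ρ) where
  even ρ hρ := by simp only [h.even ρ hρ, h'.even ρ hρ]
  d1 ρ hρ := ((h.d1 ρ hρ).const_mul α).add ((h'.d1 ρ hρ).const_mul β)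
  d2 ρ hρ := ((h.d2 ρ hρ).const_mul α).add ((h'.d2 ρ hρ).const_mul β)
  cont := (h.cont.const_smul α).add (h'.cont.const_smul β)

theorem Reg.contZ {Z Y X : ℝ → ℝ} (h : Reg Z Y X) : ContinuousOn Z (Ioo (-π) π) :=
  fun x hx => (h.d1 x hx).continuousAt.continuousWithinAt
theorem Reg.contY {Z Y X : ℝ → ℝ} (h : Reg Z Y X) : ContinuousOn Y (Ioo (-π) π) :=
  fun x hx => (h.d2 x hx).continuousAt.continuousWithinAt

theorem IsEvenSol.reg {f U : ℝ → ℝ} (h : IsEvenSol f U) :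
    Reg U (deriv U) (deriv (deriv U)) := by
  obtain ⟨he, hc, -⟩ := h
  have hc' : ContDiffOn ℝ (1+1) U (Ioo (-π) π) := by norm_num; exact hc
  have h1 := (contDiffOn_succ_iff_deriv_of_isOpen isOpen_Ioo).1 hc'
  have h2 : ContDiffOn ℝ 1 (deriv U) (Ioo (-π) π) := h1.2.2
  have h2' : ContDiffOn ℝ (0+1) (deriv U) (Ioo (-π) π) := by simpa using! h2
  have h3 := (contDiffOn_succ_iff_deriv_of_isOpen isOpen_Ioo).1 h2'
  refine ⟨he, fun ρ hρ => ?_, fun ρ hρ => ?_, h3.2.2.continuousOn⟩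
  · exact (h1.1.differentiableAt (isOpen_Ioo.mem_nhds hρ)).hasDerivAt
  · exact (h3.1.differentiableAt (isOpen_Ioo.mem_nhds hρ)).hasDerivAt

theorem cos_gt {ρ a : ℝ} (h0 : 0 ≤ ρ) (ha : ρ ≤ a) (hp : a < π) : 0 < 1 + cos a ∧ cos a ≤ cos ρ := by
  have h1 : cos a ≤ cos ρ := cos_le_cos_of_nonneg_of_le_pi h0 hp.le ha
  have h2 : cos π < cos a := cos_lt_cos_of_nonneg_of_le_pi (h0.trans ha) le_rfl hp
  rw [cos_pi] at h2
  exact ⟨by linarith, h1⟩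

theorem neg_cot_le {ρ a : ℝ} (h0 : 0 < ρ) (ha : ρ ≤ a) (hp : a < π) :
    -(cos ρ / sin ρ) ≤ 1 / (1 + cos a) := by
  obtain ⟨h1, h2⟩ := cos_gt h0.le ha hp
  have hs : 0 < sin ρ := sin_pos_of_pos_of_lt_pi h0 (ha.trans_lt hp)
  have h4 : sin ρ ≤ 1 := sin_le_one ρ
  have h5 : cos ρ ≤ 1 := cos_le_one ρ
  have hsq := sin_sq_add_cos_sq ρ
  rw [← neg_div, div_le_div_iff₀ hs h1]
  have : -cos ρ * (1 + cos a) ≤ sin ρ * sin ρ := by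
    nlinarith
  nlinarith

/-- From a bound on `X + cot Y` derive a bound on `X`. -/
theorem Reg.boundX {Z Y X : ℝ → ℝ} (h : Reg Z Y X) {a b m : ℝ} (hb : 0 < b) (hba : b ≤ a)
    (hp : a < π) (hm : ∀ ρ ∈ Ioo 0 b, |X ρ + cos ρ / sin ρ * Y ρ| ≤ m) :
    ∀ ρ ∈ Icc 0 b, |X ρ| ≤ m * (1 + 1 / (1 + cos a)) := by
  have hsub : Icc 0 b ⊆ Ioo (-π) π := fun x hx => ⟨by linarith [hx.1, pi_pos], by linarith [hx.2]⟩
  have key : ∀ ρ ∈ Ioo 0 b, |X ρ| ≤ m * (1 + 1 / (1 + cos a)) := by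
    intro ρ hρ
    have hI := hsub ⟨hρ.1.le, hρ.2.le⟩
    obtain ⟨c1, c2⟩ := cos_gt hρ.1.le (hρ.2.le.trans hba) hp
    have hs : 0 < sin ρ := sin_pos_of_pos_of_lt_pi hρ.1 hI.2
    have hm0 : 0 ≤ m := (abs_nonneg _).trans (hm ρ hρ)
    have hder : ∀ x ∈ Ioo 0 b, HasDerivAt (fun x => sin x * Y x)
        (sin x * (X x + cos x / sin x * Y x)) x := by
      intro x hx
      have hsx : 0 < sin x := sin_pos_of_pos_of_lt_pi hx.1 (by linarith [hx.2])
      convert! (hasDerivAt_sin x).mul (h.d2 x (hsub ⟨hx.1.le, hx.2.le⟩)) using 1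
      field_simp; ring
    have hcont : ContinuousOn (fun x => sin x * Y x) (Icc 0 b) :=
      continuous_sin.continuousOn.mul (h.contY.mono hsub)
    have hup : AntitoneOn (fun x => sin x * Y x + m * cos x) (Icc 0 b) := by
      apply antitoneOn_of_deriv_nonpos (convex_Icc 0 b)
      · exact hcont.add (continuous_cos.continuousOn.const_smul m)
      · rw [interior_Icc]; intro x hx
        exact ((hder x hx).add ((hasDerivAt_cos x).const_mul m)).differentiableAt.differentiableWithinAt
      · rw [interior_Icc]; intro x hx
        have hd' : HasDerivAt (fun x => sin x * Y x + m * cos x) _ x :=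
          (hder x hx).add ((hasDerivAt_cos x).const_mul m)
        rw [hd'.deriv]
        have hsx : 0 < sin x := sin_pos_of_pos_of_lt_pi hx.1 (by linarith [hx.2])
        have := (abs_le.1 (hm x hx)).2
        nlinarith
    have hlo : MonotoneOn (fun x => sin x * Y x - m * cos x) (Icc 0 b) := by
      apply monotoneOn_of_deriv_nonneg (convex_Icc 0 b)
      · exact hcont.sub (continuous_cos.continuousOn.const_smul m)
      · rw [interior_Icc]; intro x hx
        exact ((hder x hx).sub ((hasDerivAt_cos x).const_mul m)).differentiableAt.differentiableWithinAt
      · rw [interior_Icc]; intro x hx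
        have hd' : HasDerivAt (fun x => sin x * Y x - m * cos x) _ x :=
          (hder x hx).sub ((hasDerivAt_cos x).const_mul m)
        rw [hd'.deriv]
        have hsx : 0 < sin x := sin_pos_of_pos_of_lt_pi hx.1 (by linarith [hx.2])
        have := (abs_le.1 (hm x hx)).1
        nlinarith
    have e1 := hup ⟨le_rfl, hb.le⟩ ⟨hρ.1.le, hρ.2.le⟩ hρ.1.le
    have e2 := hlo ⟨le_rfl, hb.le⟩ ⟨hρ.1.le, hρ.2.le⟩ hρ.1.le
    simp at e1 e2
    have e3 : |sin ρ * Y ρ| ≤ m * (1 - cos ρ) := abs_le.2 ⟨by linarith, by linarith⟩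
    have hsq := sin_sq_add_cos_sq ρ
    have e4 : |cos ρ / sin ρ * Y ρ| ≤ m * (1 / (1 + cos a)) := by
      have : cos ρ / sin ρ * Y ρ = cos ρ * (sin ρ * Y ρ) / (sin ρ)^2 := by field_simp
      rw [this, abs_div, abs_mul, abs_of_pos (show 0 < sin ρ ^ 2 by positivity), mul_one_div,
        div_le_div_iff₀ (by positivity) c1]
      have h7 : |cos ρ| ≤ 1 := abs_cos_le_one ρ
      have h8 : 0 ≤ 1 - cos ρ := by linarith [cos_le_one ρ]
      calc |cos ρ| * |sin ρ * Y ρ| * (1 + cos a) ≤ 1 * (m * (1 - cos ρ)) * (1 + cos ρ) := by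
            gcongr
        _ = m * sin ρ ^ 2 := by linear_combination (-m) * hsq
    have e5 := hm ρ hρ
    rw [abs_le] at *
    constructor <;> linarith [e4.1, e4.2, e5.1, e5.2]
  intro ρ hρ
  have hcl : closure (Ioo 0 b) = Icc 0 b := closure_Ioo hb.ne
  have := (h.cont.mono hsub).abs
  have h3 : MapsTo (fun x => |X x|) (Ioo 0 b) (Iic (m * (1 + 1 / (1 + cos a)))) := fun x hx => key x hx
  have h4 := h3.closure_of_continuousOn (by rw [hcl]; exact this)
  rw [hcl, isClosed_Iic.closure_eq] at h4
  exact h4 hρ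

theorem energy_alg {z y q κ K η ct : ℝ} (hct : -ct ≤ κ) (hK : 0 ≤ K) 
    (hq : |q + ct * y| ≤ K * |z| + η) :
    2 * z * y + 2 * y * q ≤ (2 + K + 2 * κ) * (z ^ 2 + y ^ 2) + η ^ 2 + 2 * |κ| * z ^ 2 := by
  have h1 : y * (q + ct * y) ≤ |y| * (K * |z| + η) := by
    calc _ ≤ |y * (q + ct * y)| := le_abs_self _
      _ = |y| * |q + ct * y| := abs_mul _ _
      _ ≤ _ := by gcongr
  have hz := sq_abs z
  have hy := sq_abs y
  have h2 : -ct * y ^ 2 ≤ κ * y ^ 2 := by gcongr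
  have h3 : 2 * (|y| * |z|) ≤ z ^ 2 + y ^ 2 := by nlinarith [sq_nonneg (|y| - |z|)]
  have h4 : 2 * (|y| * η) ≤ y ^ 2 + η ^ 2 := by nlinarith [sq_nonneg (|y| - η)]
  have h5 : K * (2 * (|y| * |z|)) ≤ K * (z ^ 2 + y ^ 2) := by gcongr
  have h6 : -κ * z ^ 2 ≤ |κ| * z ^ 2 := by gcongr; exact neg_le_abs κ
  nlinarith [sq_nonneg (z - y)]

theorem gron {a K : ℝ} (ha : 0 < a) (hp : a < π) (hK : 0 ≤ K) :
    ∃ C > 0, ∀ Z Y X : ℝ → ℝ, Reg Z Y X → ∀ η ≥ 0, ∀ b, 0 < b → b ≤ a →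
      (∀ ρ ∈ Ioo 0 b, |X ρ + cos ρ / sin ρ * Y ρ| ≤ K * |Z ρ| + η) →
      ∀ ρ, |ρ| ≤ b → |Z ρ| ≤ C * (|Z 0| + η) ∧ |Y ρ| ≤ C * (|Z 0| + η) ∧
        |X ρ| ≤ C * (|Z 0| + η) := by
  have c1 : 0 < 1 + cos a := (cos_gt ha.le le_rfl hp).1
  set κ := 1 / (1 + cos a) with hκ
  have hκ0 : 0 < κ := by positivity
  set M := 2 + K + 4 * κ with hM
  have hM0 : 1 ≤ M := by linarith
  set E := exp (M * a) with hE
  have hE1 : 1 ≤ E := one_le_exp (by positivity)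
  refine ⟨E + (K * E + 1) * (1 + κ), by positivity, ?_⟩
  intro Z Y X h η hη b hb hba hin
  have hsub : Icc 0 b ⊆ Ioo (-π) π := fun x hx => ⟨by linarith [hx.1, pi_pos], by linarith [hx.2]⟩
  have hd : ∀ x ∈ Ioo (-π) π, HasDerivAt (fun x => (Z x ^ 2 + Y x ^ 2 + η ^ 2) * exp (-(M * x)))
      ((2 * Z x * Y x + 2 * Y x * X x) * exp (-(M * x)) +
        (Z x ^ 2 + Y x ^ 2 + η ^ 2) * (exp (-(M * x)) * (-M))) x := by
    intro x hx
    have a1 := (((h.d1 x hx).pow 2).add ((h.d2 x hx).pow 2)).add_const (η ^ 2)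
    have a2 : HasDerivAt (fun x => exp (-(M * x))) (exp (-(M * x)) * (-M)) x := by
      have := ((hasDerivAt_id x).const_mul M).neg.exp
      simpa using! this
    convert! a1.mul a2 using 1
    simp
  have hanti : AntitoneOn (fun x => (Z x ^ 2 + Y x ^ 2 + η ^ 2) * exp (-(M * x))) (Icc 0 b) := by
    apply antitoneOn_of_deriv_nonpos (convex_Icc 0 b)
    · exact fun x hx => (hd x (hsub hx)).continuousAt.continuousWithinAt
    · rw [interior_Icc]
      exact fun x hx => (hd x (hsub ⟨hx.1.le, hx.2.le⟩)).differentiableAt.differentiableWithinAt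
    · rw [interior_Icc]; intro x hx
      rw [(hd x (hsub ⟨hx.1.le, hx.2.le⟩)).deriv]
      have := energy_alg (neg_cot_le hx.1 (hx.2.le.trans hba) hp) hK (hin x hx)
      rw [← hκ, abs_of_pos hκ0] at this
      have h3 : (2 * Z x * Y x + 2 * Y x * X x) - M * (Z x ^ 2 + Y x ^ 2 + η ^ 2) ≤ 0 := by
        nlinarith [sq_nonneg (Z x), sq_nonneg (Y x), sq_nonneg η,
          mul_nonneg hκ0.le (sq_nonneg (Y x)), mul_nonneg (sub_nonneg.2 hM0) (sq_nonneg η)]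
      have h4 := exp_pos (-(M * x))
      nlinarith
  have hZY : ∀ ρ ∈ Icc 0 b, |Z ρ| ≤ E * (|Z 0| + η) ∧ |Y ρ| ≤ E * (|Z 0| + η) := by
    intro ρ hρ
    have e1 := hanti ⟨le_rfl, hb.le⟩ hρ hρ.1
    simp only [h.Y0, mul_zero, neg_zero, exp_zero, mul_one] at e1
    have e2 : Z ρ ^ 2 + Y ρ ^ 2 + η ^ 2 ≤ (Z 0 ^ 2 + η ^ 2) * E := by
      have : Z ρ ^ 2 + Y ρ ^ 2 + η ^ 2 =
          ((Z ρ ^ 2 + Y ρ ^ 2 + η ^ 2) * exp (-(M * ρ))) * exp (M * ρ) := by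
        rw [mul_assoc, ← exp_add]; simp
      rw [this]
      have h6 : exp (M * ρ) ≤ E := exp_le_exp.2 (by
        have := hρ.2.trans hba
        gcongr)
      have h7 : (Z ρ ^ 2 + Y ρ ^ 2 + η ^ 2) * exp (-(M * ρ)) ≤ Z 0 ^ 2 + η ^ 2 := by simpa using e1
      gcongr
    have e3 : (Z 0 ^ 2 + η ^ 2) * E ≤ (E * (|Z 0| + η)) ^ 2 := by
      have : Z 0 ^ 2 + η ^ 2 ≤ (|Z 0| + η) ^ 2 := by nlinarith [sq_abs (Z 0), abs_nonneg (Z 0)]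
      calc _ ≤ (|Z 0| + η) ^ 2 * (E * E) := by gcongr; nlinarith
        _ = _ := by ring
    have h0 : 0 ≤ E * (|Z 0| + η) := by positivity
    constructor <;> apply abs_le_of_sq_le_sq _ h0 <;> nlinarith [sq_nonneg (Z ρ), sq_nonneg (Y ρ)]
  have hX : ∀ ρ ∈ Icc 0 b, |X ρ| ≤ ((K * E + 1) * (|Z 0| + η)) * (1 + κ) := by
    apply h.boundX hb hba hp
    intro ρ hρ
    refine (hin ρ hρ).trans ?_
    have := (hZY ρ ⟨hρ.1.le, hρ.2.le⟩).1
    have : K * |Z ρ| ≤ K * (E * (|Z 0| + η)) := by gcongr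
    linarith [abs_nonneg (Z 0)]
  have hfin : ∀ ρ ∈ Icc 0 b, |Z ρ| ≤ (E + (K * E + 1) * (1 + κ)) * (|Z 0| + η) ∧
      |Y ρ| ≤ (E + (K * E + 1) * (1 + κ)) * (|Z 0| + η) ∧
        |X ρ| ≤ (E + (K * E + 1) * (1 + κ)) * (|Z 0| + η) := by
    intro ρ hρ
    have g1 := hZY ρ hρ
    have g2 := hX ρ hρ
    have g3 : 0 ≤ (K * E + 1) * (1 + κ) * (|Z 0| + η) := by positivity
    have g4 : 0 ≤ E * (|Z 0| + η) := by positivity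
    refine ⟨?_, ?_, ?_⟩ <;> nlinarith [g1.1, g1.2]
  intro ρ hρ
  rcases le_total 0 ρ with h0 | h0
  · rw [abs_of_nonneg h0] at hρ
    exact hfin ρ ⟨h0, hρ⟩
  · rw [abs_of_nonpos h0] at hρ
    have hm : -ρ ∈ Icc 0 b := ⟨by linarith, hρ⟩
    have hm' : ρ ∈ Ioo (-π) π := by simpa using neg_mem_I (hsub hm)
    have := hfin (-ρ) hm
    rwa [h.even ρ hm', h.oddY ρ hm', h.evenX ρ hm', abs_neg] at this


theorem f_lip {f : ℝ → ℝ} (hf : ContDiff ℝ 1 f) (B : ℝ) :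
    ∃ L ≥ 0, ∀ u v, |u| ≤ B → |v| ≤ B → |f u - f v| ≤ L * |u - v| := by
  have hc : Continuous (deriv f) := hf.continuous_deriv le_rfl
  obtain ⟨L, hL⟩ := (isCompact_Icc (a := -B) (b := B)).exists_bound_of_continuousOn hc.continuousOn
  refine ⟨max L 0, le_max_right _ _, fun u v hu hv => ?_⟩
  have := Convex.norm_image_sub_le_of_norm_deriv_le (f := f) (s := Icc (-B) B) (C := max L 0)
    (x := v) (y := u)
    (fun x _ => (hf.differentiable one_ne_zero) x)
    (fun x hx => (hL x hx).trans (le_max_left _ _)) (convex_Icc _ _) (abs_le.1 hv) (abs_le.1 hu)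
  simpa using this

theorem f_unif {f : ℝ → ℝ} (hf : ContDiff ℝ 1 f) (B : ℝ) {ε : ℝ} (hε : 0 < ε) :
    ∃ δ > 0, ∀ u v w, |u| ≤ B → |v| ≤ B → |w| ≤ B → |u - w| < δ → |v - w| < δ →
      |f u - f v - deriv f w * (u - v)| ≤ ε * |u - v| := by
  have hc : Continuous (deriv f) := hf.continuous_deriv le_rfl
  have huc := (isCompact_Icc (a := -B) (b := B)).uniformContinuousOn_of_continuous hc.continuousOn
  rw [Metric.uniformContinuousOn_iff] at huc
  obtain ⟨δ, hδ, h⟩ := huc ε hε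
  refine ⟨δ, hδ, fun u v w hu hv hw huw hvw => ?_⟩
  have hd : ∀ x, HasDerivAt (fun x => f x - deriv f w * x) (deriv f x - deriv f w) x := by
    intro x
    have := ((hf.differentiable one_ne_zero) x).hasDerivAt.sub
      ((hasDerivAt_id x).const_mul (deriv f w))
    simpa using! this
  have := Convex.norm_image_sub_le_of_norm_hasDerivWithin_le (f := fun x => f x - deriv f w * x)
    (f' := fun x => deriv f x - deriv f w)
    (s := Icc (-B) B ∩ Metric.ball w δ) (C := ε) (x := v) (y := u)
    (fun x _ => (hd x).hasDerivWithinAt)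
    (fun x hx => by
      have := h x hx.1 w (abs_le.1 hw) hx.2
      rw [Real.dist_eq] at this
      exact this.le)
    ((convex_Icc _ _).inter (convex_ball _ _)) ⟨abs_le.1 hv, by rwa [Metric.mem_ball, Real.dist_eq]⟩
    ⟨abs_le.1 hu, by rwa [Metric.mem_ball, Real.dist_eq]⟩
  simp only [Real.norm_eq_abs] at this
  convert this using 2
  ring

theorem mem_I_of_abs {ρ a : ℝ} (h : |ρ| ≤ a) (hp : a < π) : ρ ∈ Ioo (-π) π := by
  rw [abs_le] at h; exact ⟨by linarith [h.1], by linarith [h.2]⟩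

theorem stab {f : ℝ → ℝ} (hf : ContDiff ℝ 1 f) {U : ℝ → ℝ → ℝ}
    (hU : ∀ t > (0:ℝ), IsEvenSol f (U t) ∧ U t 0 = t) {t0 a : ℝ} (ht0 : 0 < t0) (ha : 0 < a)
    (hp : a < π) :
    ∃ δ > 0, δ ≤ t0 ∧ ∃ C > 0, ∃ B, (∀ t, |t - t0| < δ → ∀ ρ, |ρ| ≤ a → |U t ρ| ≤ B) ∧
      ∀ t s, |t - t0| < δ → |s - t0| < δ → ∀ ρ, |ρ| ≤ a → |U t ρ - U s ρ| ≤ C * |t - s| ∧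
        |deriv (U t) ρ - deriv (U s) ρ| ≤ C * |t - s| ∧
        |deriv (deriv (U t)) ρ - deriv (deriv (U s)) ρ| ≤ C * |t - s| := by
  have hr0 := (hU t0 ht0).1.reg
  have hsubI : Icc (-a) a ⊆ Ioo (-π) π := fun x hx => ⟨by linarith [hx.1], by linarith [hx.2]⟩
  obtain ⟨M, hM⟩ := (isCompact_Icc (a := -a) (b := a)).exists_bound_of_continuousOn
    (hr0.contZ.mono hsubI)
  simp only [Real.norm_eq_abs] at hM
  obtain ⟨L, hL0, hL⟩ := f_lip hf (M + 1)
  obtain ⟨C, hC, hG⟩ := gron ha hp hL0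
  -- difference of two solutions
  have hdiff : ∀ t s, 0 < t → 0 < s → ∀ b, 0 < b → b ≤ a →
      (∀ ρ ∈ Ioo 0 b, |U t ρ| ≤ M + 1) → (∀ ρ ∈ Ioo 0 b, |U s ρ| ≤ M + 1) →
      ∀ ρ, |ρ| ≤ b → |U t ρ - U s ρ| ≤ C * |t - s| ∧
        |deriv (U t) ρ - deriv (U s) ρ| ≤ C * |t - s| ∧
        |deriv (deriv (U t)) ρ - deriv (deriv (U s)) ρ| ≤ C * |t - s| := by
    intro t s ht hs b hb hba h1 h2 ρ hρ
    have hreg := (hU t ht).1.reg.lin (hU s hs).1.reg 1 (-1)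
    have := hG _ _ _ hreg 0 le_rfl b hb hba (by
      intro x hx
      have hxI : x ∈ Ioo (-π) π := ⟨by linarith [hx.1, pi_pos], by linarith [hx.2]⟩
      have q1 := (hU t ht).1.2.2 x hxI hx.1.ne'
      have q2 := (hU s hs).1.2.2 x hxI hx.1.ne'
      have := hL _ _ (h1 x hx) (h2 x hx)
      have e : 1 * deriv (deriv (U t)) x + -1 * deriv (deriv (U s)) x +
        cos x / sin x * (1 * deriv (U t) x + -1 * deriv (U s) x) = -(f (U t x) - f (U s x)) := by
        linear_combination q1 - q2
      rw [e, abs_neg]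
      convert this using 1
      rw [add_zero]; congr 2; ring) ρ hρ
    simp only [(hU t ht).2, (hU s hs).2, add_zero, one_mul, neg_mul, ← sub_eq_add_neg] at this
    exact this
  have hin0 : ∀ ρ, |ρ| ≤ a → |U t0 ρ| ≤ M := fun ρ hρ => hM ρ (abs_le.1 hρ)
  set δ := min t0 (min 1 (1 / C)) with hδ
  have hδ0 : 0 < δ := by positivity
  have hpos : ∀ t, |t - t0| < δ → 0 < t := by
    intro t ht
    have : δ ≤ t0 := min_le_left _ _
    rw [abs_lt] at ht; linarith [ht.1]
  have hbd : ∀ t, |t - t0| < δ → ∀ ρ ∈ Icc 0 a, |U t ρ - U t0 ρ| < 1 := by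
    intro t ht
    by_contra! hcon
    have htp := hpos t ht
    have hδ1 : δ ≤ 1 := (min_le_right _ _).trans (min_le_left _ _)
    have hδ2 : δ ≤ 1 / C := (min_le_right _ _).trans (min_le_right _ _)
    have hsub2 : Icc 0 a ⊆ Ioo (-π) π := (Icc_subset_Icc_left (by linarith)).trans hsubI
    have hcont : ContinuousOn (fun ρ => |U t ρ - U t0 ρ|) (Icc 0 a) :=
      (((hU t htp).1.reg.contZ.mono hsub2).sub (hr0.contZ.mono hsub2)).abs
    have hcl : IsClosed (Icc 0 a ∩ (fun ρ => |U t ρ - U t0 ρ|) ⁻¹' (Ici 1)) :=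
      hcont.preimage_isClosed_of_isClosed isClosed_Icc isClosed_Ici
    have hne : (Icc 0 a ∩ (fun ρ => |U t ρ - U t0 ρ|) ⁻¹' (Ici 1)).Nonempty := by
      obtain ⟨x, hx, hx1⟩ := hcon
      exact ⟨x, hx, hx1⟩
    have hbb : BddBelow (Icc 0 a ∩ (fun ρ => |U t ρ - U t0 ρ|) ⁻¹' (Ici 1)) :=
      ⟨0, fun x hx => hx.1.1⟩
    obtain ⟨hb1, hb2⟩ := hcl.csInf_mem hne hbb
    set b := sInf (Icc 0 a ∩ (fun ρ => |U t ρ - U t0 ρ|) ⁻¹' (Ici 1)) with hb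
    have hb2 : 1 ≤ |U t b - U t0 b| := hb2
    have hb0 : 0 < b := by
      rcases hb1.1.lt_or_eq with h | h
      · exact h
      · rw [← h, (hU t htp).2, (hU t0 ht0).2] at hb2
        linarith
    have hlt : ∀ ρ ∈ Ioo 0 b, |U t ρ - U t0 ρ| < 1 := by
      intro ρ hρ
      by_contra! hc
      have : b ≤ ρ := csInf_le hbb ⟨⟨hρ.1.le, hρ.2.le.trans hb1.2⟩, hc⟩
      linarith [hρ.2]
    have hA : ∀ ρ ∈ Ioo 0 b, |ρ| ≤ a := fun ρ hρ => by
      rw [abs_of_pos hρ.1]; linarith [hρ.2, hb1.2]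
    have := (hdiff t t0 htp ht0 b hb0 hb1.2 (fun ρ hρ => by
        have e1 := hlt ρ hρ
        have e2 := hin0 ρ (hA ρ hρ)
        have : U t ρ = (U t ρ - U t0 ρ) + U t0 ρ := by ring
        rw [this]
        exact (abs_add_le _ _).trans (by linarith))
      (fun ρ hρ => by linarith [hin0 ρ (hA ρ hρ)]) b (by rw [abs_of_pos hb0])).1
    have : C * |t - t0| < C * (1 / C) := by gcongr; linarith
    rw [mul_one_div_cancel hC.ne'] at this
    linarith
  have hbd' : ∀ t, |t - t0| < δ → ∀ ρ, |ρ| ≤ a → |U t ρ| ≤ M + 1 := by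
    intro t ht
    have : ∀ ρ ∈ Icc 0 a, |U t ρ| ≤ M + 1 := by
      intro ρ hρ
      have e1 := hbd t ht ρ hρ
      have e2 := hin0 ρ (by rw [abs_of_nonneg hρ.1]; exact hρ.2)
      have : U t ρ = (U t ρ - U t0 ρ) + U t0 ρ := by ring
      rw [this]
      exact (abs_add_le _ _).trans (by linarith)
    intro ρ hρ
    rcases le_total 0 ρ with h0 | h0
    · rw [abs_of_nonneg h0] at hρ
      exact this ρ ⟨h0, hρ⟩
    · rw [← (hU t (hpos t ht)).1.1 ρ (mem_I_of_abs hρ hp)]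
      rw [abs_of_nonpos h0] at hρ
      exact this (-ρ) ⟨by linarith, hρ⟩
  refine ⟨δ, hδ0, min_le_left _ _, C, hC, M + 1, hbd', ?_⟩
  intro t s ht hs ρ hρ
  refine hdiff t s (hpos t ht) (hpos s hs) a ha le_rfl ?_ ?_ ρ hρ
  · exact fun x hx => hbd' t ht x (by rw [abs_of_pos hx.1]; exact hx.2.le)
  · exact fun x hx => hbd' s hs x (by rw [abs_of_pos hx.1]; exact hx.2.le)

/-- The divided differences almost solve the linearized equation. -/
theorem quot_est {f : ℝ → ℝ} (hf : ContDiff ℝ 1 f) {U : ℝ → ℝ → ℝ}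
    (hU : ∀ t > (0:ℝ), IsEvenSol f (U t) ∧ U t 0 = t) {t0 a : ℝ} (ht0 : 0 < t0) (ha : 0 < a)
    (hp : a < π) {ε : ℝ} (hε : 0 < ε) :
    ∃ δ > 0, δ ≤ t0 ∧ ∀ t s, |t - t0| < δ → |s - t0| < δ → t ≠ s → ∀ ρ ∈ Ioo 0 a,
      |((t - s)⁻¹ * deriv (deriv (U t)) ρ + (-(t - s)⁻¹) * deriv (deriv (U s)) ρ) +
        cos ρ / sin ρ * ((t - s)⁻¹ * deriv (U t) ρ + (-(t - s)⁻¹) * deriv (U s) ρ) +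
        deriv f (U t0 ρ) * ((t - s)⁻¹ * U t ρ + (-(t - s)⁻¹) * U s ρ)| ≤ ε := by
  obtain ⟨δ, hδ, hδt, C, hC, B, hB, hS⟩ := stab hf hU ht0 ha hp
  obtain ⟨d, hd, hF⟩ := f_unif hf B (show 0 < ε / C by positivity)
  refine ⟨min δ (d / C), by positivity, (min_le_left _ _).trans hδt, ?_⟩
  intro t s ht hs hts ρ hρ
  have ht1 : |t - t0| < δ := ht.trans_le (min_le_left _ _)
  have hs1 : |s - t0| < δ := hs.trans_le (min_le_left _ _)
  have ht2 : C * |t - t0| < d := by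
    have := ht.trans_le (min_le_right _ _)
    rwa [lt_div_iff₀ hC, mul_comm] at this
  have hs2 : C * |s - t0| < d := by
    have := hs.trans_le (min_le_right _ _)
    rwa [lt_div_iff₀ hC, mul_comm] at this
  have hra : |ρ| ≤ a := by rw [abs_of_pos hρ.1]; exact hρ.2.le
  have htp : 0 < t := by rw [abs_lt] at ht1; linarith [ht1.1]
  have hsp : 0 < s := by rw [abs_lt] at hs1; linarith [hs1.1]
  have h00 : |t0 - t0| < δ := by simpa using hδ
  have k := hF (U t ρ) (U s ρ) (U t0 ρ) (hB t ht1 ρ hra) (hB s hs1 ρ hra) (hB t0 h00 ρ hra)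
    ((hS t t0 ht1 h00 ρ hra).1.trans_lt ht2) ((hS s t0 hs1 h00 ρ hra).1.trans_lt hs2)
  have k2 := (hS t s ht1 hs1 ρ hra).1
  have hI := mem_I_of_abs hra hp
  have q1 := (hU t htp).1.2.2 ρ hI hρ.1.ne'
  have q2 := (hU s hsp).1.2.2 ρ hI hρ.1.ne'
  have e : ((t - s)⁻¹ * deriv (deriv (U t)) ρ + (-(t - s)⁻¹) * deriv (deriv (U s)) ρ) +
        cos ρ / sin ρ * ((t - s)⁻¹ * deriv (U t) ρ + (-(t - s)⁻¹) * deriv (U s) ρ) +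
        deriv f (U t0 ρ) * ((t - s)⁻¹ * U t ρ + (-(t - s)⁻¹) * U s ρ) =
      (t - s)⁻¹ * -(f (U t ρ) - f (U s ρ) - deriv f (U t0 ρ) * (U t ρ - U s ρ)) := by
    linear_combination (t - s)⁻¹ * (q1 - q2)
  have hts' : 0 < |t - s| := abs_pos.2 (sub_ne_zero.2 hts)
  rw [e, abs_mul, abs_neg, abs_inv]
  calc _ ≤ |t - s|⁻¹ * (ε / C * (C * |t - s|)) := by
        gcongr
        exact k.trans (by gcongr)
    _ = ε := by field_simp


theorem luc (F : ℕ → ℝ → ℝ) (hC : ∀ a, 0 < a → a < π → ∀ ε > 0, ∃ N, ∀ m ≥ N, ∀ n ≥ N,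
    ∀ ρ, |ρ| ≤ a → |F m ρ - F n ρ| ≤ ε) :
    ∃ G, TendstoLocallyUniformlyOn F G Filter.atTop (Ioo (-π) π) := by
  have h1 : ∀ a, 0 < a → a < π → UniformCauchySeqOn F Filter.atTop (Icc (-a) a) := by
    intro a ha hp
    rw [Metric.uniformCauchySeqOn_iff]
    intro ε hε
    obtain ⟨N, hN⟩ := hC a ha hp (ε / 2) (by positivity)
    refine ⟨N, fun m hm n hn x hx => ?_⟩
    rw [Real.dist_eq]
    linarith [hN m hm n hn x (abs_le.2 hx)]
  have hA : ∀ x ∈ Ioo (-π) π, 0 < (|x| + π) / 2 ∧ (|x| + π) / 2 < π ∧ |x| < (|x| + π) / 2 := by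
    intro x hx
    have := abs_lt.2 hx
    have := abs_nonneg x
    have := pi_pos
    refine ⟨by linarith, by linarith, by linarith⟩
  have h2 : ∀ x ∈ Ioo (-π) π, ∃ l, Filter.Tendsto (fun n => F n x) Filter.atTop (nhds l) := by
    intro x hx
    obtain ⟨a1, a2, a3⟩ := hA x hx
    exact cauchySeq_tendsto_of_complete ((h1 _ a1 a2).cauchySeq (abs_le.1 a3.le))
  choose! G hG using h2
  refine ⟨G, ?_⟩
  rw [Metric.tendstoLocallyUniformlyOn_iff]
  intro ε hε x hx
  obtain ⟨a1, a2, a3⟩ := hA x hx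
  set a := (|x| + π) / 2
  refine ⟨Icc (-a) a, mem_nhdsWithin_of_mem_nhds (Icc_mem_nhds (abs_lt.1 a3).1 (abs_lt.1 a3).2), ?_⟩
  have := (h1 a a1 a2).tendstoUniformlyOn_of_tendsto (f := G)
    (fun y hy => hG y (mem_I_of_abs (abs_le.2 hy) a2))
  exact Metric.tendstoUniformlyOn_iff.1 this ε hε

theorem lin_est {a : ℝ} (ha : 0 < a) (hp : a < π) {c : ℝ → ℝ} (hc : ContinuousOn c (Icc (-a) a)) :
    ∃ C > 0, ∀ Z Y X Z' Y' X' : ℝ → ℝ, Reg Z Y X → Reg Z' Y' X' → Z 0 = Z' 0 → ∀ η ≥ 0,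
      (∀ ρ ∈ Ioo 0 a, |X ρ + cos ρ / sin ρ * Y ρ + c ρ * Z ρ| ≤ η) →
      (∀ ρ ∈ Ioo 0 a, |X' ρ + cos ρ / sin ρ * Y' ρ + c ρ * Z' ρ| ≤ η) →
      ∀ ρ, |ρ| ≤ a → |Z ρ - Z' ρ| ≤ C * η ∧ |Y ρ - Y' ρ| ≤ C * η ∧ |X ρ - X' ρ| ≤ C * η := by
  obtain ⟨K, hK⟩ := (isCompact_Icc (a := -a) (b := a)).exists_bound_of_continuousOn hc
  simp only [Real.norm_eq_abs] at hK
  obtain ⟨C, hC, hG⟩ := gron ha hp (le_max_right K 0)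
  refine ⟨C * 2, by positivity, ?_⟩
  intro Z Y X Z' Y' X' h h' h0 η hη e1 e2 ρ hρ
  have := hG _ _ _ (h.lin h' 1 (-1)) (2 * η) (by positivity) a ha le_rfl (by
    intro x hx
    have f1 := e1 x hx
    have f2 := e2 x hx
    have f3 : |c x| ≤ max K 0 := (hK x ⟨by linarith [hx.1], hx.2.le⟩).trans (le_max_left _ _)
    have : 1 * X x + -1 * X' x + cos x / sin x * (1 * Y x + -1 * Y' x) =
      (X x + cos x / sin x * Y x + c x * Z x) - (X' x + cos x / sin x * Y' x + c x * Z' x)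
        - c x * (1 * Z x + -1 * Z' x) := by ring
    rw [this]
    refine (abs_sub _ _).trans ?_
    rw [abs_mul]
    have f4 := abs_sub (X x + cos x / sin x * Y x + c x * Z x)
      (X' x + cos x / sin x * Y' x + c x * Z' x)
    have f5 : |c x| * |1 * Z x + -1 * Z' x| ≤ max K 0 * |1 * Z x + -1 * Z' x| := by gcongr
    linarith) ρ hρ
  simp only [h0, one_mul, neg_mul, ← sub_eq_add_neg, sub_self, abs_zero, zero_add] at this
  simpa only [mul_assoc] using this

/-- Data of the derivative of the solution with respect to `t` at `t0`. -/
structure IsVar (f : ℝ → ℝ) (U : ℝ → ℝ → ℝ) (t0 : ℝ) (W Y X : ℝ → ℝ) : Prop where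
  reg : Reg W Y X
  one : W 0 = 1
  ode : ∀ ρ ∈ Ioo (-π) π, ρ ≠ 0 → X ρ + cos ρ / sin ρ * Y ρ + deriv f (U t0 ρ) * W ρ = 0
  est : ∀ a, 0 < a → a < π → ∀ ε > 0, ∃ δ > 0, δ ≤ t0 ∧ ∀ t s, |t - t0| < δ → |s - t0| < δ →
    ∀ ρ, |ρ| ≤ a → |U t ρ - U s ρ - (t - s) * W ρ| ≤ ε * |t - s| ∧
      |deriv (U t) ρ - deriv (U s) ρ - (t - s) * Y ρ| ≤ ε * |t - s|

theorem exists_var {f : ℝ → ℝ} (hf : ContDiff ℝ 1 f) {U : ℝ → ℝ → ℝ}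
    (hU : ∀ t > (0:ℝ), IsEvenSol f (U t) ∧ U t 0 = t) {t0 : ℝ} (ht0 : 0 < t0) :
    ∃ W Y X, IsVar f U t0 W Y X := by
  have hfc : Continuous (deriv f) := hf.continuous_deriv le_rfl
  have hcc : ∀ a, a < π → ContinuousOn (fun ρ => deriv f (U t0 ρ)) (Icc (-a) a) := by
    intro a hp
    refine hfc.comp_continuousOn ((hU t0 ht0).1.reg.contZ.mono ?_)
    exact fun x hx => mem_I_of_abs (abs_le.2 hx) hp
  have hQreg := fun (t s : ℝ) (ht : 0 < t) (hs : 0 < s) =>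
    (hU t ht).1.reg.lin (hU s hs).1.reg ((t - s)⁻¹) (-(t - s)⁻¹)
  have hQ0 : ∀ t s, 0 < t → 0 < s → t ≠ s → (t - s)⁻¹ * U t 0 + (-(t - s)⁻¹) * U s 0 = 1 := by
    intro t s ht hs hts
    rw [(hU t ht).2, (hU s hs).2]
    have : t - s ≠ 0 := sub_ne_zero.2 hts
    field_simp; ring
  -- the sequence
  let τ : ℕ → ℝ := fun n => t0 + 1 / ((n : ℝ) + 1)
  have hτ0 : ∀ n, t0 < τ n := fun n => by
    have : 0 < 1 / ((n : ℝ) + 1) := by positivity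
    simp only [τ]; linarith
  have hτp : ∀ n, 0 < τ n := fun n => ht0.trans (hτ0 n)
  have hτ : ∀ δ > 0, ∃ N, ∀ n ≥ N, |τ n - t0| < δ := by
    intro δ hδ
    obtain ⟨N, hN⟩ := exists_nat_one_div_lt hδ
    refine ⟨N, fun n hn => ?_⟩
    have : τ n - t0 = 1 / ((n : ℝ) + 1) := by simp [τ]
    rw [this, abs_of_pos (by positivity)]
    refine lt_of_le_of_lt ?_ hN
    have : (N : ℝ) ≤ n := by exact_mod_cast hn
    gcongr
  let Q0 : ℕ → ℝ → ℝ := fun n ρ => (τ n - t0)⁻¹ * U (τ n) ρ + (-(τ n - t0)⁻¹) * U t0 ρ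
  let Q1 : ℕ → ℝ → ℝ := fun n ρ =>
    (τ n - t0)⁻¹ * deriv (U (τ n)) ρ + (-(τ n - t0)⁻¹) * deriv (U t0) ρ
  let Q2 : ℕ → ℝ → ℝ := fun n ρ =>
    (τ n - t0)⁻¹ * deriv (deriv (U (τ n))) ρ + (-(τ n - t0)⁻¹) * deriv (deriv (U t0)) ρ
  have hreg : ∀ n, Reg (Q0 n) (Q1 n) (Q2 n) := fun n => hQreg (τ n) t0 (hτp n) ht0
  have hres : ∀ a, 0 < a → a < π → ∀ ε > 0, ∃ N, ∀ n ≥ N, ∀ ρ ∈ Ioo 0 a,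
      |Q2 n ρ + cos ρ / sin ρ * Q1 n ρ + deriv f (U t0 ρ) * Q0 n ρ| ≤ ε := by
    intro a ha hp ε hε
    obtain ⟨δ, hδ, -, h⟩ := quot_est hf hU ht0 ha hp hε
    obtain ⟨N, hN⟩ := hτ δ hδ
    exact ⟨N, fun n hn => h (τ n) t0 (hN n hn) (by simpa using hδ) (hτ0 n).ne'⟩
  have hcau : ∀ a, 0 < a → a < π → ∀ ε > 0, ∃ N, ∀ m ≥ N, ∀ n ≥ N, ∀ ρ, |ρ| ≤ a →
      |Q0 m ρ - Q0 n ρ| ≤ ε ∧ |Q1 m ρ - Q1 n ρ| ≤ ε ∧ |Q2 m ρ - Q2 n ρ| ≤ ε := by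
    intro a ha hp ε hε
    obtain ⟨C, hC, h⟩ := lin_est ha hp (hcc a hp)
    obtain ⟨N, hN⟩ := hres a ha hp (ε / C) (by positivity)
    refine ⟨N, fun m hm n hn ρ hρ => ?_⟩
    have := h _ _ _ _ _ _ (hreg m) (hreg n)
      ((hQ0 _ _ (hτp m) ht0 (hτ0 m).ne').trans (hQ0 _ _ (hτp n) ht0 (hτ0 n).ne').symm)
      (ε / C) (by positivity) (hN m hm) (hN n hn) ρ hρ
    rwa [mul_div_cancel₀ _ hC.ne'] at this
  obtain ⟨W, hW⟩ := luc Q0 (fun a ha hp ε hε => by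
    obtain ⟨N, hN⟩ := hcau a ha hp ε hε
    exact ⟨N, fun m hm n hn ρ hρ => (hN m hm n hn ρ hρ).1⟩)
  obtain ⟨Y, hY⟩ := luc Q1 (fun a ha hp ε hε => by
    obtain ⟨N, hN⟩ := hcau a ha hp ε hε
    exact ⟨N, fun m hm n hn ρ hρ => (hN m hm n hn ρ hρ).2.1⟩)
  obtain ⟨X, hX⟩ := luc Q2 (fun a ha hp ε hε => by
    obtain ⟨N, hN⟩ := hcau a ha hp ε hε
    exact ⟨N, fun m hm n hn ρ hρ => (hN m hm n hn ρ hρ).2.2⟩)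
  have tW : ∀ ρ ∈ Ioo (-π) π, Filter.Tendsto (fun n => Q0 n ρ) Filter.atTop (nhds (W ρ)) :=
    fun ρ hρ => hW.tendsto_at hρ
  have tY : ∀ ρ ∈ Ioo (-π) π, Filter.Tendsto (fun n => Q1 n ρ) Filter.atTop (nhds (Y ρ)) :=
    fun ρ hρ => hY.tendsto_at hρ
  have tX : ∀ ρ ∈ Ioo (-π) π, Filter.Tendsto (fun n => Q2 n ρ) Filter.atTop (nhds (X ρ)) :=
    fun ρ hρ => hX.tendsto_at hρ
  have hR : Reg W Y X := by
    refine ⟨?_, ?_, ?_, ?_⟩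
    · intro ρ hρ
      refine tendsto_nhds_unique (tW _ (neg_mem_I hρ)) ?_
      refine (tW ρ hρ).congr (fun n => ((hreg n).even ρ hρ).symm)
    · intro ρ hρ
      exact hasDerivAt_of_tendstoLocallyUniformlyOn isOpen_Ioo hY
        (Filter.Eventually.of_forall fun n => (hreg n).d1) tW hρ
    · intro ρ hρ
      exact hasDerivAt_of_tendstoLocallyUniformlyOn isOpen_Ioo hX
        (Filter.Eventually.of_forall fun n => (hreg n).d2) tY hρ
    · exact hX.continuousOn (Filter.Frequently.of_forall fun n => (hreg n).cont)
  have h1 : W 0 = 1 := by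
    refine tendsto_nhds_unique (tW _ zero_mem_I) ?_
    refine tendsto_const_nhds.congr (fun n => (hQ0 _ _ (hτp n) ht0 (hτ0 n).ne').symm)
  have hode : ∀ ρ ∈ Ioo 0 π, X ρ + cos ρ / sin ρ * Y ρ + deriv f (U t0 ρ) * W ρ = 0 := by
    intro ρ hρ
    have hI : ρ ∈ Ioo (-π) π := ⟨by linarith [hρ.1, pi_pos], hρ.2⟩
    have ht := ((tX ρ hI).add ((tY ρ hI).const_mul (cos ρ / sin ρ))).add
      ((tW ρ hI).const_mul (deriv f (U t0 ρ)))
    refine tendsto_nhds_unique ht ?_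
    rw [Metric.tendsto_atTop]
    intro ε hε
    obtain ⟨N, hN⟩ := hres ((ρ + π) / 2) (by linarith [hρ.1, pi_pos]) (by linarith [hρ.2]) (ε / 2)
      (by positivity)
    refine ⟨N, fun n hn => ?_⟩
    have := hN n hn ρ ⟨hρ.1, by linarith [hρ.2]⟩
    rw [Real.dist_eq, sub_zero]
    linarith
  refine ⟨W, Y, X, hR, h1, ?_, ?_⟩
  · intro ρ hρ h0
    rcases lt_or_gt_of_ne h0 with h | h
    · have := hode (-ρ) ⟨by linarith, by linarith [hρ.1]⟩
      rw [hR.evenX ρ hρ, hR.oddY ρ hρ, hR.even ρ hρ, (hU t0 ht0).1.1 ρ hρ, cos_neg, sin_neg] at this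
      rw [← this, div_neg]; ring
    · exact hode ρ ⟨h, hρ.2⟩
  · intro a ha hp ε hε
    obtain ⟨C, hC, h⟩ := lin_est ha hp (hcc a hp)
    obtain ⟨δ, hδ, hδt, hq⟩ := quot_est hf hU ht0 ha hp (show 0 < ε / C by positivity)
    refine ⟨δ, hδ, hδt, fun t s ht hs ρ hρ => ?_⟩
    by_cases hts : t = s
    · subst hts; simp
    have htp : 0 < t := by rw [abs_lt] at ht; linarith [ht.1]
    have hsp : 0 < s := by rw [abs_lt] at hs; linarith [hs.1]
    have := h _ _ _ _ _ _ (hQreg t s htp hsp) hR ((hQ0 t s htp hsp hts).trans h1.symm)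
      (ε / C) (by positivity) (hq t s ht hs hts) (fun x hx => by
        rw [hode x ⟨hx.1, hx.2.trans hp⟩, abs_zero]; positivity) ρ hρ
    rw [mul_div_cancel₀ _ hC.ne'] at this
    have hne : t - s ≠ 0 := sub_ne_zero.2 hts
    have key : ∀ p q w : ℝ, |(t - s)⁻¹ * p + (-(t - s)⁻¹) * q - w| ≤ ε →
        |p - q - (t - s) * w| ≤ ε * |t - s| := by
      intro p q w hh
      have : p - q - (t - s) * w = ((t - s)⁻¹ * p + (-(t - s)⁻¹) * q - w) * (t - s) := by
        field_simp; ring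
      rw [this, abs_mul]; gcongr
    exact ⟨key _ _ _ this.1, key _ _ _ this.2.1⟩


/-- The linear form `(a, b) ↦ a w + b u`. -/
noncomputable def lin2 (w u : ℝ) : ℝ × ℝ →L[ℝ] ℝ :=
  (ContinuousLinearMap.toSpanSingleton ℝ w).coprod (ContinuousLinearMap.toSpanSingleton ℝ u)

theorem lin2_apply (w u : ℝ) (p : ℝ × ℝ) : lin2 w u p = p.1 * w + p.2 * u := by
  simp [lin2]

/-- The matrix map. -/
noncomputable def mat (w u y x : ℝ) : ℝ × ℝ →L[ℝ] ℝ × ℝ := (lin2 w u).prod (lin2 y x)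

theorem mat_equiv {w u y x : ℝ} (h : w * x - y * u ≠ 0) :
    ∃ L : (ℝ × ℝ) ≃L[ℝ] (ℝ × ℝ), (L : (ℝ × ℝ) →L[ℝ] (ℝ × ℝ)) = mat w u y x := by
  set D := w * x - y * u with hD
  refine ⟨ContinuousLinearEquiv.equivOfInverse (mat w u y x) (mat (x / D) (-u / D) (-y / D) (w / D))
    ?_ ?_, ?_⟩
  · intro p
    ext
    · simp [mat, lin2_apply]; field_simp; rw [hD]; ring
    · simp [mat, lin2_apply]; field_simp; rw [hD]; ring
  · intro p
    ext
    · simp [mat, lin2_apply]; field_simp; rw [hD]; ring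
    · simp [mat, lin2_apply]; field_simp; rw [hD]; ring
  · rfl

theorem strict_gen {G G1 G2 : ℝ → ℝ → ℝ} {p : ℝ × ℝ}
    (h1 : ∀ᶠ v in nhds p, HasDerivAt (fun t => G t v.2) (G1 v.1 v.2) v.1)
    (h2 : ∀ᶠ v in nhds p, HasDerivAt (fun ρ => G v.1 ρ) (G2 v.1 v.2) v.2)
    (c1 : ContinuousAt (fun v : ℝ × ℝ => G1 v.1 v.2) p)
    (c2 : ContinuousAt (fun v : ℝ × ℝ => G2 v.1 v.2) p) :
    HasStrictFDerivAt (fun v : ℝ × ℝ => G v.1 v.2) (lin2 (G1 p.1 p.2) (G2 p.1 p.2)) p := by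
  have hc : Continuous (fun x : ℝ => ContinuousLinearMap.toSpanSingleton ℝ x) :=
    (ContinuousLinearMap.toSpanSingletonCLE (𝕜 := ℝ) (E := ℝ)).continuous
  have := hasStrictFDerivAt_uncurry_coprod (𝕜 := ℝ) (u := p) (f := G)
    (f₁ := fun t ρ => ContinuousLinearMap.toSpanSingleton ℝ (G1 t ρ))
    (f₂ := fun t ρ => ContinuousLinearMap.toSpanSingleton ℝ (G2 t ρ))
    (h1.mono fun v hv => hv.hasFDerivAt) (h2.mono fun v hv => hv.hasFDerivAt)
    (hc.continuousAt.comp c1) (hc.continuousAt.comp c2)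
  exact this

theorem cont_gen {G : ℝ → ℝ → ℝ} {t0 ρ0 a : ℝ} (ha : |ρ0| < a)
    (h : ∀ ε > 0, ∃ δ > 0, ∀ t, |t - t0| < δ → ∀ ρ, |ρ| ≤ a → |G t ρ - G t0 ρ| ≤ ε)
    (hc : ContinuousAt (G t0) ρ0) : ContinuousAt (fun v : ℝ × ℝ => G v.1 v.2) (t0, ρ0) := by
  rw [Metric.continuousAt_iff] at hc ⊢
  intro ε hε
  obtain ⟨δ, hδ, h1⟩ := h (ε / 2) (by positivity)
  obtain ⟨d, hd, h2⟩ := hc (ε / 2) (by positivity)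
  refine ⟨min δ (min d (a - |ρ0|)), by
    have : 0 < a - |ρ0| := by linarith
    positivity, ?_⟩
  rintro ⟨t, ρ⟩ hp
  rw [Prod.dist_eq, max_lt_iff] at hp
  simp only [lt_min_iff] at hp
  obtain ⟨⟨p1, p2, p3⟩, q1, q2, q3⟩ := hp
  simp only [Real.dist_eq] at *
  have hρ : |ρ| ≤ a := by
    have := abs_sub_abs_le_abs_sub ρ ρ0
    linarith
  have e1 := h1 t p1 ρ hρ
  have e2 := h2 q2
  have : G t ρ - G t0 ρ0 = (G t ρ - G t0 ρ) + (G t0 ρ - G t0 ρ0) := by ring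
  rw [this]
  exact (abs_add_le _ _).trans_lt (by linarith)

section
variable {f : ℝ → ℝ} {U W Y X : ℝ → ℝ → ℝ}

theorem exists_a {ρ : ℝ} (h : ρ ∈ Ioo (-π) π) : ∃ a, 0 < a ∧ a < π ∧ |ρ| < a := by
  have := abs_lt.2 h
  have := abs_nonneg ρ
  have := pi_pos
  exact ⟨(|ρ| + π) / 2, by linarith, by linarith, by linarith⟩

theorem contU (hf : ContDiff ℝ 1 f) (hU : ∀ t > (0:ℝ), IsEvenSol f (U t) ∧ U t 0 = t)
    {t0 ρ0 : ℝ} (ht0 : 0 < t0) (hρ0 : ρ0 ∈ Ioo (-π) π) :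
    ContinuousAt (fun v : ℝ × ℝ => U v.1 v.2) (t0, ρ0) ∧
    ContinuousAt (fun v : ℝ × ℝ => deriv (U v.1) v.2) (t0, ρ0) ∧
    ContinuousAt (fun v : ℝ × ℝ => deriv (deriv (U v.1)) v.2) (t0, ρ0) := by
  obtain ⟨a, a0, ap, hρa⟩ := exists_a hρ0
  obtain ⟨δ, hδ, -, C, hC, -, -, h⟩ := stab hf hU ht0 a0 ap
  have hn : Ioo (-π) π ∈ nhds ρ0 := isOpen_Ioo.mem_nhds hρ0
  have hreg := (hU t0 ht0).1.reg
  have aux : ∀ ε > 0, ∀ t, |t - t0| < min δ (ε / C) → |t - t0| < δ ∧ C * |t - t0| ≤ ε := by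
    intro ε hε t ht
    rw [lt_min_iff] at ht
    refine ⟨ht.1, ?_⟩
    have := ht.2
    rw [lt_div_iff₀ hC] at this
    linarith
  have h00 : |t0 - t0| < δ := by simpa using hδ
  refine ⟨cont_gen hρa (fun ε hε => ⟨min δ (ε / C), by positivity, fun t ht ρ hρ => ?_⟩)
      (hreg.contZ.continuousAt hn),
    cont_gen (G := fun t ρ => deriv (U t) ρ) hρa
      (fun ε hε => ⟨min δ (ε / C), by positivity, fun t ht ρ hρ => ?_⟩) (hreg.contY.continuousAt hn),
    cont_gen (G := fun t ρ => deriv (deriv (U t)) ρ) hρa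
      (fun ε hε => ⟨min δ (ε / C), by positivity, fun t ht ρ hρ => ?_⟩) (hreg.cont.continuousAt hn)⟩
  · exact (h t t0 (aux ε hε t ht).1 h00 ρ hρ).1.trans (aux ε hε t ht).2
  · exact (h t t0 (aux ε hε t ht).1 h00 ρ hρ).2.1.trans (aux ε hε t ht).2
  · exact (h t t0 (aux ε hε t ht).1 h00 ρ hρ).2.2.trans (aux ε hε t ht).2

theorem hasDerivAt_of_est {g : ℝ → ℝ} {w t0 : ℝ}
    (h : ∀ ε > 0, ∃ δ > 0, ∀ t s, |t - t0| < δ → |s - t0| < δ →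
      |g t - g s - (t - s) * w| ≤ ε * |t - s|) : HasDerivAt g w t0 := by
  rw [hasDerivAt_iff_isLittleO, Asymptotics.isLittleO_iff]
  intro ε hε
  obtain ⟨δ, hδ, hh⟩ := h ε hε
  filter_upwards [Metric.ball_mem_nhds t0 hδ] with t ht
  rw [Metric.mem_ball, Real.dist_eq] at ht
  simpa using hh t t0 ht (by simpa using hδ)

theorem deriv_near_of_est {g : ℝ → ℝ} {w w' t0 t δ ε : ℝ} (hε : 0 ≤ ε) (ht : |t - t0| < δ)
    (h : ∀ t s, |t - t0| < δ → |s - t0| < δ → |g t - g s - (t - s) * w| ≤ ε * |t - s|)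
    (hd : HasDerivAt g w' t) : |w' - w| ≤ ε := by
  have hd' : HasDerivAt (fun x => g x - x * w) (w' - w) t := by
    have := hd.sub ((hasDerivAt_id t).mul_const w)
    simpa using! this
  refine hd'.le_of_lip' hε ?_
  have : Metric.ball t0 δ ∈ nhds t := Metric.isOpen_ball.mem_nhds (by simpa [Real.dist_eq] using ht)
  filter_upwards [this] with x hx
  rw [Metric.mem_ball, Real.dist_eq] at hx
  have := h x t hx ht
  simp only [Real.norm_eq_abs]
  convert this using 2; ring

theorem derivT (hV : ∀ t > (0:ℝ), IsVar f U t (W t) (Y t) (X t)) {t0 ρ0 : ℝ} (ht0 : 0 < t0)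
    (hρ0 : ρ0 ∈ Ioo (-π) π) :
    HasDerivAt (fun t => U t ρ0) (W t0 ρ0) t0 ∧
    HasDerivAt (fun t => deriv (U t) ρ0) (Y t0 ρ0) t0 := by
  obtain ⟨a, a0, ap, hρa⟩ := exists_a hρ0
  constructor <;> apply hasDerivAt_of_est <;> intro ε hε <;>
    obtain ⟨δ, hδ, -, h⟩ := (hV t0 ht0).est a a0 ap ε hε
  · exact ⟨δ, hδ, fun t s ht hs => (h t s ht hs ρ0 hρa.le).1⟩
  · exact ⟨δ, hδ, fun t s ht hs => (h t s ht hs ρ0 hρa.le).2⟩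

theorem contW (hV : ∀ t > (0:ℝ), IsVar f U t (W t) (Y t) (X t)) {t0 ρ0 : ℝ} (ht0 : 0 < t0)
    (hρ0 : ρ0 ∈ Ioo (-π) π) :
    ContinuousAt (fun v : ℝ × ℝ => W v.1 v.2) (t0, ρ0) ∧
    ContinuousAt (fun v : ℝ × ℝ => Y v.1 v.2) (t0, ρ0) := by
  obtain ⟨a, a0, ap, hρa⟩ := exists_a hρ0
  have hn : Ioo (-π) π ∈ nhds ρ0 := isOpen_Ioo.mem_nhds hρ0
  constructor <;> refine cont_gen hρa (fun ε hε => ?_) ?_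
  · obtain ⟨δ, hδ, hδt, h⟩ := (hV t0 ht0).est a a0 ap ε hε
    refine ⟨δ, hδ, fun t ht ρ hρ => ?_⟩
    have htp : 0 < t := by rw [abs_lt] at ht; linarith [ht.1]
    exact deriv_near_of_est hε.le ht (fun t s ht hs => (h t s ht hs ρ hρ).1)
      (derivT hV htp (mem_I_of_abs hρ ap)).1
  · exact (hV t0 ht0).reg.contZ.continuousAt hn
  · obtain ⟨δ, hδ, hδt, h⟩ := (hV t0 ht0).est a a0 ap ε hε
    refine ⟨δ, hδ, fun t ht ρ hρ => ?_⟩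
    have htp : 0 < t := by rw [abs_lt] at ht; linarith [ht.1]
    exact deriv_near_of_est hε.le ht (fun t s ht hs => (h t s ht hs ρ hρ).2)
      (derivT hV htp (mem_I_of_abs hρ ap)).2
  · exact (hV t0 ht0).reg.contY.continuousAt hn

theorem isOpen_R : IsOpen (Ioi (0:ℝ) ×ˢ Ioo (-π) π) := isOpen_Ioi.prod isOpen_Ioo

theorem strictU (hf : ContDiff ℝ 1 f) (hU : ∀ t > (0:ℝ), IsEvenSol f (U t) ∧ U t 0 = t)
    (hV : ∀ t > (0:ℝ), IsVar f U t (W t) (Y t) (X t)) {p : ℝ × ℝ}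
    (hp : p ∈ Ioi (0:ℝ) ×ˢ Ioo (-π) π) :
    HasStrictFDerivAt (fun v : ℝ × ℝ => U v.1 v.2) (lin2 (W p.1 p.2) (deriv (U p.1) p.2)) p ∧
    HasStrictFDerivAt (fun v : ℝ × ℝ => deriv (U v.1) v.2)
      (lin2 (Y p.1 p.2) (deriv (deriv (U p.1)) p.2)) p := by
  have hn := isOpen_R.mem_nhds hp
  constructor
  · refine strict_gen (G := U) (G1 := W) (G2 := fun t ρ => deriv (U t) ρ) ?_ ?_
      (contW hV hp.1 hp.2).1 (contU hf hU hp.1 hp.2).2.1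
    · filter_upwards [hn] with v hv using (derivT hV hv.1 hv.2).1
    · filter_upwards [hn] with v hv using (hU v.1 hv.1).1.reg.d1 v.2 hv.2
  · refine strict_gen (G := fun t ρ => deriv (U t) ρ) (G1 := Y)
      (G2 := fun t ρ => deriv (deriv (U t)) ρ) ?_ ?_
      (contW hV hp.1 hp.2).2 (contU hf hU hp.1 hp.2).2.2
    · filter_upwards [hn] with v hv using (derivT hV hv.1 hv.2).2
    · filter_upwards [hn] with v hv using (hU v.1 hv.1).1.reg.d2 v.2 hv.2

theorem strictF (hf : ContDiff ℝ 1 f) (hU : ∀ t > (0:ℝ), IsEvenSol f (U t) ∧ U t 0 = t)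
    (hV : ∀ t > (0:ℝ), IsVar f U t (W t) (Y t) (X t)) {p : ℝ × ℝ}
    (hp : p ∈ Ioi (0:ℝ) ×ˢ Ioo (-π) π) :
    HasStrictFDerivAt (fun v : ℝ × ℝ => (U v.1 v.2, deriv (U v.1) v.2))
      (mat (W p.1 p.2) (deriv (U p.1) p.2) (Y p.1 p.2) (deriv (deriv (U p.1)) p.2)) p :=
  (strictU hf hU hV hp).1.prodMk (strictU hf hU hV hp).2

end


theorem second_deriv_zero {f u : ℝ → ℝ} (hf : Continuous f) (h : IsEvenSol f u) :
    2 * deriv (deriv u) 0 + f (u 0) = 0 := by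
  have hr := h.reg
  have t1 := (hr.d2 0 zero_mem_I).tendsto_slope_zero
  have t2 := (hasDerivAt_sin 0).tendsto_slope_zero
  have t3 : Filter.Tendsto cos (nhdsWithin 0 {0}ᶜ) (nhds (cos 0)) :=
    continuous_cos.continuousAt.tendsto.mono_left nhdsWithin_le_nhds
  have hn : Ioo (-π) π ∈ nhds (0:ℝ) := isOpen_Ioo.mem_nhds zero_mem_I
  have t4 : Filter.Tendsto (fun x => f (u x)) (nhdsWithin 0 {0}ᶜ) (nhds (f (u 0))) :=
    ((hf.continuousAt.comp (hr.contZ.continuousAt hn)).tendsto).mono_left nhdsWithin_le_nhds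
  have t5 : Filter.Tendsto (deriv (deriv u)) (nhdsWithin 0 {0}ᶜ) (nhds (deriv (deriv u) 0)) :=
    (hr.cont.continuousAt hn).tendsto.mono_left nhdsWithin_le_nhds
  simp only [hr.Y0, sin_zero, cos_zero, zero_add, sub_zero, smul_eq_mul] at t1 t2 t3
  have t6 := (t5.add ((t3.mul t1).div t2 one_ne_zero)).add t4
  have t7 : Filter.Tendsto (fun _ : ℝ => (0:ℝ)) (nhdsWithin 0 {0}ᶜ) (nhds 0) := tendsto_const_nhds
  have := tendsto_nhds_unique t6 (t7.congr' ?_)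
  · simp at this; linarith
  · filter_upwards [self_mem_nhdsWithin, mem_nhdsWithin_of_mem_nhds hn] with x hx hxI
    have hx : x ≠ 0 := hx
    rw [← h.2.2 x hxI hx]
    have : cos x * (x⁻¹ * deriv u x) / (x⁻¹ * sin x) = cos x / sin x * deriv u x := by
      rcases eq_or_ne (sin x) 0 with h0 | h0
      · simp [h0]
      · field_simp
    simp only [Pi.div_apply, this]

section
variable {f u : ℝ → ℝ} {r : ℝ}

theorem pos_of (h : IsEvenSol f u) (h0 : 0 < u 0) (hr : r ∈ Ioo 0 π)
    (hne : ∀ ρ ∈ Ioo 0 r, u ρ ≠ 0) : ∀ ρ ∈ Ico 0 r, 0 < u ρ := by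
  intro ρ hρ
  by_contra! hc
  have hρ0 : 0 < ρ := by
    rcases hρ.1.lt_or_eq with h' | h'
    · exact h'
    · rw [← h'] at hc; linarith
  have hcont : ContinuousOn u (Icc 0 ρ) := h.reg.contZ.mono
    (fun x hx => ⟨by linarith [hx.1, pi_pos], by linarith [hx.2, hρ.2, hr.2]⟩)
  obtain ⟨x, hx, hx0⟩ := intermediate_value_Icc' hρ.1 hcont ⟨hc, h0.le⟩
  have : x ≠ 0 := fun e => by rw [e] at hx0; linarith
  exact hne x ⟨lt_of_le_of_ne hx.1 this.symm, hx.2.trans_lt hρ.2⟩ hx0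

theorem sub_I (hr : r ∈ Ioo 0 π) : Icc 0 r ⊆ Ioo (-π) π :=
  fun x hx => ⟨by linarith [hx.1, pi_pos], by linarith [hx.2, hr.2]⟩

theorem neg_of (hH : ∀ x > (0:ℝ), 0 < f x ∧ x * deriv f x ≤ f x) (h : IsEvenSol f u)
    (h0 : 0 < u 0) (hr : r ∈ Ioo 0 π) (hne : ∀ ρ ∈ Ioo 0 r, u ρ ≠ 0) :
    ∀ ρ ∈ Ioc 0 r, deriv u ρ < 0 := by
  have hs := sub_I hr
  have hpos := pos_of h h0 hr hne
  have hanti : StrictAntiOn (fun x => sin x * deriv u x) (Icc 0 r) := by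
    apply strictAntiOn_of_deriv_neg (convex_Icc 0 r)
    · exact continuous_sin.continuousOn.mul (h.reg.contY.mono hs)
    · rw [interior_Icc]; intro x hx
      have hd : HasDerivAt (fun x => sin x * deriv u x) _ x :=
        (hasDerivAt_sin x).mul (h.reg.d2 x (hs ⟨hx.1.le, hx.2.le⟩))
      rw [hd.deriv]
      have hsx : 0 < sin x := sin_pos_of_pos_of_lt_pi hx.1 (by linarith [hx.2, hr.2])
      have ho := h.2.2 x (hs ⟨hx.1.le, hx.2.le⟩) hx.1.ne'
      have : cos x * deriv u x + sin x * deriv (deriv u) x = - (sin x * f (u x)) := by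
        field_simp at ho
        linear_combination ho
      rw [this]
      have := (hH _ (hpos x ⟨hx.1.le, hx.2⟩)).1
      have : 0 < sin x * f (u x) := by positivity
      linarith
  intro ρ hρ
  have := hanti ⟨le_rfl, hr.1.le⟩ ⟨hρ.1.le, hρ.2⟩ hρ.1
  simp only [sin_zero, zero_mul] at this
  have hsx : 0 < sin ρ := sin_pos_of_pos_of_lt_pi hρ.1 (by linarith [hρ.2, hr.2])
  by_contra! hc
  have := mul_nonneg hsx.le hc
  linarith

theorem anti_of (hH : ∀ x > (0:ℝ), 0 < f x ∧ x * deriv f x ≤ f x) (h : IsEvenSol f u)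
    (h0 : 0 < u 0) (hr : r ∈ Ioo 0 π) (hne : ∀ ρ ∈ Ioo 0 r, u ρ ≠ 0) :
    StrictAntiOn u (Icc 0 r) := by
  apply strictAntiOn_of_deriv_neg (convex_Icc 0 r) (h.reg.contZ.mono (sub_I hr))
  rw [interior_Icc]
  exact fun x hx => neg_of hH h h0 hr hne x ⟨hx.1, hx.2.le⟩

theorem W_pos (hH : ∀ x > (0:ℝ), 0 < f x ∧ x * deriv f x ≤ f x) (h : IsEvenSol f u)
    (h0 : 0 < u 0) (hr : r ∈ Ioo 0 π) (hne : ∀ ρ ∈ Ioo 0 r, u ρ ≠ 0) {W Y X : ℝ → ℝ}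
    (hW : Reg W Y X) (hW0 : W 0 = 1)
    (hode : ∀ ρ ∈ Ioo (-π) π, ρ ≠ 0 → X ρ + cos ρ / sin ρ * Y ρ + deriv f (u ρ) * W ρ = 0) :
    ∀ ρ ∈ Ico 0 r, 0 < W ρ := by
  have hs := sub_I hr
  have hpos := pos_of h h0 hr hne
  by_contra! hcon
  obtain ⟨ρ1, hρ1, hc⟩ := hcon
  have hsub : Icc 0 ρ1 ⊆ Icc 0 r := Icc_subset_Icc_right hρ1.2.le
  have hcl : IsClosed (Icc 0 ρ1 ∩ W ⁻¹' (Iic 0)) :=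
    (hW.contZ.mono (hsub.trans hs)).preimage_isClosed_of_isClosed isClosed_Icc isClosed_Iic
  have hne' : (Icc 0 ρ1 ∩ W ⁻¹' (Iic 0)).Nonempty := ⟨ρ1, ⟨hρ1.1, le_rfl⟩, hc⟩
  have hbb : BddBelow (Icc 0 ρ1 ∩ W ⁻¹' (Iic 0)) := ⟨0, fun x hx => hx.1.1⟩
  obtain ⟨hb1, hb2⟩ := hcl.csInf_mem hne' hbb
  set b := sInf (Icc 0 ρ1 ∩ W ⁻¹' (Iic 0)) with hb
  have hb2 : W b ≤ 0 := hb2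
  have hbr : b < r := hb1.2.trans_lt hρ1.2
  have hb0 : 0 ≤ b := hb1.1
  have hsb : Icc 0 b ⊆ Ioo (-π) π := (Icc_subset_Icc_right hbr.le).trans hs
  have hlt : ∀ x ∈ Ioo 0 b, 0 < W x := by
    intro x hx
    by_contra! hc
    have : b ≤ x := csInf_le hbb ⟨⟨hx.1.le, hx.2.le.trans hb1.2⟩, hc⟩
    linarith [hx.2]
  have hN : AntitoneOn (fun x => sin x * (deriv u x * W x - Y x * u x)) (Icc 0 b) := by
    have hd : ∀ x ∈ Ioo (-π) π, HasDerivAt (fun x => sin x * (deriv u x * W x - Y x * u x))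
        (cos x * (deriv u x * W x - Y x * u x) + sin x * ((deriv (deriv u) x * W x + deriv u x * Y x)
          - (X x * u x + Y x * deriv u x))) x := fun x hx =>
      (hasDerivAt_sin x).mul (((h.reg.d2 x hx).mul (hW.d1 x hx)).sub
        ((hW.d2 x hx).mul (h.reg.d1 x hx)))
    apply antitoneOn_of_deriv_nonpos (convex_Icc 0 b)
    · exact fun x hx => (hd x (hsb hx)).continuousAt.continuousWithinAt
    · rw [interior_Icc]
      exact fun x hx => (hd x (hsb ⟨hx.1.le, hx.2.le⟩)).differentiableAt.differentiableWithinAt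
    · rw [interior_Icc]; intro x hx
      have hxI := hsb ⟨hx.1.le, hx.2.le⟩
      rw [(hd x hxI).deriv]
      have hsx : 0 < sin x := sin_pos_of_pos_of_lt_pi hx.1 hxI.2
      have o1 := h.2.2 x hxI hx.1.ne'
      have o2 := hode x hxI hx.1.ne'
      have e : cos x * (deriv u x * W x - Y x * u x) + sin x * ((deriv (deriv u) x * W x +
          deriv u x * Y x) - (X x * u x + Y x * deriv u x)) =
          - (sin x * W x * (f (u x) - u x * deriv f (u x))) := by
        field_simp at o1 o2
        linear_combination W x * o1 - u x * o2
      rw [e]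
      have := (hH _ (hpos x ⟨hx.1.le, hx.2.trans hbr⟩)).2
      have h3 : 0 ≤ f (u x) - u x * deriv f (u x) := by linarith
      have h4 := hlt x hx
      have : 0 ≤ sin x * W x * (f (u x) - u x * deriv f (u x)) := by positivity
      linarith
  have hR : MonotoneOn (fun x => W x / u x) (Icc 0 b) := by
    have hd : ∀ x ∈ Icc 0 b, HasDerivAt (fun x => W x / u x)
        ((Y x * u x - W x * deriv u x) / u x ^ 2) x := fun x hx =>
      (hW.d1 x (hsb hx)).div (h.reg.d1 x (hsb hx)) (hpos x ⟨hx.1, hx.2.trans_lt hbr⟩).ne'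
    apply monotoneOn_of_deriv_nonneg (convex_Icc 0 b)
    · exact fun x hx => (hd x hx).continuousAt.continuousWithinAt
    · rw [interior_Icc]
      exact fun x hx => (hd x ⟨hx.1.le, hx.2.le⟩).differentiableAt.differentiableWithinAt
    · rw [interior_Icc]; intro x hx
      rw [(hd x ⟨hx.1.le, hx.2.le⟩).deriv]
      have hxI := hsb ⟨hx.1.le, hx.2.le⟩
      have hsx : 0 < sin x := sin_pos_of_pos_of_lt_pi hx.1 hxI.2
      have := hN ⟨le_rfl, hb0⟩ ⟨hx.1.le, hx.2.le⟩ hx.1.le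
      simp only [sin_zero, zero_mul] at this
      have h5 : deriv u x * W x - Y x * u x ≤ 0 := by
        by_contra! hc
        have := mul_pos hsx hc
        linarith
      have h6 : 0 ≤ Y x * u x - W x * deriv u x := by linarith
      positivity
  have := hR ⟨le_rfl, hb0⟩ ⟨hb0, le_rfl⟩ hb0
  simp only [hW0] at this
  have h7 := hpos b ⟨hb0, hbr⟩
  have h8 : W b / u b ≤ 0 := div_nonpos_of_nonpos_of_nonneg hb2 h7.le
  have h9 : 0 < 1 / u 0 := by positivity
  linarith

theorem D_neg (hf : ContDiff ℝ 1 f) (hH : ∀ x > (0:ℝ), 0 < f x ∧ x * deriv f x ≤ f x)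
    (h : IsEvenSol f u)
    (h0 : 0 < u 0) (hr : r ∈ Ioo 0 π) (hne : ∀ ρ ∈ Ioo 0 r, u ρ ≠ 0) {W Y X : ℝ → ℝ}
    (hW : Reg W Y X) (hW0 : W 0 = 1)
    (hode : ∀ ρ ∈ Ioo (-π) π, ρ ≠ 0 → X ρ + cos ρ / sin ρ * Y ρ + deriv f (u ρ) * W ρ = 0) :
    ∀ ρ, |ρ| ≤ r → W ρ * deriv (deriv u) ρ - Y ρ * deriv u ρ < 0 := by
  have hs := sub_I hr
  have hWp := W_pos hH h h0 hr hne hW hW0 hode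
  have hYn := neg_of hH h h0 hr hne
  have hd : ∀ x ∈ Ioo (-π) π, HasDerivAt
      (fun x => -(W x * (cos x * deriv u x + sin x * f (u x))) - sin x * Y x * deriv u x)
      (-(Y x * (cos x * deriv u x + sin x * f (u x)) + W x * ((-sin x * deriv u x +
        cos x * deriv (deriv u) x) + (cos x * f (u x) + sin x * (deriv f (u x) * deriv u x))))
        - ((cos x * Y x + sin x * X x) * deriv u x + sin x * Y x * deriv (deriv u) x)) x := by
    intro x hx
    have k1 := h.reg.d1 x hx
    have k2 := h.reg.d2 x hx
    have k3 : HasDerivAt (fun x => f (u x)) (deriv f (u x) * deriv u x) x :=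
      ((hf.differentiable one_ne_zero) (u x)).hasDerivAt.comp x k1
    exact ((hW.d1 x hx).mul (((hasDerivAt_cos x).mul k2).add ((hasDerivAt_sin x).mul k3))).neg.sub
      (((hasDerivAt_sin x).mul (hW.d2 x hx)).mul k2)
  have hS : StrictAntiOn
      (fun x => -(W x * (cos x * deriv u x + sin x * f (u x))) - sin x * Y x * deriv u x)
      (Icc 0 r) := by
    apply strictAntiOn_of_deriv_neg (convex_Icc 0 r)
    · exact fun x hx => (hd x (hs hx)).continuousAt.continuousWithinAt
    · rw [interior_Icc]; intro x hx
      have hxI := hs ⟨hx.1.le, hx.2.le⟩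
      rw [(hd x hxI).deriv]
      have hsx : 0 < sin x := sin_pos_of_pos_of_lt_pi hx.1 hxI.2
      have o1 := h.2.2 x hxI hx.1.ne'
      have o2 := hode x hxI hx.1.ne'
      have e : (-(Y x * (cos x * deriv u x + sin x * f (u x)) + W x * ((-sin x * deriv u x +
        cos x * deriv (deriv u) x) + (cos x * f (u x) + sin x * (deriv f (u x) * deriv u x))))
        - ((cos x * Y x + sin x * X x) * deriv u x + sin x * Y x * deriv (deriv u) x)) =
        W x * deriv u x / sin x := by
        have o1' : deriv (deriv u) x = -(cos x / sin x * deriv u x) - f (u x) := by linarith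
        have o2' : X x = -(cos x / sin x * Y x) - deriv f (u x) * W x := by linarith
        rw [o1', o2']
        have hsq := sin_sq_add_cos_sq x
        field_simp
        linear_combination (W x * deriv u x) * hsq
      rw [e]
      exact div_neg_of_neg_of_pos
        (mul_neg_of_pos_of_neg (hWp x ⟨hx.1.le, hx.2⟩) (hYn x ⟨hx.1, hx.2.le⟩)) hsx
  have key : ∀ ρ ∈ Icc 0 r, W ρ * deriv (deriv u) ρ - Y ρ * deriv u ρ < 0 := by
    intro ρ hρ
    rcases hρ.1.lt_or_eq with hp | hp
    · have := hS ⟨le_rfl, hr.1.le⟩ hρ hp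
      have hxI := hs hρ
      have hsx : 0 < sin ρ := sin_pos_of_pos_of_lt_pi hp hxI.2
      simp only [sin_zero, h.reg.Y0, mul_zero, zero_mul, add_zero, neg_zero, sub_zero] at this
      have o1 := h.2.2 ρ hxI hp.ne'
      have e : -(W ρ * (cos ρ * deriv u ρ + sin ρ * f (u ρ))) - sin ρ * Y ρ * deriv u ρ =
          sin ρ * (W ρ * deriv (deriv u) ρ - Y ρ * deriv u ρ) := by
        field_simp at o1
        linear_combination (-W ρ) * o1
      rw [e] at this
      by_contra! hc
      have := mul_nonneg hsx.le hc
      linarith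
    · rw [← hp, hW0, h.reg.Y0]
      have := second_deriv_zero hf.continuous h
      have := (hH _ h0).1
      linarith
  intro ρ hρ
  rcases le_total 0 ρ with hc | hc
  · rw [abs_of_nonneg hc] at hρ
    exact key ρ ⟨hc, hρ⟩
  · have hI := mem_I_of_abs hρ hr.2
    rw [abs_of_nonpos hc] at hρ
    have := key (-ρ) ⟨by linarith, hρ⟩
    rw [hW.even ρ hI, hW.oddY ρ hI, h.reg.evenX ρ hI, h.reg.oddY ρ hI] at this
    linarith

end


theorem topN {E E' : Type*} [MetricSpace E] [MetricSpace E'] {F : E → E'} {A : Set E}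
    (hc : ∀ a ∈ A, ContinuousAt F a)
    (hl : ∀ a ∈ A, ∃ R > 0, InjOn F (Metric.ball a R))
    (he : ∀ a ∈ A, ∀ ε > 0, ∃ δ > 0, ∀ b ∈ A, dist (F b) (F a) < δ → dist b a < ε) :
    ∃ N : Set E, IsOpen N ∧ A ⊆ N ∧ InjOn F N := by
  have h1 : ∀ a : A, ∃ R > 0, InjOn F (Metric.ball (a:E) (2 * R)) := by
    intro a
    obtain ⟨R, hR, h⟩ := hl a a.2
    exact ⟨R / 2, by positivity, by rwa [mul_div_cancel₀ _ two_ne_zero]⟩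
  choose R hR hinj using h1
  have h2 : ∀ a : A, ∃ δ > 0, ∀ b ∈ A, dist (F b) (F a) < δ → dist b (a:E) < R a :=
    fun a => he a a.2 (R a) (hR a)
  choose δ hδ hemb using h2
  refine ⟨⋃ a : A, interior {x | dist x (a:E) < R a ∧ dist (F x) (F a) < δ a / 2},
    isOpen_iUnion fun a => isOpen_interior, ?_, ?_⟩
  · intro a ha
    refine mem_iUnion.2 ⟨⟨a, ha⟩, ?_⟩
    rw [mem_interior_iff_mem_nhds]
    have e1 : ∀ᶠ x in nhds a, dist x a < R ⟨a, ha⟩ := Metric.ball_mem_nhds a (hR _)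
    have e2 : ∀ᶠ x in nhds a, dist (F x) (F a) < δ ⟨a, ha⟩ / 2 :=
      (hc a ha).eventually (Metric.ball_mem_nhds (F a) (half_pos (hδ _)))
    exact e1.and e2
  · intro x hx y hy hxy
    obtain ⟨a, ha⟩ := mem_iUnion.1 hx
    obtain ⟨b, hb⟩ := mem_iUnion.1 hy
    obtain ⟨a1, a2⟩ := interior_subset ha
    obtain ⟨b1, b2⟩ := interior_subset hb
    have hab : dist (F a) (F b) < δ a / 2 + δ b / 2 := by
      calc _ ≤ dist (F a) (F x) + dist (F x) (F b) := dist_triangle _ _ _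
        _ < _ := by rw [dist_comm (F a), hxy] at *; linarith
    have hd : dist (a:E) b < R a ∨ dist (a:E) b < R b := by
      rcases le_total (δ a) (δ b) with h | h
      · right; exact hemb b a a.2 (by linarith)
      · left; rw [dist_comm]; exact hemb a b b.2 (by rw [dist_comm]; linarith)
    have hd' : dist (a:E) b < max (R a) (R b) := by rwa [lt_max_iff]
    have := hR a
    have := hR b
    rcases le_total (R a) (R b) with h | h
    · rw [max_eq_right h] at hd'
      have := dist_triangle x a b
      exact hinj b (by rw [Metric.mem_ball]; linarith) (by rw [Metric.mem_ball]; linarith) hxy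
    · rw [max_eq_left h] at hd'
      have := dist_triangle y b a
      rw [dist_comm (b:E) a] at this
      exact hinj a (by rw [Metric.mem_ball]; linarith) (by rw [Metric.mem_ball]; linarith) hxy

section
variable {f : ℝ → ℝ} {U : ℝ → ℝ → ℝ} {r : ℝ → ℝ}

theorem U_abs {u : ℝ → ℝ} (h : IsEvenSol f u) {x : ℝ} (hx : |x| < π) : u |x| = u x := by
  rcases abs_cases x with h' | h'
  · rw [h'.1]
  · rw [h'.1, h.1 x (abs_lt.1 hx)]

theorem semi (hf : ContDiff ℝ 1 f) (hH : ∀ x > (0:ℝ), 0 < f x ∧ x * deriv f x ≤ f x)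
    (hU : ∀ t > (0:ℝ), IsEvenSol f (U t) ∧ U t 0 = t ∧
      r t ∈ Ioo 0 π ∧ U t (r t) = 0 ∧ ∀ ρ ∈ Ioo 0 (r t), U t ρ ≠ 0) {t : ℝ} (ht : 0 < t) :
    ∃ ε > 0, ∀ s, |s - t| < ε → ∀ σ, |σ| < r t + ε → 0 ≤ U s σ → |σ| ≤ r s := by
  have hU' : ∀ t > (0:ℝ), IsEvenSol f (U t) ∧ U t 0 = t := fun t ht => ⟨(hU t ht).1, (hU t ht).2.1⟩
  obtain ⟨hs, h0, hr, hz, hne⟩ := hU t ht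
  have h0' : 0 < U t 0 := by rw [h0]; exact ht
  have hrI : r t ∈ Ioo (-π) π := sub_I hr ⟨hr.1.le, le_rfl⟩
  have hneg := neg_of hH hs h0' hr hne (r t) ⟨hr.1, le_rfl⟩
  have hev := (contU hf hU' ht hrI).2.1.eventually (gt_mem_nhds hneg)
  obtain ⟨ε0, he0, hev⟩ := Metric.eventually_nhds_iff.1 hev
  obtain ⟨ε1, he1, l1, l2, l3, l4⟩ : ∃ ε1 > 0, ε1 ≤ ε0 ∧ ε1 ≤ r t ∧ ε1 ≤ π - r t ∧ ε1 ≤ t := by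
    have := hr.1
    have : 0 < π - r t := by linarith [hr.2]
    refine ⟨min (min ε0 (r t)) (min (π - r t) t), by positivity, ?_, ?_, ?_, ?_⟩
    · exact (min_le_left _ _).trans (min_le_left _ _)
    · exact (min_le_left _ _).trans (min_le_right _ _)
    · exact (min_le_right _ _).trans (min_le_left _ _)
    · exact (min_le_right _ _).trans (min_le_right _ _)
  have hd : ∀ s σ, |s - t| < ε1 → |σ - r t| < ε1 → deriv (U s) σ < 0 := by
    intro s σ h1 h2
    have := @hev (s, σ) (by
      rw [Prod.dist_eq, max_lt_iff, Real.dist_eq, Real.dist_eq]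
      exact ⟨h1.trans_le l1, h2.trans_le l1⟩)
    exact this
  obtain ⟨δ, hδ, -, C, hC, -, -, hst⟩ := stab hf hU' ht hr.1 hr.2
  set b := r t - ε1 / 2 with hb
  have hb0 : 0 < b := by linarith
  have hbp := pos_of hs h0' hr hne b ⟨hb0.le, by linarith⟩
  have hanti := anti_of hH hs h0' hr hne
  refine ⟨min ε1 (min δ (U t b / C)), by positivity, ?_⟩
  intro s hs1 σ hσ hpos
  rw [lt_min_iff, lt_min_iff] at hs1
  obtain ⟨s1, s2, s3⟩ := hs1
  rw [lt_div_iff₀ hC] at s3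
  have hs0 : 0 < s := by rw [abs_lt] at s1; linarith [s1.1]
  obtain ⟨ks, k0, kr, kz, kne⟩ := hU s hs0
  by_contra! hlt
  have hσ1 : |σ| < r t + ε1 := hσ.trans_le (by gcongr; exact min_le_left _ _)
  have hσ2 : |σ| < π := by linarith
  have hrb : b < r s := by
    by_contra! hle
    have e1 := (hst s t s2 (by simpa using hδ) (r s)
      (by rw [abs_of_pos kr.1]; linarith)).1
    rw [kz] at e1
    have e2 : U t b ≤ U t (r s) := hanti.antitoneOn ⟨kr.1.le, by linarith⟩ ⟨hb0.le, by linarith⟩ hle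
    have := abs_le.1 e1
    linarith [this.1]
  have hsa : StrictAntiOn (U s) (Icc (r s) |σ|) := by
    apply strictAntiOn_of_deriv_neg (convex_Icc _ _)
    · exact ks.reg.contZ.mono fun x hx => ⟨by linarith [hx.1, kr.1, pi_pos], by linarith [hx.2]⟩
    · rw [interior_Icc]
      intro x hx
      exact hd s x s1 (by rw [abs_lt]; constructor <;> linarith [hx.1, hx.2])
  have := hsa ⟨le_rfl, hlt.le⟩ ⟨hlt.le, le_rfl⟩ hlt
  rw [kz, U_abs ks hσ2] at this
  linarith

end

section
variable {f : ℝ → ℝ} {U W Y X : ℝ → ℝ → ℝ} {r : ℝ → ℝ}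

theorem g_deriv (hf : ContDiff ℝ 1 f) (hH : ∀ x > (0:ℝ), 0 < f x ∧ x * deriv f x ≤ f x)
    (hU : ∀ t > (0:ℝ), IsEvenSol f (U t) ∧ U t 0 = t ∧
      r t ∈ Ioo 0 π ∧ U t (r t) = 0 ∧ ∀ ρ ∈ Ioo 0 (r t), U t ρ ≠ 0)
    (hV : ∀ t > (0:ℝ), IsVar f U t (W t) (Y t) (X t)) {x : ℝ} (hx : 0 ≤ x) {P : ℝ → ℝ}
    (hP : ∀ τ, x < τ → P τ ∈ Ioc 0 (r τ) ∧ U τ (P τ) = x) {τ0 : ℝ} (hτ : x < τ0) :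
    ∃ g', g' < 0 ∧ HasDerivAt (fun τ => deriv (U τ) (P τ)) g' τ0 := by
  have hU' : ∀ t > (0:ℝ), IsEvenSol f (U t) ∧ U t 0 = t := fun t ht => ⟨(hU t ht).1, (hU t ht).2.1⟩
  have ht : 0 < τ0 := by linarith
  obtain ⟨hs, h0, hr, hz, hne⟩ := hU τ0 ht
  have h0' : 0 < U τ0 0 := by rw [h0]; exact ht
  obtain ⟨hρ, hUx⟩ := hP τ0 hτ
  set ρ := P τ0 with hρd
  have hρI : ρ ∈ Ioo (-π) π := sub_I hr ⟨hρ.1.le, hρ.2⟩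
  have hn := neg_of hH hs h0' hr hne ρ hρ
  have hp : (τ0, ρ) ∈ Ioi (0:ℝ) ×ˢ Ioo (-π) π := ⟨ht, hρI⟩
  obtain ⟨S1, S2⟩ := strictU hf hU' hV hp
  have hD := D_neg hf hH hs h0' hr hne (hV τ0 ht).reg (hV τ0 ht).one (hV τ0 ht).ode ρ
    (by rw [abs_of_pos hρ.1]; exact hρ.2)
  have S0 : HasStrictFDerivAt (fun v : ℝ × ℝ => v.1) (lin2 1 0) (τ0, ρ) := by
    have : lin2 1 0 = ContinuousLinearMap.fst ℝ ℝ ℝ := by ext <;> simp [lin2_apply]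
    rw [this]; exact hasStrictFDerivAt_fst
  obtain ⟨L, hL⟩ := mat_equiv (w := 1) (u := 0) (y := W τ0 ρ) (x := deriv (U τ0) ρ)
    (by simpa using hn.ne)
  have hΦ : HasStrictFDerivAt (fun v : ℝ × ℝ => (v.1, U v.1 v.2))
      (L : (ℝ × ℝ) →L[ℝ] (ℝ × ℝ)) (τ0, ρ) := by rw [hL]; exact S0.prodMk S1
  have hΨ := hΦ.to_localInverse
  have hri := hΦ.eventually_right_inverse
  have hia : hΦ.localInverse _ L _ (τ0, x) = (τ0, ρ) := by
    have := hΦ.localInverse_apply_image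
    simpa [hUx] using this
  set Ψ := hΦ.localInverse _ L _ with hΨd
  simp only [hUx] at hΨ hri
  have hin : HasDerivAt (fun τ : ℝ => (τ, x)) ((1:ℝ), (0:ℝ)) τ0 :=
    (hasDerivAt_id τ0).prodMk (hasDerivAt_const τ0 x)
  have hγ : HasDerivAt (fun τ => Ψ (τ, x)) (L.symm (1, 0)) τ0 := by
    have := HasFDerivAt.comp_hasDerivAt (x := τ0) (f := fun τ : ℝ => (τ, x)) hΨ.hasFDerivAt hin
    exact this
  set v := L.symm ((1:ℝ), (0:ℝ)) with hv
  have hLv : mat 1 0 (W τ0 ρ) (deriv (U τ0) ρ) v = (1, 0) := by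
    rw [← hL]; simp [hv]
  have hv1 : v.1 = 1 := by
    have := congrArg Prod.fst hLv; simpa [mat, lin2_apply] using this
  have hv2 : W τ0 ρ + v.2 * deriv (U τ0) ρ = 0 := by
    have := congrArg Prod.snd hLv; simpa [mat, lin2_apply, hv1] using this
  have hγc := hγ.continuousAt
  have hri' := hin.continuousAt.eventually hri
  obtain ⟨ε, hε, hsemi⟩ := semi hf hH hU ht
  have e1 : ∀ᶠ τ in nhds τ0, 0 < (Ψ (τ, x)).2 ∧ (Ψ (τ, x)).2 < r τ0 + ε := by
    have hc2 : ContinuousAt (fun τ => (Ψ (τ, x)).2) τ0 := hγc.snd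
    refine (hc2.eventually (lt_mem_nhds ?_)).and (hc2.eventually (gt_mem_nhds ?_))
    · beta_reduce; rw [hia]; exact hρ.1
    · beta_reduce; rw [hia]; simp only; linarith [hρ.2]
  have e2 : ∀ᶠ τ in nhds τ0, |τ - τ0| < ε := Metric.ball_mem_nhds τ0 hε
  have hfin : ∀ᶠ τ in nhds τ0, deriv (U τ) (P τ) = deriv (U (Ψ (τ, x)).1) (Ψ (τ, x)).2 := by
    filter_upwards [hri', e1, e2, lt_mem_nhds hτ] with τ q1 q2 q3 q4
    have q5 : (Ψ (τ, x)).1 = τ := congrArg Prod.fst q1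
    have q6 : U (Ψ (τ, x)).1 (Ψ (τ, x)).2 = x := congrArg Prod.snd q1
    rw [q5] at q6 ⊢
    have q7 := hsemi τ q3 (Ψ (τ, x)).2 (by rw [abs_of_pos q2.1]; exact q2.2) (by rw [q6]; exact hx)
    rw [abs_of_pos q2.1] at q7
    obtain ⟨ks, k0, kr, kz, kne⟩ := hU τ (by linarith)
    have hanti := anti_of hH ks (by rw [k0]; linarith) kr kne
    obtain ⟨p1, p2⟩ := hP τ q4
    congr 1
    exact hanti.injOn ⟨p1.1.le, p1.2⟩ ⟨q2.1.le, q7⟩ (by rw [p2, q6])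
  have hder : HasDerivAt (fun τ => deriv (U (Ψ (τ, x)).1) (Ψ (τ, x)).2)
      (lin2 (Y τ0 ρ) (deriv (deriv (U τ0)) ρ) v) τ0 := by
    have hS2 : HasFDerivAt (fun v : ℝ × ℝ => deriv (U v.1) v.2)
      (lin2 (Y τ0 ρ) (deriv (deriv (U τ0)) ρ)) (Ψ (τ0, x)) := by
      rw [hia]; exact S2.hasFDerivAt
    exact HasFDerivAt.comp_hasDerivAt (x := τ0) (f := fun τ : ℝ => Ψ (τ, x)) hS2 hγ
  refine ⟨_, ?_, hder.congr_of_eventuallyEq hfin⟩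
  rw [lin2_apply, hv1]
  have : (1 * Y τ0 ρ + v.2 * deriv (deriv (U τ0)) ρ) * deriv (U τ0) ρ > 0 := by
    have : v.2 * deriv (U τ0) ρ = - W τ0 ρ := by linarith
    calc (1 * Y τ0 ρ + v.2 * deriv (deriv (U τ0)) ρ) * deriv (U τ0) ρ
        = Y τ0 ρ * deriv (U τ0) ρ + (v.2 * deriv (U τ0) ρ) * deriv (deriv (U τ0)) ρ := by ring
      _ > 0 := by rw [this]; linarith
  by_contra! hc
  nlinarith

theorem inj_lt (hf : ContDiff ℝ 1 f) (hH : ∀ x > (0:ℝ), 0 < f x ∧ x * deriv f x ≤ f x)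
    (hU : ∀ t > (0:ℝ), IsEvenSol f (U t) ∧ U t 0 = t ∧
      r t ∈ Ioo 0 π ∧ U t (r t) = 0 ∧ ∀ ρ ∈ Ioo 0 (r t), U t ρ ≠ 0)
    (hV : ∀ t > (0:ℝ), IsVar f U t (W t) (Y t) (X t)) {t s ρ σ : ℝ} (ht : 0 < t) (hts : t < s)
    (hρ : ρ ∈ Ioc 0 (r t)) (hσ : σ ∈ Ioc 0 (r s)) (h1 : U t ρ = U s σ) :
    deriv (U s) σ < deriv (U t) ρ := by
  have hA : ∀ t > 0, StrictAntiOn (U t) (Icc 0 (r t)) := fun t ht =>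
    anti_of hH (hU t ht).1 (by rw [(hU t ht).2.1]; exact ht) (hU t ht).2.2.1 (hU t ht).2.2.2.2
  set x := U t ρ with hx
  have hs0 : 0 < s := by linarith
  have hrt := (hU t ht).2.2.1.1
  have hx0 : 0 ≤ x := by
    rw [← (hU t ht).2.2.2.1]
    exact (hA t ht).antitoneOn ⟨hρ.1.le, hρ.2⟩ ⟨hrt.le, le_rfl⟩ hρ.2
  have hxt : x < t := by
    have := (hA t ht) ⟨le_rfl, hrt.le⟩ ⟨hρ.1.le, hρ.2⟩ hρ.1
    rwa [(hU t ht).2.1] at this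
  have hex : ∀ τ, ∃ p, x < τ → p ∈ Ioc 0 (r τ) ∧ U τ p = x := by
    intro τ
    by_cases h : x < τ
    · obtain ⟨ks, k0, kr, kz, kne⟩ := hU τ (by linarith)
      have := intermediate_value_Icc' kr.1.le (ks.reg.contZ.mono (sub_I kr))
      obtain ⟨p, hp, hpx⟩ := this (show x ∈ Icc (U τ (r τ)) (U τ 0) by
        rw [kz, k0]; exact ⟨hx0, h.le⟩)
      refine ⟨p, fun _ => ⟨⟨?_, hp.2⟩, hpx⟩⟩
      rcases hp.1.lt_or_eq with h' | h'
      · exact h'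
      · rw [← h', k0] at hpx; linarith
    · exact ⟨0, fun h' => absurd h' h⟩
  choose P hP using hex
  have hPt : P t = ρ := (hA t ht).injOn ⟨(hP t hxt).1.1.le, (hP t hxt).1.2⟩ ⟨hρ.1.le, hρ.2⟩
    (hP t hxt).2
  have hxs : x < s := by linarith
  have hPs : P s = σ := (hA s hs0).injOn ⟨(hP s hxs).1.1.le, (hP s hxs).1.2⟩ ⟨hσ.1.le, hσ.2⟩
    ((hP s hxs).2.trans h1)
  have hg : StrictAntiOn (fun τ => deriv (U τ) (P τ)) (Icc t s) := by
    apply strictAntiOn_of_deriv_neg (convex_Icc _ _)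
    · intro τ hτ
      obtain ⟨g', -, h⟩ := g_deriv hf hH hU hV hx0 hP (hxt.trans_le hτ.1)
      exact h.continuousAt.continuousWithinAt
    · intro τ hτ
      rw [interior_Icc] at hτ
      obtain ⟨g', h', h⟩ := g_deriv hf hH hU hV hx0 hP (hxt.trans hτ.1)
      rw [h.deriv]; exact h'
  have := hg ⟨le_rfl, hts.le⟩ ⟨hts.le, le_rfl⟩ hts
  simpa only [hPt, hPs] using this

theorem inj_pos (hf : ContDiff ℝ 1 f) (hH : ∀ x > (0:ℝ), 0 < f x ∧ x * deriv f x ≤ f x)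
    (hU : ∀ t > (0:ℝ), IsEvenSol f (U t) ∧ U t 0 = t ∧
      r t ∈ Ioo 0 π ∧ U t (r t) = 0 ∧ ∀ ρ ∈ Ioo 0 (r t), U t ρ ≠ 0)
    (hV : ∀ t > (0:ℝ), IsVar f U t (W t) (Y t) (X t)) {t s ρ σ : ℝ} (ht : 0 < t) (hs : 0 < s)
    (hρ : ρ ∈ Ioc 0 (r t)) (hσ : σ ∈ Ioc 0 (r s)) (h1 : U t ρ = U s σ)
    (h2 : deriv (U t) ρ = deriv (U s) σ) : t = s ∧ ρ = σ := by
  have hts : t = s := by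
    rcases lt_trichotomy t s with h | h | h
    · have := inj_lt hf hH hU hV ht h hρ hσ h1; linarith
    · exact h
    · have := inj_lt hf hH hU hV hs h hσ hρ h1.symm; linarith
  subst hts
  exact ⟨rfl, (anti_of hH (hU t ht).1 (by rw [(hU t ht).2.1]; exact ht) (hU t ht).2.2.1
    (hU t ht).2.2.2.2).injOn ⟨hρ.1.le, hρ.2⟩ ⟨hσ.1.le, hσ.2⟩ h1⟩

theorem inj_all (hf : ContDiff ℝ 1 f) (hH : ∀ x > (0:ℝ), 0 < f x ∧ x * deriv f x ≤ f x)
    (hU : ∀ t > (0:ℝ), IsEvenSol f (U t) ∧ U t 0 = t ∧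
      r t ∈ Ioo 0 π ∧ U t (r t) = 0 ∧ ∀ ρ ∈ Ioo 0 (r t), U t ρ ≠ 0)
    (hV : ∀ t > (0:ℝ), IsVar f U t (W t) (Y t) (X t)) {t s ρ σ : ℝ} (ht : 0 < t) (hs : 0 < s)
    (hρ : |ρ| ≤ r t) (hσ : |σ| ≤ r s) (h1 : U t ρ = U s σ)
    (h2 : deriv (U t) ρ = deriv (U s) σ) : t = s ∧ ρ = σ := by
  have key : ∀ t > 0, ∀ ρ, |ρ| ≤ r t → ρ ∈ Ioo (-π) π ∧
      (0 < ρ → deriv (U t) ρ < 0) ∧ (ρ < 0 → 0 < deriv (U t) ρ) ∧ (ρ = 0 → deriv (U t) ρ = 0) := by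
    intro t ht ρ hρ
    obtain ⟨ks, k0, kr, kz, kne⟩ := hU t ht
    have hn := neg_of hH ks (by rw [k0]; exact ht) kr kne
    have hI := mem_I_of_abs hρ kr.2
    refine ⟨hI, fun h => hn ρ ⟨h, (le_abs_self ρ).trans hρ⟩, fun h => ?_, fun h => ?_⟩
    · have := hn (-ρ) ⟨by linarith, (neg_le_abs ρ).trans hρ⟩
      rw [ks.reg.oddY ρ hI] at this; linarith
    · rw [h]; exact ks.reg.Y0
  obtain ⟨a0, a1, a2, a3⟩ := key t ht ρ hρ
  obtain ⟨b0, b1, b2, b3⟩ := key s hs σ hσ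
  rcases lt_trichotomy ρ 0 with h | h | h
  · have hσ0 : σ < 0 := by
      have := a2 h
      rcases lt_trichotomy σ 0 with h' | h' | h'
      · exact h'
      · have := b3 h'; linarith
      · have := b1 h'; linarith
    have := inj_pos hf hH hU hV ht hs (ρ := -ρ) (σ := -σ)
      ⟨by linarith, (neg_le_abs ρ).trans hρ⟩ ⟨by linarith, (neg_le_abs σ).trans hσ⟩
      (by rw [(hU t ht).1.1 ρ a0, (hU s hs).1.1 σ b0, h1])
      (by rw [(hU t ht).1.reg.oddY ρ a0, (hU s hs).1.reg.oddY σ b0, h2])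
    exact ⟨this.1, by linarith [this.2]⟩
  · have := a3 h
    have hσ0 : σ = 0 := by
      rcases lt_trichotomy σ 0 with h' | h' | h'
      · have := b2 h'; linarith
      · exact h'
      · have := b1 h'; linarith
    subst h hσ0
    rw [(hU t ht).2.1, (hU s hs).2.1] at h1
    exact ⟨h1, rfl⟩
  · have hσ0 : 0 < σ := by
      have := a1 h
      rcases lt_trichotomy σ 0 with h' | h' | h'
      · have := b2 h'; linarith
      · have := b3 h'; linarith
      · exact h'
    exact inj_pos hf hH hU hV ht hs ⟨h, (le_abs_self ρ).trans hρ⟩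
      ⟨hσ0, (le_abs_self σ).trans hσ⟩ h1 h2

theorem U_nonneg (hH : ∀ x > (0:ℝ), 0 < f x ∧ x * deriv f x ≤ f x)
    (hU : ∀ t > (0:ℝ), IsEvenSol f (U t) ∧ U t 0 = t ∧
      r t ∈ Ioo 0 π ∧ U t (r t) = 0 ∧ ∀ ρ ∈ Ioo 0 (r t), U t ρ ≠ 0) {t ρ : ℝ} (ht : 0 < t)
    (hρ : |ρ| ≤ r t) : 0 ≤ U t ρ := by
  obtain ⟨ks, k0, kr, kz, kne⟩ := hU t ht
  rw [← U_abs ks (hρ.trans_lt kr.2), ← kz]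
  exact (anti_of hH ks (by rw [k0]; exact ht) kr kne).antitoneOn ⟨abs_nonneg ρ, hρ⟩
    ⟨kr.1.le, le_rfl⟩ hρ

end

/-- Under hypothesis (H), there is an open neighborhood `Δ̃` of
`Δ̄ = {(t,ρ) : t > 0, -r_t ≤ ρ ≤ r_t}` inside `(0,∞) × (-π,π)` on which
`F(t,ρ) = (U_t(ρ), U_t'(ρ))` is injective with everywhere invertible differential,
i.e. a diffeomorphism onto its image. -/
theorem stmt12 (f : ℝ → ℝ) (hf : ContDiff ℝ 1 f)
    (hH : ∀ x > (0:ℝ), 0 < f x ∧ x * deriv f x ≤ f x)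
    (U : ℝ → ℝ → ℝ) (r : ℝ → ℝ)
    (hU : ∀ t > (0:ℝ), IsEvenSol f (U t) ∧ U t 0 = t ∧
      r t ∈ Set.Ioo 0 Real.pi ∧ U t (r t) = 0 ∧ ∀ ρ ∈ Set.Ioo 0 (r t), U t ρ ≠ 0) :
    ∃ Δt : Set (ℝ × ℝ), IsOpen Δt ∧
      {p : ℝ × ℝ | 0 < p.1 ∧ -r p.1 ≤ p.2 ∧ p.2 ≤ r p.1} ⊆ Δt ∧
      Δt ⊆ Set.Ioi 0 ×ˢ Set.Ioo (-Real.pi) Real.pi ∧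
      Set.InjOn (fun p : ℝ × ℝ => (U p.1 p.2, deriv (U p.1) p.2)) Δt ∧
      ∀ p ∈ Δt, ∃ L : (ℝ × ℝ) ≃L[ℝ] (ℝ × ℝ),
        HasFDerivAt (fun p : ℝ × ℝ => (U p.1 p.2, deriv (U p.1) p.2))
          (L : (ℝ × ℝ) →L[ℝ] (ℝ × ℝ)) p := by
  have hU' : ∀ t > (0:ℝ), IsEvenSol f (U t) ∧ U t 0 = t := fun t ht => ⟨(hU t ht).1, (hU t ht).2.1⟩
  have hex : ∀ t : ℝ, ∃ W Y X, 0 < t → IsVar f U t W Y X := by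
    intro t
    by_cases h : 0 < t
    · obtain ⟨W, Y, X, hV⟩ := exists_var hf hU' h
      exact ⟨W, Y, X, fun _ => hV⟩
    · exact ⟨0, 0, 0, fun h' => absurd h' h⟩
  choose W Y X hV using hex
  have hV : ∀ t > (0:ℝ), IsVar f U t (W t) (Y t) (X t) := hV
  set F : ℝ × ℝ → ℝ × ℝ := fun p => (U p.1 p.2, deriv (U p.1) p.2) with hF
  set A : Set (ℝ × ℝ) := {p : ℝ × ℝ | 0 < p.1 ∧ -r p.1 ≤ p.2 ∧ p.2 ≤ r p.1} with hA
  set D : ℝ × ℝ → ℝ := fun p =>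
    W p.1 p.2 * deriv (deriv (U p.1)) p.2 - Y p.1 p.2 * deriv (U p.1) p.2 with hD
  have hAabs : ∀ p, p ∈ A ↔ 0 < p.1 ∧ |p.2| ≤ r p.1 := by
    intro p; rw [abs_le]; rfl
  have hAR : A ⊆ Ioi (0:ℝ) ×ˢ Ioo (-π) π := by
    intro p hp
    obtain ⟨h1, h2⟩ := (hAabs p).1 hp
    exact ⟨h1, mem_I_of_abs h2 (hU p.1 h1).2.2.1.2⟩
  have hAD : ∀ p ∈ A, D p ≠ 0 := by
    intro p hp
    obtain ⟨h1, h2⟩ := (hAabs p).1 hp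
    obtain ⟨ks, k0, kr, kz, kne⟩ := hU p.1 h1
    exact (D_neg hf hH ks (by rw [k0]; exact h1) kr kne (hV p.1 h1).reg (hV p.1 h1).one
      (hV p.1 h1).ode p.2 h2).ne
  have hDc : ContinuousOn D (Ioi (0:ℝ) ×ˢ Ioo (-π) π) := by
    intro p hp
    have c1 := contU hf hU' hp.1 hp.2
    have c2 := contW hV hp.1 hp.2
    exact ((c2.1.mul c1.2.2).sub (c2.2.mul c1.2.1)).continuousWithinAt
  have hstr : ∀ p ∈ Ioi (0:ℝ) ×ˢ Ioo (-π) π, D p ≠ 0 → ∃ L : (ℝ × ℝ) ≃L[ℝ] (ℝ × ℝ),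
      HasStrictFDerivAt F (L : (ℝ × ℝ) →L[ℝ] (ℝ × ℝ)) p := by
    intro p hp hd
    obtain ⟨L, hL⟩ := mat_equiv hd
    exact ⟨L, by rw [hL]; exact strictF hf hU' hV hp⟩
  have hN : ∃ N : Set (ℝ × ℝ), IsOpen N ∧ A ⊆ N ∧ InjOn F N := by
    apply topN
    · intro a ha
      obtain ⟨L, hL⟩ := hstr a (hAR ha) (hAD a ha)
      exact hL.continuousAt
    · intro a ha
      obtain ⟨L, hL⟩ := hstr a (hAR ha) (hAD a ha)
      obtain ⟨R, hR, h⟩ := Metric.eventually_nhds_iff.1 hL.eventually_left_inverse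
      refine ⟨R, hR, fun x hx y hy hxy => ?_⟩
      rw [← h hx, ← h hy, hxy]
    · intro a ha ε hε
      obtain ⟨L, hL⟩ := hstr a (hAR ha) (hAD a ha)
      obtain ⟨h1, h2⟩ := (hAabs a).1 ha
      obtain ⟨e, he, hsemi⟩ := semi hf hH hU h1
      have hO : Metric.ball a (min ε (min e a.1)) ∈ nhds a := Metric.ball_mem_nhds a (by positivity)
      have hO' := Filter.image_mem_map (m := F) hO
      rw [hL.map_nhds_eq_of_equiv] at hO'
      obtain ⟨δ, hδ, h⟩ := Metric.mem_nhds_iff.1 hO'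
      refine ⟨δ, hδ, fun b hb hba => ?_⟩
      obtain ⟨c, hc, hcb⟩ := h hba
      rw [Metric.mem_ball, lt_min_iff, lt_min_iff] at hc
      obtain ⟨c1, c2, c3⟩ := hc
      rw [Prod.dist_eq, max_lt_iff, Real.dist_eq, Real.dist_eq] at c2 c3
      obtain ⟨b1, b2⟩ := (hAabs b).1 hb
      have e1 : U c.1 c.2 = U b.1 b.2 := congrArg Prod.fst hcb
      have e2 : deriv (U c.1) c.2 = deriv (U b.1) b.2 := congrArg Prod.snd hcb
      have hc0 : 0 < c.1 := by have := (abs_lt.1 c3.1).1; linarith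
      have hca : |c.2| ≤ r c.1 := by
        refine hsemi c.1 c2.1 c.2 ?_ ?_
        · have := abs_sub_abs_le_abs_sub c.2 a.2
          linarith [c2.2]
        · rw [e1]; exact U_nonneg hH hU b1 b2
      obtain ⟨q1, q2⟩ := inj_all hf hH hU hV hc0 b1 hca b2 e1 e2
      have : c = b := Prod.ext q1 q2
      rw [← this]; exact c1
  obtain ⟨N, hNo, hAN, hinj⟩ := hN
  have hop : IsOpen ((Ioi (0:ℝ) ×ˢ Ioo (-π) π) ∩ D ⁻¹' {0}ᶜ) :=
    hDc.isOpen_inter_preimage isOpen_R isOpen_compl_singleton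
  refine ⟨N ∩ ((Ioi (0:ℝ) ×ˢ Ioo (-π) π) ∩ D ⁻¹' {0}ᶜ), hNo.inter hop, ?_, ?_, ?_, ?_⟩
  · exact fun p hp => ⟨hAN hp, hAR hp, hAD p hp⟩
  · exact fun p hp => hp.2.1
  · exact hinj.mono inter_subset_left
  · intro p hp
    obtain ⟨L, hL⟩ := hstr p hp.2.1 hp.2.2
    exact ⟨L, hL.hasFDerivAt⟩
end

section
/- Let f: ℝ → ℝ satisfy hypothesis (H). Then the map t ↦ U_t'(r_t) (the constant Neumann value of the rotationally symmetric solution of initial value t) is strictly decreasing on (0,∞). -/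
open Real Set

open Filter Topology

lemma aux_left {g : ℝ → ℝ} {g' a : ℝ} (h : HasDerivAt g g' a) (hp : 0 < g') :
    ∀ᶠ x in 𝓝[<] a, g x < g a := by
  have h1 := (hasDerivAt_iff_tendsto_slope.1 h).eventually (lt_mem_nhds hp)
  have h2 : 𝓝[<] a ≤ 𝓝[≠] a := nhdsWithin_mono _ (fun x hx => ne_of_lt hx)
  filter_upwards [h2 h1, self_mem_nhdsWithin] with x hx hxa
  rw [slope_def_field] at hx
  have hxa : x < a := hxa
  by_contra hc
  push Not at hc
  have : (g x - g a) / (x - a) ≤ 0 := div_nonpos_of_nonneg_of_nonpos (by linarith) (by linarith)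
  linarith

lemma aux_strict {f U : ℝ → ℝ} (h : IsEvenSol f U) {x : ℝ} (hx : x ∈ Set.Ioo (-Real.pi) Real.pi) :
    HasStrictDerivAt U (deriv U x) x :=
  (h.2.1.contDiffAt (isOpen_Ioo.mem_nhds hx)).hasStrictDerivAt (by norm_num)

lemma aux_d2 {f U : ℝ → ℝ} (h : IsEvenSol f U) {x : ℝ} (hx : x ∈ Set.Ioo (-Real.pi) Real.pi) :
    HasDerivAt (deriv U) (deriv (deriv U) x) x := by
  have h1 : ContDiffOn ℝ 1 (deriv U) (Set.Ioo (-Real.pi) Real.pi) :=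
    ((contDiffOn_succ_iff_deriv_of_isOpen (n := 1) isOpen_Ioo).1 (by simpa [one_add_one_eq_two] using h.2.1)).2.2
  exact ((h1.contDiffAt (isOpen_Ioo.mem_nhds hx)).differentiableAt (by norm_num)).hasDerivAt

lemma aux_zero {f U : ℝ → ℝ} (h : IsEvenSol f U) : deriv U 0 = 0 := by
  have h0 : (0:ℝ) ∈ Set.Ioo (-Real.pi) Real.pi := ⟨by linarith [Real.pi_pos], Real.pi_pos⟩
  have h1 := (aux_strict h h0).hasDerivAt
  have h2 : HasDerivAt (fun x => U (-x)) (-(deriv U 0)) 0 := by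
    have h3 : HasDerivAt U (deriv U 0) (-0) := by simpa using h1
    have h5 := h3.comp (0:ℝ) (hasDerivAt_neg (0:ℝ))
    rw [mul_neg_one] at h5
    exact h5
  have h4 : U =ᶠ[𝓝 0] (fun x => U (-x)) := by
    filter_upwards [isOpen_Ioo.mem_nhds h0] with x hx using (h.1 x hx).symm
  have := h1.unique (h2.congr_of_eventuallyEq h4)
  linarith

lemma aux_pos {f U : ℝ → ℝ} {t r : ℝ} (h : IsEvenSol f U) (ht : 0 < t) (h0 : U 0 = t)
    (hr : r ∈ Set.Ioo 0 Real.pi) (hn : ∀ ρ ∈ Set.Ioo 0 r, U ρ ≠ 0) :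
    ∀ x ∈ Set.Ico 0 r, 0 < U x := by
  intro x hx
  by_contra hc
  push Not at hc
  have hcont : ContinuousOn U (Set.Icc 0 x) := fun y hy =>
    (aux_strict h ⟨by linarith [hy.1, Real.pi_pos], by linarith [hy.2, hx.2, hr.2]⟩).hasDerivAt.continuousAt.continuousWithinAt
  obtain ⟨y, hy, hy0⟩ := intermediate_value_Icc' hx.1 hcont (show (0:ℝ) ∈ Set.Icc (U x) (U 0) from ⟨hc, by linarith⟩)
  have hy1 : y ≠ 0 := by rintro rfl; linarith
  exact hn y ⟨lt_of_le_of_ne hy.1 hy1.symm, lt_of_le_of_lt hy.2 hx.2⟩ hy0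

lemma aux_neg {f U : ℝ → ℝ} {t r : ℝ} (hH : ∀ x > (0:ℝ), 0 < f x)
    (h : IsEvenSol f U) (ht : 0 < t) (h0 : U 0 = t)
    (hr : r ∈ Set.Ioo 0 Real.pi) (hn : ∀ ρ ∈ Set.Ioo 0 r, U ρ ≠ 0) :
    ∀ x ∈ Set.Ioc 0 r, deriv U x < 0 := by
  have hpos := aux_pos h ht h0 hr hn
  have hd : ∀ x ∈ Set.Icc 0 r, HasDerivAt (fun x => Real.sin x * deriv U x)
      (Real.cos x * deriv U x + Real.sin x * deriv (deriv U) x) x := fun x hx =>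
    (Real.hasDerivAt_sin x).mul (aux_d2 h ⟨by linarith [hx.1, Real.pi_pos], by linarith [hx.2, hr.2]⟩)
  have hanti : StrictAntiOn (fun x => Real.sin x * deriv U x) (Set.Icc 0 r) := by
    apply strictAntiOn_of_deriv_neg (convex_Icc _ _)
    · exact fun x hx => (hd x hx).continuousAt.continuousWithinAt
    · intro x hx
      rw [interior_Icc] at hx
      rw [(hd x (Set.Ioo_subset_Icc_self hx)).deriv]
      have hs : 0 < Real.sin x := Real.sin_pos_of_pos_of_lt_pi hx.1 (by linarith [hx.2, hr.2])
      have he := h.2.2 x ⟨by linarith [hx.1, Real.pi_pos], by linarith [hx.2, hr.2]⟩ hx.1.ne'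
      have hf := hH _ (hpos x ⟨hx.1.le, hx.2⟩)
      have e : Real.cos x * deriv U x + Real.sin x * deriv (deriv U) x = - (Real.sin x * f (U x)) := by
        field_simp at he
        linarith
      rw [e]
      have := mul_pos hs hf
      linarith
  intro x hx
  have := hanti ⟨le_refl _, hr.1.le⟩ ⟨hx.1.le, hx.2⟩ hx.1
  simp only [Real.sin_zero, zero_mul] at this
  have hs : 0 < Real.sin x := Real.sin_pos_of_pos_of_lt_pi hx.1 (by linarith [hx.2, hr.2])
  by_contra hc
  push Not at hc
  have := mul_nonneg hs.le hc
  linarith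

/-- The quotient comparison on an interval where `U₁ ≤ U₂`. -/
lemma aux_quot {f U V : ℝ → ℝ} {m : ℝ}
    (hq : ∀ x y : ℝ, 0 < x → x ≤ y → x * f y ≤ y * f x)
    (hU : IsEvenSol f U) (hV : IsEvenSol f V) (hm : m < Real.pi)
    (pU : ∀ x ∈ Set.Icc 0 m, 0 < U x)
    (hle : ∀ x ∈ Set.Ioo 0 m, U x ≤ V x) :
    ∀ x ∈ Set.Icc 0 m, V 0 * U x ≤ V x * U 0 := by
  have hI : ∀ x ∈ Set.Icc 0 m, x ∈ Set.Ioo (-Real.pi) Real.pi := fun x hx =>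
    ⟨by linarith [hx.1, Real.pi_pos], by linarith [hx.2]⟩
  have hd : ∀ x ∈ Set.Icc 0 m,
      HasDerivAt (fun x => Real.sin x * (deriv V x * U x - V x * deriv U x))
      (Real.cos x * (deriv V x * U x - V x * deriv U x) + Real.sin x *
        ((deriv (deriv V) x * U x + deriv V x * deriv U x) -
          (deriv V x * deriv U x + V x * deriv (deriv U) x))) x := fun x hx =>
    (Real.hasDerivAt_sin x).mul
      (((aux_d2 hV (hI x hx)).mul (aux_strict hU (hI x hx)).hasDerivAt).sub
       ((aux_strict hV (hI x hx)).hasDerivAt.mul (aux_d2 hU (hI x hx))))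
  have hmono : MonotoneOn (fun x => Real.sin x * (deriv V x * U x - V x * deriv U x))
      (Set.Icc 0 m) := by
    apply monotoneOn_of_deriv_nonneg (convex_Icc _ _)
    · exact fun x hx => (hd x hx).continuousAt.continuousWithinAt
    · rw [interior_Icc]
      exact fun x hx => (hd x (Set.Ioo_subset_Icc_self hx)).differentiableAt.differentiableWithinAt
    · intro x hx
      rw [interior_Icc] at hx
      rw [(hd x (Set.Ioo_subset_Icc_self hx)).deriv]
      have hs : 0 < Real.sin x := Real.sin_pos_of_pos_of_lt_pi hx.1 (by linarith [hx.2])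
      have hx' := hI x (Set.Ioo_subset_Icc_self hx)
      have he := hU.2.2 x hx' hx.1.ne'
      have he' := hV.2.2 x hx' hx.1.ne'
      have hf := hq _ _ (pU x (Set.Ioo_subset_Icc_self hx)) (hle x hx)
      have e : Real.cos x * deriv U x + Real.sin x * deriv (deriv U) x = - (Real.sin x * f (U x)) := by
        field_simp at he
        linarith
      have e' : Real.cos x * deriv V x + Real.sin x * deriv (deriv V) x = - (Real.sin x * f (V x)) := by
        field_simp at he'
        linarith
      have key : (Real.cos x * (deriv V x * U x - V x * deriv U x) + Real.sin x *
        ((deriv (deriv V) x * U x + deriv V x * deriv U x) -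
          (deriv V x * deriv U x + V x * deriv (deriv U) x)))
          = Real.sin x * (V x * f (U x) - U x * f (V x)) := by
        linear_combination U x * e' - V x * e
      rw [key]
      exact mul_nonneg hs.le (by linarith)
  have hd2 : ∀ x ∈ Set.Icc 0 m, HasDerivAt (fun x => V x / U x)
      ((deriv V x * U x - V x * deriv U x) / U x ^ 2) x := fun x hx =>
    (aux_strict hV (hI x hx)).hasDerivAt.div (aux_strict hU (hI x hx)).hasDerivAt (pU x hx).ne'
  have hmono2 : MonotoneOn (fun x => V x / U x) (Set.Icc 0 m) := by
    apply monotoneOn_of_deriv_nonneg (convex_Icc _ _)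
    · exact fun x hx => (hd2 x hx).continuousAt.continuousWithinAt
    · rw [interior_Icc]
      exact fun x hx => (hd2 x (Set.Ioo_subset_Icc_self hx)).differentiableAt.differentiableWithinAt
    · intro x hx
      rw [interior_Icc] at hx
      rw [(hd2 x (Set.Ioo_subset_Icc_self hx)).deriv]
      have hs : 0 < Real.sin x := Real.sin_pos_of_pos_of_lt_pi hx.1 (by linarith [hx.2])
      have := hmono ⟨le_refl _, (hx.1.trans hx.2).le⟩ (Set.Ioo_subset_Icc_self hx) hx.1.le
      simp only [Real.sin_zero, zero_mul] at this
      exact div_nonneg (nonneg_of_mul_nonneg_right this hs) (sq_nonneg _)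
  intro x hx
  have hm0 : (0:ℝ) ∈ Set.Icc 0 m := ⟨le_refl _, hx.1.trans hx.2⟩
  have := hmono2 hm0 hx hx.1
  simp only at this
  rwa [div_le_div_iff₀ (pU 0 hm0) (pU x hx)] at this

/-- Strict ordering on `[0,m]`. -/
lemma aux_order {f U V : ℝ → ℝ} {m : ℝ}
    (hq : ∀ x y : ℝ, 0 < x → x ≤ y → x * f y ≤ y * f x)
    (hU : IsEvenSol f U) (hV : IsEvenSol f V) (hm : m < Real.pi)
    (pU : ∀ x ∈ Set.Icc 0 m, 0 < U x) (h0 : U 0 < V 0) :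
    ∀ x ∈ Set.Icc 0 m, U x < V x := by
  intro x hx
  by_contra hc
  push Not at hc
  have hI : ∀ x ∈ Set.Icc 0 m, x ∈ Set.Ioo (-Real.pi) Real.pi := fun x hx =>
    ⟨by linarith [hx.1, Real.pi_pos], by linarith [hx.2]⟩
  have cU : ContinuousOn U (Set.Icc 0 m) := fun y hy =>
    (aux_strict hU (hI y hy)).hasDerivAt.continuousAt.continuousWithinAt
  have cV : ContinuousOn V (Set.Icc 0 m) := fun y hy =>
    (aux_strict hV (hI y hy)).hasDerivAt.continuousAt.continuousWithinAt
  have hcomp : IsCompact {y ∈ Set.Icc 0 m | V y ≤ U y} :=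
    isCompact_Icc.of_isClosed_subset (isClosed_Icc.isClosed_le cV cU) (fun y hy => hy.1)
  obtain ⟨y, ⟨hy, hyle⟩, hmin⟩ := hcomp.exists_isLeast ⟨x, hx, hc⟩
  have hle : ∀ z ∈ Set.Ioo 0 y, U z ≤ V z := by
    intro z hz
    by_contra hzc
    push Not at hzc
    have := hmin (show z ∈ {y ∈ Set.Icc 0 m | V y ≤ U y} from
      ⟨⟨hz.1.le, hz.2.le.trans hy.2⟩, hzc.le⟩)
    linarith [hz.2]
  have := aux_quot hq hU hV (lt_of_le_of_lt hy.2 hm)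
    (fun z hz => pU z ⟨hz.1, hz.2.trans hy.2⟩) hle y ⟨hy.1, le_refl _⟩
  have p0 := pU 0 ⟨le_refl _, hy.1.trans hy.2⟩
  have py := pU y hy
  nlinarith

/-- The proportional ordering up to the first zero. -/
lemma aux_prop {f U V : ℝ → ℝ} {r : ℝ}
    (hq : ∀ x y : ℝ, 0 < x → x ≤ y → x * f y ≤ y * f x)
    (hU : IsEvenSol f U) (hV : IsEvenSol f V) (hr : r < Real.pi)
    (pU : ∀ x ∈ Set.Ico 0 r, 0 < U x) (h0 : U 0 < V 0) :
    ∀ x ∈ Set.Ico 0 r, V 0 * U x ≤ V x * U 0 := by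
  intro x hx
  have p : ∀ z ∈ Set.Icc 0 x, 0 < U z := fun z hz => pU z ⟨hz.1, lt_of_le_of_lt hz.2 hx.2⟩
  exact aux_quot hq hU hV (hx.2.trans hr) p
    (fun z hz => (aux_order hq hU hV (hx.2.trans hr) p h0 z (Set.Ioo_subset_Icc_self hz)).le)
    x ⟨hx.1, le_refl _⟩

lemma aux_cot {a b : ℝ} (ha : 0 < a) (hab : a < b) (hb : b < Real.pi) :
    Real.cos b / Real.sin b < Real.cos a / Real.sin a := by
  have h1 : 0 < Real.sin a := Real.sin_pos_of_pos_of_lt_pi ha (hab.trans hb)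
  have h2 : 0 < Real.sin b := Real.sin_pos_of_pos_of_lt_pi (ha.trans hab) hb
  have h3 : 0 < Real.sin (b - a) := Real.sin_pos_of_pos_of_lt_pi (by linarith) (by linarith)
  rw [Real.sin_sub] at h3
  rw [div_lt_div_iff₀ h2 h1]
  linarith

/-- Comparison of slopes at equal heights. -/
lemma aux_main {f U V : ℝ → ℝ} {r s : ℝ}
    (hU : IsEvenSol f U) (hV : IsEvenSol f V) (hr : r ∈ Set.Ioo 0 Real.pi)
    (hs : s ∈ Set.Ioo 0 Real.pi) (hrs : r ≤ s)
    (dU : ∀ x ∈ Set.Ioc 0 r, deriv U x < 0) (dV : ∀ x ∈ Set.Ioc 0 s, deriv V x < 0)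
    (hlt : ∀ x ∈ Set.Icc 0 r, U x < V x) (hUV : U r = V s) :
    deriv V s < deriv U r := by
  by_contra hc
  push Not at hc
  have hI : ∀ x ∈ Set.Icc 0 s, x ∈ Set.Ioo (-Real.pi) Real.pi := fun x hx =>
    ⟨by linarith [hx.1, Real.pi_pos], by linarith [hx.2, hs.2]⟩
  have hI' : ∀ x ∈ Set.Icc 0 r, x ∈ Set.Ioo (-Real.pi) Real.pi := fun x hx =>
    hI x ⟨hx.1, hx.2.trans hrs⟩
  have anti : StrictAntiOn V (Set.Icc 0 s) := by
    apply strictAntiOn_of_deriv_neg (convex_Icc _ _)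
    · exact fun y hy => (aux_strict hV (hI y hy)).hasDerivAt.continuousAt.continuousWithinAt
    · rw [interior_Icc]
      exact fun x hx => dV x ⟨hx.1, hx.2.le⟩
  set K : Set (ℝ × ℝ) := Set.Icc 0 r ×ˢ Set.Icc 0 s with hK
  have c1 : ContinuousOn (fun p : ℝ × ℝ => U p.1) K := fun p hp =>
    ((aux_strict hU (hI' _ hp.1)).hasDerivAt.continuousAt.comp continuousAt_fst).continuousWithinAt
  have c2 : ContinuousOn (fun p : ℝ × ℝ => V p.2) K := fun p hp =>
    ((aux_strict hV (hI _ hp.2)).hasDerivAt.continuousAt.comp continuousAt_snd).continuousWithinAt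
  have c3 : ContinuousOn (fun p : ℝ × ℝ => deriv U p.1) K := fun p hp =>
    ((aux_d2 hU (hI' _ hp.1)).continuousAt.comp continuousAt_fst).continuousWithinAt
  have c4 : ContinuousOn (fun p : ℝ × ℝ => deriv V p.2) K := fun p hp =>
    ((aux_d2 hV (hI _ hp.2)).continuousAt.comp continuousAt_snd).continuousWithinAt
  have hKc : IsCompact K := isCompact_Icc.prod isCompact_Icc
  set S : Set (ℝ × ℝ) := ({p ∈ K | U p.1 ≤ V p.2} ∩ {p ∈ K | V p.2 ≤ U p.1}) ∩
    {p ∈ K | deriv U p.1 ≤ deriv V p.2} with hS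
  have hScl : IsClosed S := ((hKc.isClosed.isClosed_le c1 c2).inter
    (hKc.isClosed.isClosed_le c2 c1)).inter (hKc.isClosed.isClosed_le c3 c4)
  have hSc : IsCompact S := hKc.of_isClosed_subset hScl (fun p hp => hp.2.1)
  have hrK : ((r, s) : ℝ × ℝ) ∈ K := ⟨⟨hr.1.le, le_refl _⟩, ⟨hs.1.le, le_refl _⟩⟩
  obtain ⟨⟨a, b⟩, ⟨⟨⟨hp, hab1⟩, ⟨_, hab2⟩⟩, ⟨_, hab3⟩⟩, hmin⟩ := hSc.exists_isMinOn
    ⟨(r, s), ⟨⟨hrK, hUV.le⟩, ⟨hrK, hUV.ge⟩⟩, ⟨hrK, hc⟩⟩ (continuous_fst.continuousOn (s := S))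
  obtain ⟨ha, hb⟩ := hp
  simp only at ha hb hab1 hab2 hab3
  have hUVab : U a = V b := le_antisymm hab1 hab2
  have hab : a < b := by
    by_contra hba
    push Not at hba
    have := anti.antitoneOn hb ⟨ha.1, ha.2.trans hrs⟩ hba
    linarith [hlt a ha]
  have hb0 : 0 < b := lt_of_le_of_lt ha.1 hab
  have dVb := dV b ⟨hb0, hb.2⟩
  have ha0 : 0 < a := by
    rcases ha.1.eq_or_lt with h | h
    · rw [← h, aux_zero hU] at hab3
      linarith
    · exact h
  have dUa := dU a ⟨ha0, ha.2⟩
  have hst := aux_strict hV (hI b hb)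
  obtain ⟨g, hg⟩ : ∃ g, g = hst.localInverse V (deriv V b) b dVb.ne := ⟨_, rfl⟩
  have hg1 : HasDerivAt g (deriv V b)⁻¹ (V b) := by
    rw [hg]; exact (hst.to_localInverse dVb.ne).hasDerivAt
  have hg2 : ∀ᶠ y in 𝓝 (V b), V (g y) = y := by
    rw [hg]; exact HasStrictFDerivAt.eventually_right_inverse _
  have hg3 : g (V b) = b := by
    rw [hg]; exact HasStrictFDerivAt.localInverse_apply_image _
  have hUa := (aux_strict hU (hI' a ha)).hasDerivAt
  have hh : HasDerivAt (fun x => g (U x)) ((deriv V b)⁻¹ * deriv U a) a := by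
    rw [← hUVab] at hg1
    exact hg1.comp a hUa
  have hha : g (U a) = b := by rw [hUVab, hg3]
  have hD : HasDerivAt (fun x => deriv U x - deriv V (g (U x)))
      (deriv (deriv U) a - deriv (deriv V) b * ((deriv V b)⁻¹ * deriv U a)) a := by
    have h1 : HasDerivAt (deriv V) (deriv (deriv V) b) (g (U a)) := by
      rw [hha]; exact aux_d2 hV (hI b hb)
    have h2 : HasDerivAt (fun x => deriv V (g (U x)))
        (deriv (deriv V) b * ((deriv V b)⁻¹ * deriv U a)) a :=
      HasDerivAt.comp (h₂ := deriv V) (h := fun x => g (U x)) a h1 hh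
    exact (aux_d2 hU (hI' a ha)).sub h2
  have hhpos : 0 < (deriv V b)⁻¹ * deriv U a := mul_pos_of_neg_of_neg (inv_lt_zero.2 dVb) dUa
  have e1 := aux_left hh hhpos
  have hle : 𝓝[<] a ≤ 𝓝 a := nhdsWithin_le_nhds
  have e2 : ∀ᶠ x in 𝓝[<] a, V (g (U x)) = U x := by
    rw [← hUVab] at hg2
    exact hle (hUa.continuousAt.eventually hg2)
  have e3 : ∀ᶠ x in 𝓝[<] a, 0 < g (U x) := by
    have : 0 < g (U a) := by rw [hha]; exact hb0
    exact hle (hh.continuousAt.eventually (lt_mem_nhds this))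
  have e4 : ∀ᶠ x in 𝓝[<] a, 0 < x := hle (lt_mem_nhds ha0)
  have e5 : ∀ᶠ x in 𝓝[<] a, deriv U x - deriv V (g (U x)) < 0 := by
    rcases hab3.lt_or_eq with h | h
    · have : deriv U a - deriv V (g (U a)) < 0 := by rw [hha]; linarith
      exact hle (hD.continuousAt.eventually (gt_mem_nhds this))
    · have hz : deriv U a - deriv V (g (U a)) = 0 := by rw [hha]; linarith
      have e := aux_left hD (by
        rw [h, inv_mul_cancel₀ dVb.ne]
        have E1 := hU.2.2 a (hI' a ha) ha0.ne'
        have E2 := hV.2.2 b (hI b hb) hb0.ne'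
        have hcot := aux_cot ha0 hab (lt_of_le_of_lt hb.2 hs.2)
        rw [hUVab, h] at E1
        nlinarith)
      simpa only [hz] using e
  obtain ⟨x, x1, x2, x3, x4, x5, x6⟩ :=
    (e1.and (e2.and (e3.and (e4.and (e5.and self_mem_nhdsWithin))))).exists
  have x6 : x < a := x6
  have hxK : ((x, g (U x)) : ℝ × ℝ) ∈ K :=
    ⟨⟨x4.le, x6.le.trans ha.2⟩, ⟨x3.le, by simp only [hha] at x1; exact x1.le.trans hb.2⟩⟩
  have hxS : ((x, g (U x)) : ℝ × ℝ) ∈ S :=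
    ⟨⟨⟨hxK, x2.ge⟩, ⟨hxK, x2.le⟩⟩, ⟨hxK, by simp only; linarith⟩⟩
  have := hmin hxS
  simp only [Set.mem_ofPred_eq] at this
  linarith

lemma aux_ratio {f : ℝ → ℝ} (hf : ContDiff ℝ 1 f)
    (hH : ∀ x > (0:ℝ), 0 < f x ∧ x * deriv f x ≤ f x) :
    ∀ x y : ℝ, 0 < x → x ≤ y → x * f y ≤ y * f x := by
  have hd : ∀ x ∈ Set.Ioi (0:ℝ), HasDerivAt (fun x => f x / x)
      ((deriv f x * x - f x * 1) / x ^ 2) x := fun x hx =>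
    ((hf.differentiable (by norm_num)) x).hasDerivAt.div (hasDerivAt_id x) (ne_of_gt hx)
  have hanti : AntitoneOn (fun x => f x / x) (Set.Ioi 0) := by
    apply antitoneOn_of_deriv_nonpos (convex_Ioi _)
    · exact fun x hx => (hd x hx).continuousAt.continuousWithinAt
    · rw [interior_Ioi]
      exact fun x hx => (hd x hx).differentiableAt.differentiableWithinAt
    · rw [interior_Ioi]
      intro x hx
      rw [(hd x hx).deriv]
      exact div_nonpos_of_nonpos_of_nonneg (by linarith [(hH x hx).2]) (sq_nonneg _)
  intro x y hx hxy
  have hy := hx.trans_le hxy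
  have := hanti hx hy hxy
  simp only at this
  rw [div_le_div_iff₀ hy hx] at this
  linarith

/-- Under hypothesis (H), the Neumann value `t ↦ U_t'(r_t)` is strictly decreasing on
`(0,∞)`. -/
theorem stmt13 (f : ℝ → ℝ) (hf : ContDiff ℝ 1 f)
    (hH : ∀ x > (0:ℝ), 0 < f x ∧ x * deriv f x ≤ f x)
    (U : ℝ → ℝ → ℝ) (r : ℝ → ℝ)
    (hU : ∀ t > (0:ℝ), IsEvenSol f (U t) ∧ U t 0 = t ∧
      r t ∈ Set.Ioo 0 Real.pi ∧ U t (r t) = 0 ∧ ∀ ρ ∈ Set.Ioo 0 (r t), U t ρ ≠ 0) :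
    StrictAntiOn (fun t => deriv (U t) (r t)) (Set.Ioi 0) := by
  intro t ht u hu htu
  simp only
  have ht : 0 < t := ht
  have hu : 0 < u := hu
  obtain ⟨sU, U0, hr, Ur, Un⟩ := hU t ht
  obtain ⟨sV, V0, hs, Vs, Vn⟩ := hU u hu
  have hq := aux_ratio hf hH
  have hfp : ∀ x > (0:ℝ), 0 < f x := fun x hx => (hH x hx).1
  have pU := aux_pos sU ht U0 hr Un
  have pV := aux_pos sV hu V0 hs Vn
  have dU := aux_neg hfp sU ht U0 hr Un
  have dV := aux_neg hfp sV hu V0 hs Vn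
  have h0 : U t 0 < U u 0 := by rw [U0, V0]; exact htu
  have hprop := aux_prop hq sU sV hr.2 pU h0
  rw [U0, V0] at hprop
  have hrs : r t ≤ r u := by
    by_contra hc
    push Not at hc
    have h1 := hprop (r u) ⟨hs.1.le, hc⟩
    have h2 := pU (r u) ⟨hs.1.le, hc⟩
    rw [Vs] at h1
    have := mul_pos hu h2
    linarith
  rcases hrs.eq_or_lt with heq | hlt
  · rw [← heq] at Vs ⊢
    have hrI : r t ∈ Set.Ioo (-Real.pi) Real.pi := ⟨by linarith [hr.1, Real.pi_pos], hr.2⟩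
    have hG : HasDerivAt (fun x => U u x * t - u * U t x)
        (deriv (U u) (r t) * t - u * deriv (U t) (r t)) (r t) :=
      ((aux_strict sV hrI).hasDerivAt.mul_const t).sub
        ((aux_strict sU hrI).hasDerivAt.const_mul u)
    have hle : deriv (U u) (r t) * t - u * deriv (U t) (r t) ≤ 0 := by
      by_contra hc
      push Not at hc
      have e4 : ∀ᶠ x in 𝓝[<] (r t), 0 < x := nhdsWithin_le_nhds (lt_mem_nhds hr.1)
      obtain ⟨x, x1, x2, x3⟩ := ((aux_left hG hc).and (e4.and self_mem_nhdsWithin)).exists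
      have := hprop x ⟨x2.le, x3⟩
      simp only [Vs, Ur] at x1
      linarith
    have hd := dU (r t) ⟨hr.1, le_refl _⟩
    nlinarith
  · apply aux_main sU sV hr hs hrs dU dV _ (by rw [Ur, Vs])
    intro x hx
    rcases hx.2.eq_or_lt with h | h
    · rw [h, Ur]
      exact pV _ ⟨hr.1.le, hlt⟩
    · exact aux_order hq sU sV (h.trans hr.2)
        (fun z hz => pU z ⟨hz.1, lt_of_le_of_lt hz.2 h⟩) h0 x ⟨hx.1, le_refl _⟩
end

section
/- Let f: ℝ → ℝ satisfy hypothesis (H) and let 0 < s < t. Then r_s ≤ r_t, and U_s(ρ) < U_t(ρ) for every ρ ∈ (−r_s, r_s); i.e. the family of solutions U_t is strictly increasing in the parameter t, and the first-zero radius r_t is non-decreasing in t. -/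
open Real Set

theorem reg_aux (V : ℝ → ℝ) (h : ContDiffOn ℝ 2 V (Set.Ioo (-Real.pi) Real.pi)) (x : ℝ)
    (hx : x ∈ Set.Ioo (-Real.pi) Real.pi) :
    HasDerivAt V (deriv V x) x ∧ HasDerivAt (deriv V) (deriv (deriv V) x) x := by
  have ho : IsOpen (Set.Ioo (-Real.pi) Real.pi) := isOpen_Ioo
  have h1 : ContDiffOn ℝ (1 + 1) V (Set.Ioo (-Real.pi) Real.pi) := by
    rw [one_add_one_eq_two]; exact h
  rw [contDiffOn_succ_iff_deriv_of_isOpen ho] at h1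
  exact ⟨((h1.1 x hx).differentiableAt (ho.mem_nhds hx)).hasDerivAt,
    ((h1.2.2.differentiableOn (by norm_num) x hx).differentiableAt (ho.mem_nhds hx)).hasDerivAt⟩

theorem quot_aux (f : ℝ → ℝ) (hf : ContDiff ℝ 1 f)
    (hH : ∀ x > (0:ℝ), 0 < f x ∧ x * deriv f x ≤ f x) (a b : ℝ) (ha : 0 < a) (hab : a ≤ b) :
    f b * a ≤ f a * b := by
  have hd : ∀ x > (0:ℝ), HasDerivAt (fun y => f y / y) ((deriv f x * x - f x * 1) / x ^ 2) x :=
    fun x hx => ((hf.differentiable (by norm_num) x).hasDerivAt).div (hasDerivAt_id x) hx.ne'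
  have hanti : AntitoneOn (fun y => f y / y) (Set.Ioi 0) := by
    apply antitoneOn_of_deriv_nonpos (convex_Ioi 0)
    · intro x hx; exact (hd x hx).continuousAt.continuousWithinAt
    · intro x hx
      rw [interior_Ioi] at hx
      exact (hd x hx).differentiableAt.differentiableWithinAt
    · intro x hx
      rw [interior_Ioi] at hx
      rw [(hd x hx).deriv]
      apply div_nonpos_of_nonpos_of_nonneg _ (sq_nonneg x)
      have := (hH x hx).2
      linarith
  have h := hanti (show a ∈ Set.Ioi 0 from ha) (show b ∈ Set.Ioi 0 from lt_of_lt_of_le ha hab) hab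
  simp only at h
  rwa [div_le_div_iff₀ (lt_of_lt_of_le ha hab) ha] at h

theorem main_aux (f : ℝ → ℝ) (hf : ContDiff ℝ 1 f)
    (hH : ∀ x > (0:ℝ), 0 < f x ∧ x * deriv f x ≤ f x) (u v : ℝ → ℝ)
    (hu : IsEvenSol f u) (hv : IsEvenSol f v) (h0 : u 0 < v 0)
    (R : ℝ) (hR : R < Real.pi) (hpos : ∀ x ∈ Set.Ico 0 R, 0 < u x) :
    ∀ x ∈ Set.Ico 0 R, u x < v x := by
  intro x hx
  by_contra hcon
  push Not at hcon
  have hmem : ∀ y ∈ Set.Icc 0 x, y ∈ Set.Ioo (-Real.pi) Real.pi := fun y hy =>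
    ⟨by linarith [hy.1, Real.pi_pos], by linarith [hy.2, hx.2]⟩
  have ru := fun y hy => reg_aux u hu.2.1 y (hmem y hy)
  have rv := fun y hy => reg_aux v hv.2.1 y (hmem y hy)
  have cu : ContinuousOn u (Set.Icc 0 x) := fun y hy => (ru y hy).1.continuousAt.continuousWithinAt
  have cv : ContinuousOn v (Set.Icc 0 x) := fun y hy => (rv y hy).1.continuousAt.continuousWithinAt
  have hcl : IsClosed {y ∈ Set.Icc 0 x | v y ≤ u y} := isClosed_Icc.isClosed_le cv cu
  have hcp : IsCompact {y ∈ Set.Icc 0 x | v y ≤ u y} :=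
    isCompact_Icc.of_isClosed_subset hcl (fun y hy => hy.1)
  obtain ⟨p, ⟨hp, hpl⟩, hmin⟩ := hcp.exists_isLeast ⟨x, ⟨hx.1, le_refl x⟩, hcon⟩
  have hsub : ∀ y ∈ Set.Icc 0 p, y ∈ Set.Icc 0 x := fun y hy => ⟨hy.1, hy.2.trans hp.2⟩
  have up : ∀ y ∈ Set.Icc 0 p, 0 < u y := fun y hy => hpos y ⟨hy.1, by linarith [hy.2, hp.2, hx.2]⟩
  have hlt : ∀ y ∈ Set.Ico 0 p, u y < v y := by
    intro y hy
    by_contra hc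
    push Not at hc
    have : p ≤ y := hmin ⟨hsub y ⟨hy.1, hy.2.le⟩, hc⟩
    linarith [hy.2]
  have dw : ∀ y ∈ Set.Icc 0 p, HasDerivAt
      (fun z => Real.sin z * (deriv u z * v z - deriv v z * u z))
      (Real.cos y * (deriv u y * v y - deriv v y * u y) + Real.sin y *
        ((deriv (deriv u) y * v y + deriv u y * deriv v y)
          - (deriv (deriv v) y * u y + deriv v y * deriv u y))) y := by
    intro y hy
    have a := ru y (hsub y hy)
    have b := rv y (hsub y hy)
    exact (Real.hasDerivAt_sin y).mul ((a.2.mul b.1).sub (b.2.mul a.1))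
  have hw : AntitoneOn (fun z => Real.sin z * (deriv u z * v z - deriv v z * u z))
      (Set.Icc 0 p) := by
    apply antitoneOn_of_deriv_nonpos (convex_Icc 0 p)
    · intro y hy; exact (dw y hy).continuousAt.continuousWithinAt
    · intro y hy
      exact (dw y (interior_subset hy)).differentiableAt.differentiableWithinAt
    · intro y hy
      have hy' := interior_subset hy
      rw [interior_Icc] at hy
      rw [(dw y hy').deriv]
      have hm := hmem y (hsub y hy')
      have sp : 0 < Real.sin y := Real.sin_pos_of_pos_of_lt_pi hy.1 hm.2
      have e1 := hu.2.2 y hm hy.1.ne'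
      have e2 := hv.2.2 y hm hy.1.ne'
      have q := quot_aux f hf hH (u y) (v y) (up y hy') (hlt y ⟨hy.1.le, hy.2⟩).le
      have e1' : Real.sin y * deriv (deriv u) y = - Real.cos y * deriv u y - Real.sin y * f (u y) := by
        field_simp at e1; linarith
      have e2' : Real.sin y * deriv (deriv v) y = - Real.cos y * deriv v y - Real.sin y * f (v y) := by
        field_simp at e2; linarith
      have : Real.cos y * (deriv u y * v y - deriv v y * u y) + Real.sin y *
        ((deriv (deriv u) y * v y + deriv u y * deriv v y)
          - (deriv (deriv v) y * u y + deriv v y * deriv u y))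
          = Real.sin y * (f (v y) * u y - f (u y) * v y) := by
        linear_combination v y * e1' - u y * e2'
      rw [this]
      exact mul_nonpos_of_nonneg_of_nonpos sp.le (by linarith)
  have hp0 : (0:ℝ) ∈ Set.Icc 0 p := ⟨le_refl 0, hp.1⟩
  have dq : ∀ y ∈ Set.Icc 0 p, HasDerivAt (fun z => v z / u z)
      ((deriv v y * u y - v y * deriv u y) / u y ^ 2) y := fun y hy =>
    (rv y (hsub y hy)).1.div (ru y (hsub y hy)).1 (up y hy).ne'
  have hq : MonotoneOn (fun z => v z / u z) (Set.Icc 0 p) := by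
    apply monotoneOn_of_deriv_nonneg (convex_Icc 0 p)
    · intro y hy; exact (dq y hy).continuousAt.continuousWithinAt
    · intro y hy
      exact (dq y (interior_subset hy)).differentiableAt.differentiableWithinAt
    · intro y hy
      have hy' := interior_subset hy
      rw [interior_Icc] at hy
      rw [(dq y hy').deriv]
      have hm := hmem y (hsub y hy')
      have sp : 0 < Real.sin y := Real.sin_pos_of_pos_of_lt_pi hy.1 hm.2
      have := hw hp0 hy' hy.1.le
      simp only [Real.sin_zero, zero_mul] at this
      have h3 := nonpos_of_mul_nonpos_right this sp
      apply div_nonneg _ (sq_nonneg _)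
      linarith
  have h4 := hq hp0 ⟨hp.1, le_refl p⟩ hp.1
  simp only at h4
  have h5 : 1 < v 0 / u 0 := (one_lt_div (up 0 hp0)).2 h0
  have h6 : v p / u p ≤ 1 := (div_le_one (up p ⟨hp.1, le_refl p⟩)).2 hpl
  linarith

/-- Under hypothesis (H), the family `U_t` is strictly increasing in `t` and the
first-zero radius `r_t` is non-decreasing in `t`. -/
theorem stmt14 (f : ℝ → ℝ) (hf : ContDiff ℝ 1 f)
    (hH : ∀ x > (0:ℝ), 0 < f x ∧ x * deriv f x ≤ f x)
    (U : ℝ → ℝ → ℝ) (r : ℝ → ℝ)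
    (hU : ∀ t > (0:ℝ), IsEvenSol f (U t) ∧ U t 0 = t ∧
      r t ∈ Set.Ioo 0 Real.pi ∧ U t (r t) = 0 ∧ ∀ ρ ∈ Set.Ioo 0 (r t), U t ρ ≠ 0)
    (s t : ℝ) (hs : 0 < s) (hst : s < t) :
    r s ≤ r t ∧ ∀ ρ ∈ Set.Ioo (-(r s)) (r s), U s ρ < U t ρ := by
  obtain ⟨su, s0, sr, -, sn⟩ := hU s hs
  obtain ⟨tu, t0, tr, tz, -⟩ := hU t (hs.trans hst)
  have hpos : ∀ x ∈ Set.Ico 0 (r s), 0 < U s x := by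
    intro x hx
    by_contra hc
    push Not at hc
    have hcont : ContinuousOn (U s) (Set.Icc 0 x) :=
      su.2.1.continuousOn.mono (fun y hy =>
        ⟨by linarith [hy.1, Real.pi_pos], by linarith [hy.2, hx.2, sr.2]⟩)
    obtain ⟨z, hz, hz0⟩ := intermediate_value_Icc' hx.1 hcont ⟨hc, by rw [s0]; exact hs.le⟩
    have hzne : z ≠ 0 := by
      rintro rfl
      rw [s0] at hz0
      exact hs.ne' hz0
    exact sn z ⟨lt_of_le_of_ne hz.1 hzne.symm, lt_of_le_of_lt hz.2 hx.2⟩ hz0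
  have key := main_aux f hf hH (U s) (U t) su tu (by rw [s0, t0]; exact hst) (r s) sr.2 hpos
  constructor
  · by_contra hc
    push Not at hc
    have h1 := key (r t) ⟨tr.1.le, hc⟩
    have h2 := hpos (r t) ⟨tr.1.le, hc⟩
    linarith
  · intro x hx
    rcases le_total 0 x with h | h
    · exact key x ⟨h, hx.2⟩
    · have hm : x ∈ Set.Ioo (-Real.pi) Real.pi := ⟨by linarith [hx.1, sr.2], by linarith [hx.2, sr.2]⟩
      rw [← su.1 x hm, ← tu.1 x hm]
      exact key (-x) ⟨by linarith, by linarith [hx.1]⟩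
end

section
/- Let D be the open unit disk in ℂ and D₊ = {z ∈ D : Im z > 0}. Let f: closure(D₊) → ℂ be continuous, C¹ on D₊, with f(z) ∈ ℝ whenever z ∈ D ∩ ℝ. Assume there is a continuous non-negative function h on the closed unit disk such that |∂_{z̄} f(z)| ≤ h(z)·|f(z)| for all z ∈ D₊, where ∂_{z̄} = ½(∂_x + i·∂_y). Assume f(0) = 0. Then either f vanishes identically on V ∩ closure(D₊) for some open neighborhood V of 0, or there exist an integer k ≥ 1, an open neighborhood V of 0, and a continuous function f̃ on V ∩ closure(D₊) with f̃(0) ≠ 0, such that f(z) = z^k · f̃(z) for all z ∈ V ∩ closure(D₊). -/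
/-- Wirtinger derivative `∂_z̄ = ½(∂_x + i ∂_y)`. -/
noncomputable def wDzbar (F : ℂ → ℂ) (z : ℂ) : ℂ :=
  (fderiv ℝ F z 1 + Complex.I * fderiv ℝ F z Complex.I) / 2


section SimilarityPrinciple

open MeasureTheory Set Metric Filter Topology

lemma sp_lintegral_inv (ε : ℝ) :
    ∫⁻ w in ball (0:ℂ) ε, ‖w⁻¹‖ₑ ≤ ENNReal.ofReal (2 * Real.pi * ε) := by
  rw [← lintegral_indicator measurableSet_ball, ← Complex.lintegral_comp_polarCoord_symm]
  calc _ ≤ ∫⁻ p in polarCoord.target, (Ioo (0:ℝ) ε ×ˢ Ioo (-Real.pi) Real.pi).indicator 1 p := by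
        refine setLIntegral_mono' polarCoord.open_target.measurableSet ?_
        rintro ⟨r, θ⟩ ⟨hr, hθ⟩
        simp only [mem_Ioi] at hr hθ
        by_cases h : r < ε
        · rw [indicator_of_mem (s := Ioo (0:ℝ) ε ×ˢ _) (by exact ⟨⟨hr, h⟩, hθ⟩)]
          rw [indicator_of_mem (by simpa [abs_of_pos hr] using h)]
          rw [enorm_inv (by
            rw [← norm_ne_zero_iff, Complex.norm_polarCoord_symm]; simpa using hr.ne')]
          rw [← ofReal_norm, Complex.norm_polarCoord_symm, abs_of_pos hr, smul_eq_mul,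
            ENNReal.mul_inv_cancel (by simpa using hr) (by simp)]
          simp
        · rw [indicator_of_notMem]
          · simp
          · simpa [abs_of_pos hr] using h
    _ ≤ ∫⁻ p : ℝ × ℝ, (Ioo (0:ℝ) ε ×ˢ Ioo (-Real.pi) Real.pi).indicator 1 p :=
        setLIntegral_le_lintegral _ _
    _ = _ := by
        rw [lintegral_indicator_one (measurableSet_Ioo.prod measurableSet_Ioo)]
        rw [Measure.volume_eq_prod, Measure.prod_prod, Real.volume_Ioo, Real.volume_Ioo, mul_comm,
          ← ENNReal.ofReal_mul (by linarith [Real.pi_pos])]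
        congr 1; ring

lemma sp_integrableOn_inv (ε : ℝ) : IntegrableOn (fun w : ℂ => w⁻¹) (ball 0 ε) :=
  ⟨measurable_inv.aestronglyMeasurable, (sp_lintegral_inv ε).trans_lt ENNReal.ofReal_lt_top⟩

lemma sp_locInt : LocallyIntegrable (fun w : ℂ => w⁻¹) := fun x =>
  ⟨ball 0 (‖x‖ + 1), isOpen_ball.mem_nhds (by simp), sp_integrableOn_inv _⟩

lemma sp_integral_inv {ε : ℝ} (hε : 0 ≤ ε) :
    ∫ w in ball (0:ℂ) ε, ‖w⁻¹‖ ≤ 2 * Real.pi * ε := by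
  rw [integral_norm_eq_lintegral_enorm measurable_inv.aestronglyMeasurable]
  exact ENNReal.toReal_le_of_le_ofReal (by positivity) (sp_lintegral_inv ε)

lemma sp_dom {g : ℂ → ℂ} {C ε : ℝ} (hC : ∀ z, ‖g z‖ ≤ C) (hε : 0 < ε) (z w : ℂ) :
    ‖w⁻¹ * g (z - w)‖ ≤ (ball (0:ℂ) ε).indicator (fun w => C * ‖w⁻¹‖) w + ε⁻¹ * ‖g (z - w)‖ := by
  have hC0 : 0 ≤ C := (norm_nonneg _).trans (hC 0)
  rw [norm_mul]
  by_cases h : w ∈ ball (0:ℂ) ε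
  · rw [indicator_of_mem h, mul_comm]
    have := mul_le_mul_of_nonneg_right (hC (z - w)) (norm_nonneg w⁻¹)
    have : 0 ≤ ε⁻¹ * ‖g (z - w)‖ := by positivity
    linarith
  · rw [indicator_of_notMem h, zero_add]
    gcongr
    rw [norm_inv]
    simp only [mem_ball, dist_zero_right, not_lt] at h
    gcongr

lemma sp_dom_int {g : ℂ → ℂ} (hg : Integrable g) (C ε : ℝ) (z : ℂ) :
    Integrable (fun w => (ball (0:ℂ) ε).indicator (fun w => C * ‖w⁻¹‖) w + ε⁻¹ * ‖g (z - w)‖) := by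
  refine Integrable.add ?_ ?_
  · exact IntegrableOn.integrable_indicator ((sp_integrableOn_inv ε).norm.const_mul C) measurableSet_ball
  · exact ((hg.comp_sub_left z).norm).const_mul _

lemma sp_kint {g : ℂ → ℂ} {C : ℝ} (hg : Integrable g) (hC : ∀ z, ‖g z‖ ≤ C) (z : ℂ) :
    Integrable (fun w => w⁻¹ * g (z - w)) := by
  refine (sp_dom_int hg C 1 z).mono' ?_ (Eventually.of_forall fun w => sp_dom hC one_pos z w)
  exact measurable_inv.aestronglyMeasurable.mul (hg.comp_sub_left z).1

lemma sp_bound {g : ℂ → ℂ} {C ε : ℝ} (hg : Integrable g) (hC : ∀ z, ‖g z‖ ≤ C) (hε : 0 < ε)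
    (z : ℂ) : ‖∫ w, w⁻¹ * g (z - w)‖ ≤ C * (2 * Real.pi * ε) + ε⁻¹ * ∫ w, ‖g w‖ := by
  have hC0 : 0 ≤ C := (norm_nonneg _).trans (hC 0)
  refine (norm_integral_le_of_norm_le (sp_dom_int hg C ε z)
    (Eventually.of_forall fun w => sp_dom hC hε z w)).trans ?_
  rw [integral_add, integral_indicator measurableSet_ball, integral_const_mul, integral_const_mul,
    integral_sub_left_eq_self (fun w => ‖g w‖) volume z]
  · gcongr
    exact sp_integral_inv hε.le
  · exact IntegrableOn.integrable_indicator ((sp_integrableOn_inv ε).norm.const_mul C) measurableSet_ball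
  · exact ((hg.comp_sub_left z).norm).const_mul _

lemma sp_polar_int {H : ℝ × ℝ → ℂ} (hH : Continuous H) {R : ℝ}
    (h0 : ∀ r θ, R < r → H (r, θ) = 0) :
    IntegrableOn H (Ioi (0:ℝ) ×ˢ Ioo (-Real.pi) Real.pi) := by
  have h1 : IntegrableOn H (Icc (0:ℝ) R ×ˢ Icc (-Real.pi) Real.pi) :=
    hH.continuousOn.integrableOn_compact (isCompact_Icc.prod isCompact_Icc)
  refine h1.of_forall_sdiff_eq_zero (measurableSet_Ioi.prod measurableSet_Ioo) ?_
  rintro ⟨r, θ⟩ ⟨⟨hr, hθ⟩, hn⟩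
  apply h0
  by_contra hc
  exact hn ⟨⟨le_of_lt hr, not_lt.1 hc⟩, Ioo_subset_Icc_self hθ⟩

lemma sp_pompeiu {g : ℂ → ℂ} (hg : ContDiff ℝ 1 g) (hgc : HasCompactSupport g) (z : ℂ) :
    ∫ w, w⁻¹ * wDzbar g (z - w) = Real.pi * g z := by
  have hcf : Continuous (fderiv ℝ g) := hg.continuous_fderiv one_ne_zero
  have hdf : ∀ w, HasFDerivAt g (fderiv ℝ g w) w := fun w =>
    (hg.differentiable one_ne_zero w).hasFDerivAt
  obtain ⟨R, hR⟩ : ∃ R : ℝ, ∀ w, R < ‖w‖ → g (z - w) = 0 ∧ fderiv ℝ g (z - w) = 0 := by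
    obtain ⟨R, hR⟩ := hgc.isCompact.isBounded.subset_closedBall z
    refine ⟨R, fun w hw => ?_⟩
    have hn : z - w ∉ tsupport g := fun h => by
      have := hR h
      simp at this
      linarith
    refine ⟨image_eq_zero_of_notMem_tsupport hn, ?_⟩
    have : z - w ∉ tsupport (fderiv ℝ g) := fun h => hn (tsupport_fderiv_subset ℝ h)
    exact image_eq_zero_of_notMem_tsupport this
  set e : ℝ → ℂ := fun θ => (Real.cos θ : ℂ) + Real.sin θ * Complex.I with he
  have hec : Continuous e := by fun_prop
  have hen : ∀ θ, ‖e θ‖ = 1 := fun θ => by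
    have := Complex.norm_polarCoord_symm (1, θ)
    simpa [he] using this
  have hed : ∀ θ, HasDerivAt e (Complex.I * e θ) θ := fun θ => by
    have h1 := (Real.hasDerivAt_cos θ).ofReal_comp
    have h2 := ((Real.hasDerivAt_sin θ).ofReal_comp).mul_const Complex.I
    convert! h1.add h2 using 1
    simp only [he]
    push_cast
    linear_combination (Complex.sin θ) * Complex.I_sq
  set H1 : ℝ × ℝ → ℂ := fun p => fderiv ℝ g (z - p.1 * e p.2) (e p.2) with hH1
  set H2 : ℝ × ℝ → ℂ := fun p => fderiv ℝ g (z - p.1 * e p.2) (Complex.I * e p.2) with hH2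
  have hz : ∀ r θ, R < r → fderiv ℝ g (z - (r:ℂ) * e θ) = 0 := fun r θ h => by
    refine (hR _ ?_).2
    rw [norm_mul, hen, mul_one]
    exact h.trans_le (by simpa using le_abs_self r)
  have i1 : IntegrableOn H1 (Ioi (0:ℝ) ×ˢ Ioo (-Real.pi) Real.pi) :=
    sp_polar_int (R := R) (by fun_prop) (fun r θ h => by simp [hH1, hz r θ h])
  have i2 : IntegrableOn H2 (Ioi (0:ℝ) ×ˢ Ioo (-Real.pi) Real.pi) :=
    sp_polar_int (R := R) (by fun_prop) (fun r θ h => by simp [hH2, hz r θ h])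
  have key : ∫ w, w⁻¹ * wDzbar g (z - w) =
      ∫ p in Ioi (0:ℝ) ×ˢ Ioo (-Real.pi) Real.pi, (1/2 : ℂ) * (H1 p + Complex.I * H2 p) := by
    rw [← Complex.integral_comp_polarCoord_symm]
    refine setIntegral_congr_fun (measurableSet_Ioi.prod measurableSet_Ioo) ?_
    rintro ⟨r, θ⟩ ⟨hr, hθ⟩
    have hr0 : (r:ℂ) ≠ 0 := by exact_mod_cast (ne_of_gt hr)
    have he0 : e θ ≠ 0 := by rw [← norm_ne_zero_iff, hen]; simp
    simp only [Complex.polarCoord_symm_apply, Complex.real_smul, hH1, hH2]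
    change (r:ℂ) * (((r:ℂ) * e θ)⁻¹ * wDzbar g (z - (r:ℂ) * e θ)) = _
    have hlin : ∀ (L : ℂ →L[ℝ] ℂ) (x y : ℝ), L ((x:ℂ) + y * Complex.I) = x * L 1 + y * L Complex.I := by
      intro L x y
      have : ((x:ℂ) + y * Complex.I) = x • (1:ℂ) + y • Complex.I := by simp
      rw [this, map_add, map_smul, map_smul]; simp
    have e1 : Complex.I * e θ = ((-Real.sin θ : ℝ) : ℂ) + (Real.cos θ : ℝ) * Complex.I := by
      simp only [he]; push_cast; linear_combination (Complex.sin θ) * Complex.I_sq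
    rw [e1, hlin, hlin]
    have e2 : (e θ)⁻¹ = Real.cos θ - Real.sin θ * Complex.I := by
      apply inv_eq_of_mul_eq_one_left
      simp only [he]
      have := Complex.cos_sq_add_sin_sq (θ : ℂ)
      push_cast
      linear_combination this - (Complex.sin θ)^2 * Complex.I_sq
    rw [mul_inv, e2]
    unfold wDzbar
    generalize fderiv ℝ g (z - (r:ℂ) * e θ) = L
    field_simp
    push_cast
    linear_combination (-Complex.sin θ * L Complex.I) * Complex.I_sq
  have k1 : ∫ p in Ioi (0:ℝ) ×ˢ Ioo (-Real.pi) Real.pi, H1 p = 2 * Real.pi * g z := by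
    rw [Measure.volume_eq_prod, ← Measure.prod_restrict] 
    rw [integral_prod_symm]
    · have : ∀ θ : ℝ, ∫ r in Ioi (0:ℝ), H1 (r, θ) = g z := by
        intro θ
        set p : ℝ → ℂ := fun r => g (z - r * e θ) with hp
        have hpd : ∀ r, HasDerivAt p (- H1 (r, θ)) r := fun r => by
          have h1 : HasDerivAt (fun r : ℝ => z - (r:ℂ) * e θ) (- e θ) r := by
            simpa using ((Complex.ofRealCLM.hasDerivAt (x := r)).mul_const (e θ)).const_sub z
          have := (hdf (z - r * e θ)).comp_hasDerivAt r h1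
          simpa [hH1] using! this
        have hi : IntegrableOn (fun r => - H1 (r, θ)) (Ioi 0) := by
          have h1 : IntegrableOn (fun r => - H1 (r, θ)) (Icc 0 R) := 
            Continuous.integrableOn_Icc (by fun_prop)
          refine h1.of_forall_sdiff_eq_zero measurableSet_Ioi ?_
          intro r hr
          have : R < r := by
            by_contra hc
            exact hr.2 ⟨le_of_lt hr.1, not_lt.1 hc⟩
          simp [hH1, hz r θ this]
        have ht : Tendsto p atTop (𝓝 0) := by
          refine tendsto_const_nhds.congr' ?_
          filter_upwards [eventually_gt_atTop R] with r hr
          refine ((hR _ ?_).1).symm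
          rw [norm_mul, hen, mul_one]
          exact hr.trans_le (by simpa using le_abs_self r)
        have := integral_Ioi_of_hasDerivAt_of_tendsto' (a := 0) (fun r _ => hpd r) hi ht
        rw [integral_neg] at this
        simpa [hp] using this
      simp only [this]
      simp [Complex.real_smul]
      rw [max_eq_left (by positivity)]
      left; push_cast; ring
    · rw [Measure.prod_restrict]; exact i1
  have k2 : ∫ p in Ioi (0:ℝ) ×ˢ Ioo (-Real.pi) Real.pi, H2 p = 0 := by
    rw [Measure.volume_eq_prod, setIntegral_prod]
    · rw [← integral_zero ℝ ℂ (μ := volume.restrict (Ioi 0))]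
      refine setIntegral_congr_fun measurableSet_Ioi ?_
      intro r hr
      have hr0 : (r:ℂ) ≠ 0 := by exact_mod_cast (ne_of_gt hr)
      simp only []
      rw [← integral_Ioc_eq_integral_Ioo, 
        ← intervalIntegral.integral_of_le (by linarith [Real.pi_pos])]
      have hd : ∀ θ ∈ uIcc (-Real.pi) Real.pi, HasDerivAt (fun θ => - (r:ℂ)⁻¹ * g (z - r * e θ)) (H2 (r, θ)) θ := by
        intro θ _
        have h1 : HasDerivAt (fun θ : ℝ => z - (r:ℂ) * e θ) (- (r * (Complex.I * e θ))) θ := 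
          ((hed θ).const_mul (r:ℂ)).const_sub z
        have := ((hdf (z - r * e θ)).comp_hasDerivAt θ h1).const_mul (-(r:ℂ)⁻¹)
        convert! this using 1
        have hsm : ∀ (L : ℂ →L[ℝ] ℂ) (v : ℂ), L ((r:ℂ) * v) = r * L v := fun L v => by
          rw [← Complex.real_smul, map_smul, Complex.real_smul]
        rw [map_neg, hsm]
        simp only [hH2]
        field_simp
      rw [intervalIntegral.integral_eq_sub_of_hasDerivAt hd 
        (Continuous.intervalIntegrable (by fun_prop) _ _)]
      simp [he]
    · exact i2
  rw [key, integral_const_mul, integral_add i1 (i2.const_mul _), integral_const_mul, k1, k2]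
  ring

lemma sp_wD_conv {g : ℂ → ℂ} (hg : ContDiff ℝ 1 g) (hgc : HasCompactSupport g) :
    Differentiable ℝ (fun z => (Real.pi : ℂ)⁻¹ * ∫ w, w⁻¹ * g (z - w)) ∧
    ∀ z, wDzbar (fun z => (Real.pi : ℂ)⁻¹ * ∫ w, w⁻¹ * g (z - w)) z = g z := by
  have hd : ∀ z, HasFDerivAt (fun z => ∫ w, w⁻¹ * g (z - w)) _ z := fun z =>
    hgc.hasFDerivAt_convolution_right (ContinuousLinearMap.mul ℝ ℂ) (μ := volume) sp_locInt hg z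
  have hd' := fun z => (hd z).const_mul (Real.pi : ℂ)⁻¹
  refine ⟨fun z => (hd' z).differentiableAt, fun z => ?_⟩
  have hcf : Continuous (fderiv ℝ g) := hg.continuous_fderiv one_ne_zero
  unfold wDzbar
  rw [(hd' z).fderiv]
  simp only [smul_apply, smul_eq_mul]
  have hv : ∀ v : ℂ, (convolution (fun w : ℂ => w⁻¹) (fderiv ℝ g) (ContinuousLinearMap.precompR ℂ (ContinuousLinearMap.mul ℝ ℂ)) volume z) v = ∫ w, w⁻¹ * fderiv ℝ g (z - w) v := by
    intro v
    exact convolution_precompR_apply (ContinuousLinearMap.mul ℝ ℂ) sp_locInt (hgc.fderiv ℝ) hcf z v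
  rw [hv, hv]
  have hint : ∀ v : ℂ, Integrable (fun w => w⁻¹ * fderiv ℝ g (z - w) v) := by
    intro v
    have hc : Continuous (fun w => fderiv ℝ g w v) := by fun_prop
    have hs : HasCompactSupport (fun w => fderiv ℝ g w v) := 
      (hgc.fderiv ℝ).comp_left (g := fun L : ℂ →L[ℝ] ℂ => L v) (by simp)
    obtain ⟨C, hC⟩ := hc.bounded_above_of_compact_support hs
    exact sp_kint (hc.integrable_of_hasCompactSupport hs) hC z
  have hP := sp_pompeiu hg hgc z
  have hpi : (Real.pi : ℂ) ≠ 0 := by exact_mod_cast Real.pi_ne_zero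
  have h3 : ∫ w, w⁻¹ * wDzbar g (z - w) = ((∫ w, w⁻¹ * fderiv ℝ g (z - w) 1) + Complex.I * ∫ w, w⁻¹ * fderiv ℝ g (z - w) Complex.I) / 2 := by
    rw [← integral_const_mul, ← integral_add (hint 1) ((hint _).const_mul _), ← integral_div]
    congr 1; ext w; unfold wDzbar; ring
  rw [h3] at hP
  generalize (∫ w : ℂ, w⁻¹ * fderiv ℝ g (z - w) 1) = A at hP ⊢
  generalize (∫ w : ℂ, w⁻¹ * fderiv ℝ g (z - w) Complex.I) = B at hP ⊢
  field_simp
  linear_combination 2 * hP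

lemma sp_approx {a : ℂ → ℂ} (ha : Measurable a) {M : ℝ} (hM : ∀ z, ‖a z‖ ≤ M)
    (hs : ∀ z, z ∉ ball (0:ℂ) 1 → a z = 0) :
    Integrable a ∧ ∃ b : ℕ → ℂ → ℂ, (∀ n, ContDiff ℝ 1 (b n)) ∧ (∀ n, HasCompactSupport (b n)) ∧
      (∀ n z, ‖b n z‖ ≤ M) ∧ Tendsto (fun n => ∫ z, ‖b n z - a z‖) atTop (𝓝 0) := by
  have hM0 : 0 ≤ M := (norm_nonneg _).trans (hM 0)
  have hai : Integrable a := by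
    have h1 : IntegrableOn a (ball 0 1) := 
      Measure.integrableOn_of_bounded (M := M) measure_ball_lt_top.ne ha.aestronglyMeasurable
        (Eventually.of_forall hM)
    exact h1.integrable_of_forall_notMem_eq_zero hs
  refine ⟨hai, ?_⟩
  let φ : ℕ → ContDiffBump (0:ℂ) := fun n =>
    { rIn := 1 / ((n:ℝ) + 2), rOut := 2 / ((n:ℝ) + 2), rIn_pos := by positivity
      rIn_lt_rOut := by gcongr; norm_num }
  have hout : ∀ n, (φ n).rOut ≤ 1 := fun n => by
    change 2 / ((n:ℝ) + 2) ≤ 1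
    rw [div_le_one (by positivity)]
    linarith [(Nat.cast_nonneg n : (0:ℝ) ≤ n)]
  let b : ℕ → ℂ → ℂ := fun n => 
    convolution ((φ n).normed volume) a (ContinuousLinearMap.lsmul ℝ ℝ) volume
  have hbM : ∀ n z, ‖b n z‖ ≤ M := fun n z => by
    rw [← dist_zero_right]
    exact dist_convolution_le hM0 (φ n).support_normed_eq.subset (φ n).nonneg_normed 
      (φ n).integral_normed ha.aestronglyMeasurable (fun x _ => by simpa using hM x)
  have hb0 : ∀ n z, z ∉ closedBall (0:ℂ) 2 → b n z = 0 := fun n z hz => by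
    rw [← dist_le_zero]
    refine dist_convolution_le le_rfl (φ n).support_normed_eq.subset (φ n).nonneg_normed 
      (φ n).integral_normed ha.aestronglyMeasurable (fun x hx => ?_)
    rw [hs x, dist_self]
    intro hx1
    apply hz
    simp only [mem_ball, mem_closedBall] at *
    have := dist_triangle_left z 0 x
    have := hout n
    linarith
  refine ⟨b, fun n => ?_, fun n => ?_, hbM, ?_⟩
  · exact (φ n).hasCompactSupport_normed.contDiff_convolution_left (n := 1) _ 
      (φ n).contDiff_normed hai.locallyIntegrable
  · exact HasCompactSupport.intro (isCompact_closedBall 0 2) (hb0 n)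
  · have hae := ContDiffBump.ae_convolution_tendsto_right_of_locallyIntegrable (φ := φ) 
      (l := atTop) (K := 2) (g := a) (μ := volume) ?_ ?_ hai.locallyIntegrable
    · have : Tendsto (fun n => ∫ z, ‖b n z - a z‖) atTop (𝓝 (∫ z : ℂ, (0:ℝ))) := by
        refine tendsto_integral_of_dominated_convergence 
          ((closedBall (0:ℂ) 2).indicator fun _ => 2 * M) ?_ ?_ ?_ ?_
        · intro n
          have : Continuous (b n) := 
            ((φ n).hasCompactSupport_normed.contDiff_convolution_left (n := 1) _ 
            (φ n).contDiff_normed hai.locallyIntegrable).continuous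
          exact (this.aestronglyMeasurable.sub ha.aestronglyMeasurable).norm
        · exact (integrable_indicator_iff measurableSet_closedBall).2 
            (integrableOn_const measure_closedBall_lt_top.ne)
        · intro n
          refine Eventually.of_forall fun z => ?_
          rw [norm_norm]
          by_cases hz : z ∈ closedBall (0:ℂ) 2
          · rw [indicator_of_mem hz]
            exact (norm_sub_le _ _).trans (by linarith [hbM n z, hM z])
          · rw [indicator_of_notMem hz, hb0 n z hz, hs z, sub_zero, norm_zero]
            intro h; apply hz
            exact ball_subset_closedBall.trans (closedBall_subset_closedBall (by norm_num)) h
        · filter_upwards [hae] with z hz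
          have := (hz.sub_const (a z)).norm
          simpa using this
      simpa using this
    · have h1 : Tendsto (fun n : ℕ => (n:ℝ) + 2) atTop atTop := 
        tendsto_atTop_add_const_right _ _ tendsto_natCast_atTop_atTop
      exact h1.const_div_atTop 2
    · refine Eventually.of_forall fun n => ?_
      change 2 / ((n:ℝ) + 2) ≤ 2 * (1 / ((n:ℝ) + 2))
      rw [mul_one_div]

lemma sp_dbar {a : ℂ → ℂ} (ha : Measurable a) {M : ℝ} (hM : ∀ z, ‖a z‖ ≤ M)
    (hs : ∀ z, z ∉ ball (0:ℂ) 1 → a z = 0) :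
    ∃ (u : ℂ → ℂ) (v b : ℕ → ℂ → ℂ), Continuous u ∧ (∀ n, Differentiable ℝ (v n)) ∧
      (∀ n z, wDzbar (v n) z = b n z) ∧ TendstoUniformly v u atTop ∧
      (∀ n, Continuous (b n)) ∧ (∀ n, Integrable (fun z => b n z - a z)) ∧
      Tendsto (fun n => ∫ z, ‖b n z - a z‖) atTop (𝓝 0) := by
  obtain ⟨hai, b, hb1, hbc, hbM, hbt⟩ := sp_approx ha hM hs
  have hM0 : 0 ≤ M := (norm_nonneg _).trans (hM 0)
  have hbi : ∀ n, Integrable (b n) := fun n => 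
    (hb1 n).continuous.integrable_of_hasCompactSupport (hbc n)
  set u : ℂ → ℂ := fun z => (Real.pi : ℂ)⁻¹ * ∫ w, w⁻¹ * a (z - w) with hu
  set v : ℕ → ℂ → ℂ := fun n z => (Real.pi : ℂ)⁻¹ * ∫ w, w⁻¹ * b n (z - w) with hv
  have hvd : ∀ n, Differentiable ℝ (v n) := fun n => (sp_wD_conv (hb1 n) (hbc n)).1
  have htu : TendstoUniformly v u atTop := by
    rw [Metric.tendstoUniformly_iff]
    intro ε hε
    have hpi : 1 ≤ Real.pi := by linarith [Real.pi_gt_three]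
    set δ : ℝ := ε / (2 * (2 * M + 1) * (2 * Real.pi)) with hδ
    have hδ0 : 0 < δ := by positivity
    have hev : ∀ᶠ n in atTop, ∫ z, ‖b n z - a z‖ < δ * (ε / 2) := 
      hbt.eventually_lt_const (by positivity)
    filter_upwards [hev] with n hn z
    have hdiff : v n z - u z = (Real.pi : ℂ)⁻¹ * ∫ w, w⁻¹ * (fun x => b n x - a x) (z - w) := by
      simp only [hu, hv, mul_sub]
      rw [integral_sub (sp_kint (hbi n) (hbM n) z) (sp_kint hai hM z), mul_sub]
    have hB := sp_bound (g := fun x => b n x - a x) (C := 2 * M) ((hbi n).sub hai) 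
      (fun x => (norm_sub_le _ _).trans (by linarith [hbM n x, hM x])) hδ0 z
    rw [dist_comm, dist_eq_norm, hdiff, norm_mul]
    have h1 : ‖(Real.pi : ℂ)⁻¹‖ ≤ 1 := by
      rw [norm_inv, Complex.norm_real, Real.norm_of_nonneg (by positivity)]
      exact inv_le_one_of_one_le₀ hpi
    have h2 : 2 * M * (2 * Real.pi * δ) ≤ ε / 2 := by
      have : (2 * M + 1) * (2 * Real.pi * δ) = ε / 2 := by
        rw [hδ]; field_simp
      have h3 : 0 ≤ 2 * Real.pi * δ := by positivity
      nlinarith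
    have h3 : δ⁻¹ * ∫ z, ‖b n z - a z‖ < ε / 2 := by
      rw [inv_mul_lt_iff₀ hδ0]; exact hn
    calc _ ≤ 1 * ‖∫ w, w⁻¹ * (fun x => b n x - a x) (z - w)‖ := by gcongr
      _ < ε := by linarith
  exact ⟨u, v, b, htu.continuous (Frequently.of_forall fun n => (hvd n).continuous), hvd,
    fun n => (sp_wD_conv (hb1 n) (hbc n)).2, htu, fun n => (hb1 n).continuous, 
    fun n => (hbi n).sub hai, hbt⟩

/-- Boundary integral over a rectangle. -/
noncomputable def spBd (G : ℂ → ℂ) (z w : ℂ) : ℂ :=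
  (∫ x : ℝ in z.re..w.re, G (x + z.im * Complex.I)) -
    (∫ x : ℝ in z.re..w.re, G (x + w.im * Complex.I)) +
    Complex.I • (∫ y : ℝ in z.im..w.im, G (w.re + y * Complex.I)) -
    Complex.I • ∫ y : ℝ in z.im..w.im, G (z.re + y * Complex.I)

lemma sp_iter_bound {H : ℂ → ℂ} {x0 x1 y0 y1 : ℝ}
    (hH : IntegrableOn H ((uIcc x0 x1) ×ℂ (uIcc y0 y1))) :
    ‖∫ x : ℝ in x0..x1, ∫ y : ℝ in y0..y1, H (x + y * Complex.I)‖ ≤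
      ∫ z in (uIcc x0 x1) ×ℂ (uIcc y0 y1), ‖H z‖ := by
  have he : MeasurableEmbedding Complex.measurableEquivRealProd.symm := 
    MeasurableEquiv.measurableEmbedding _
  have hp : Complex.measurableEquivRealProd.symm ⁻¹' ((uIcc x0 x1) ×ℂ (uIcc y0 y1)) = (uIcc x0 x1) ×ˢ (uIcc y0 y1) := rfl
  have hsymm : ∀ p : ℝ × ℝ, Complex.measurableEquivRealProd.symm p = p.1 + p.2 * Complex.I := fun p =>
    (Complex.mk_eq_add_mul_I p.1 p.2)
  have h1 : IntegrableOn (fun p : ℝ × ℝ => H (p.1 + p.2 * Complex.I)) ((uIcc x0 x1) ×ˢ (uIcc y0 y1)) := by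
    have := (Complex.volume_preserving_equiv_real_prod.symm.integrableOn_comp_preimage he).2 hH
    rw [hp] at this
    refine this.congr_fun (fun p _ => ?_) (measurableSet_uIcc.prod measurableSet_uIcc)
    simp [hsymm]
  have h2 : ∫ z in (uIcc x0 x1) ×ℂ (uIcc y0 y1), ‖H z‖ = ∫ p in (uIcc x0 x1) ×ˢ (uIcc y0 y1), ‖H ((p.1:ℝ) + (p.2:ℝ) * Complex.I)‖ := by
    have := Complex.volume_preserving_equiv_real_prod.symm.setIntegral_preimage_emb he (fun z => ‖H z‖) ((uIcc x0 x1) ×ℂ (uIcc y0 y1))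
    rw [← this, hp]
    refine setIntegral_congr_fun (measurableSet_uIcc.prod measurableSet_uIcc) (fun p _ => ?_)
    simp [hsymm]
  have h3 := h1.mono_set (prod_mono (uIoc_subset_uIcc (a := x0) (b := x1)) (uIoc_subset_uIcc (a := y0) (b := y1)))
  rw [h2]
  calc _ = ‖∫ x in uIoc x0 x1, ∫ y : ℝ in y0..y1, H (x + y * Complex.I)‖ := 
        intervalIntegral.norm_intervalIntegral_eq _ _ _ _
    _ ≤ ∫ x in uIoc x0 x1, ‖∫ y : ℝ in y0..y1, H (x + y * Complex.I)‖ := norm_integral_le_integral_norm _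
    _ = ∫ x in uIoc x0 x1, ‖∫ y in uIoc y0 y1, H (x + y * Complex.I)‖ := by
        simp only [intervalIntegral.norm_intervalIntegral_eq]
    _ ≤ ∫ x in uIoc x0 x1, ∫ y in uIoc y0 y1, ‖H (x + y * Complex.I)‖ := by
        rw [Measure.volume_eq_prod, IntegrableOn, ← Measure.prod_restrict] at h3
        refine integral_mono_of_nonneg (Eventually.of_forall fun _ => norm_nonneg _) 
          h3.norm.integral_prod_left (Eventually.of_forall fun x => norm_integral_le_integral_norm _)
    _ = ∫ p in uIoc x0 x1 ×ˢ uIoc y0 y1, ‖H ((p.1:ℝ) + (p.2:ℝ) * Complex.I)‖ := by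
        rw [Measure.volume_eq_prod] at h3 ⊢
        rw [setIntegral_prod _ h3.norm]
    _ ≤ _ := setIntegral_mono_set h1.norm (Eventually.of_forall fun _ => norm_nonneg _) 
        (LE.le.eventuallyLE (prod_mono uIoc_subset_uIcc uIoc_subset_uIcc))

lemma sp_bd_tendsto {G : ℕ → ℂ → ℂ} {G0 : ℂ → ℂ} {z w : ℂ} 
    (hc : ∀ n, ContinuousOn (G n) ((uIcc z.re w.re) ×ℂ (uIcc z.im w.im)))
    (ht : TendstoUniformlyOn G G0 atTop ((uIcc z.re w.re) ×ℂ (uIcc z.im w.im))) :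
    Tendsto (fun n => spBd (G n) z w) atTop (𝓝 (spBd G0 z w)) := by
  have hx : ∀ y : ℝ, y ∈ (uIcc z.im w.im) → 
      Tendsto (fun n => ∫ x : ℝ in z.re..w.re, G n (x + y * Complex.I)) atTop 
        (𝓝 (∫ x : ℝ in z.re..w.re, G0 (x + y * Complex.I))) := by
    intro y hy
    have hm : MapsTo (fun x : ℝ => (x:ℂ) + y * Complex.I) (uIcc z.re w.re) ((uIcc z.re w.re) ×ℂ (uIcc z.im w.im)) := by
      intro x hx
      simp [Complex.mem_reProdIm, hx, hy]
    refine TendstoUniformlyOn.tendsto_intervalIntegral_of_continuousOn (F := fun n (x:ℝ) => G n (x + y * Complex.I)) (Eventually.of_forall fun n => (hc n).comp (by fun_prop) hm) ?_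
    exact (ht.comp _).mono hm
  have hy : ∀ x : ℝ, x ∈ (uIcc z.re w.re) → 
      Tendsto (fun n => ∫ y : ℝ in z.im..w.im, G n (x + y * Complex.I)) atTop 
        (𝓝 (∫ y : ℝ in z.im..w.im, G0 (x + y * Complex.I))) := by
    intro x hx
    have hm : MapsTo (fun y : ℝ => (x:ℂ) + y * Complex.I) (uIcc z.im w.im) ((uIcc z.re w.re) ×ℂ (uIcc z.im w.im)) := by
      intro y hy
      simp [Complex.mem_reProdIm, hx, hy]
    refine TendstoUniformlyOn.tendsto_intervalIntegral_of_continuousOn (F := fun n (y:ℝ) => G n (x + y * Complex.I)) (Eventually.of_forall fun n => (hc n).comp (by fun_prop) hm) ?_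
    exact (ht.comp _).mono hm
  unfold spBd
  exact (((hx _ left_mem_uIcc).sub (hx _ right_mem_uIcc)).add ((hy _ right_mem_uIcc).const_smul _)).sub
    ((hy _ left_mem_uIcc).const_smul _)

lemma sp_bd_split {G : ℂ → ℂ} {z w : ℂ} {m : ℝ} (hm : m ∈ (uIcc z.im w.im))
    (hc : ContinuousOn G ((uIcc z.re w.re) ×ℂ (uIcc z.im w.im))) :
    spBd G z w = spBd G z (w.re + m * Complex.I) + spBd G (z.re + m * Complex.I) w := by
  have hy : ∀ x : ℝ, x ∈ (uIcc z.re w.re) → 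
      (∫ y : ℝ in z.im..m, G (x + y * Complex.I)) + (∫ y : ℝ in m..w.im, G (x + y * Complex.I)) =
        ∫ y : ℝ in z.im..w.im, G (x + y * Complex.I) := by
    intro x hx
    have hmp : MapsTo (fun y : ℝ => (x:ℂ) + y * Complex.I) (uIcc z.im w.im) ((uIcc z.re w.re) ×ℂ (uIcc z.im w.im)) := by
      intro y hy
      simp [Complex.mem_reProdIm, hx, hy]
    have hcc : ContinuousOn (fun y : ℝ => G ((x:ℂ) + y * Complex.I)) (uIcc z.im w.im) := 
      hc.comp (by fun_prop) hmp
    exact intervalIntegral.integral_add_adjacent_intervals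
      (hcc.mono (uIcc_subset_uIcc_left hm)).intervalIntegrable
      (hcc.mono (uIcc_subset_uIcc_right hm)).intervalIntegrable
  unfold spBd
  rw [← hy _ left_mem_uIcc, ← hy _ right_mem_uIcc]
  simp
  ring

lemma sp_wD_mul {F v : ℂ → ℂ} {x : ℂ} (hF : DifferentiableAt ℝ F x) (hv : DifferentiableAt ℝ v x) :
    DifferentiableAt ℝ (fun z => Complex.exp (-v z) * F z) x ∧
    wDzbar (fun z => Complex.exp (-v z) * F z) x = 
      Complex.exp (-v x) * (wDzbar F x - wDzbar v x * F x) := by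
  have h1 : HasFDerivAt (fun z => Complex.exp (-v z)) _ x := hv.hasFDerivAt.neg.cexp
  have h2 : HasFDerivAt (fun z => Complex.exp (-v z) * F z) _ x := h1.mul hF.hasFDerivAt
  refine ⟨h2.differentiableAt, ?_⟩
  unfold wDzbar
  rw [h2.fderiv]
  simp
  ring

lemma sp_rect {F u a : ℂ → ℂ} {v b : ℕ → ℂ → ℂ} {z w : ℂ}
    (hK : (uIcc z.re w.re) ×ℂ (uIcc z.im w.im) ⊆ ball (0:ℂ) 1)
    (hFc : ContinuousOn F (ball 0 1))
    (hFd : ∀ x ∈ ball (0:ℂ) 1, x.im ≠ 0 → DifferentiableAt ℝ F x ∧ wDzbar F x = a x * F x)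
    (him : ∀ x ∈ Ioo (min z.re w.re) (max z.re w.re) ×ℂ Ioo (min z.im w.im) (max z.im w.im), x.im ≠ 0)
    (hu : Continuous u) (hvd : ∀ n, Differentiable ℝ (v n))
    (hvb : ∀ n x, wDzbar (v n) x = b n x) (htu : TendstoUniformly v u atTop)
    (hbi : ∀ n, Integrable (fun z => b n z - a z))
    (hbt : Tendsto (fun n => ∫ z, ‖b n z - a z‖) atTop (𝓝 0)) :
    spBd (fun x => Complex.exp (-u x) * F x) z w = 0 := by
  set K := (uIcc z.re w.re) ×ℂ (uIcc z.im w.im) with hKdef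
  have hKc : IsCompact K := isCompact_uIcc.reProdIm isCompact_uIcc
  have hKm : MeasurableSet K := hKc.isClosed.measurableSet
  obtain ⟨B1, hB1⟩ := hKc.exists_bound_of_continuousOn (hFc.mono hK)
  obtain ⟨B2, hB2⟩ := hKc.exists_bound_of_continuousOn hu.continuousOn
  have hB10 : 0 ≤ B1 := (norm_nonneg _).trans (hB1 z ⟨left_mem_uIcc, left_mem_uIcc⟩)
  set G : ℕ → ℂ → ℂ := fun n x => Complex.exp (-v n x) * F x with hG
  have hexp : ∀ (y : ℂ) (C : ℝ), ‖y‖ ≤ C → ‖Complex.exp (-y)‖ ≤ Real.exp C := by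
    intro y C hy
    refine (Complex.norm_exp_le_exp_norm _).trans (Real.exp_le_exp.2 ?_)
    simpa using hy
  have hGc : ∀ n, ContinuousOn (G n) K := fun n => 
    ((hvd n).continuous.neg.cexp.continuousOn).mul (hFc.mono hK)
  have ht : TendstoUniformlyOn G (fun x => Complex.exp (-u x) * F x) atTop K := by
    rw [Metric.tendstoUniformlyOn_iff]
    intro ε hε
    set C := Real.exp B2 * (B1 + 1) with hC
    have hC0 : 0 < C := by positivity
    have hδ : 0 < min 1 (ε / (2 * C)) := by positivity
    filter_upwards [Metric.tendstoUniformly_iff.1 htu _ hδ] with n hn x hx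
    have h1 := hn x
    rw [dist_eq_norm] at h1 ⊢
    have e1 : Complex.exp (-u x) * F x - G n x = 
        -(Complex.exp (-u x) * F x * (Complex.exp (u x - v n x) - 1)) := by
      simp only [hG]
      have : Complex.exp (-v n x) = Complex.exp (-u x) * Complex.exp (u x - v n x) := by
        rw [← Complex.exp_add]; congr 1; ring
      rw [this]; ring
    rw [e1, norm_neg, norm_mul, norm_mul]
    have h2 := Complex.norm_exp_sub_one_le (h1.le.trans (min_le_left _ _))
    have h3 : ‖u x - v n x‖ < ε / (2 * C) := h1.trans_le (min_le_right _ _)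
    have h4 : ‖Complex.exp (-u x)‖ * ‖F x‖ ≤ C := by
      rw [hC]
      exact mul_le_mul (hexp _ _ (hB2 x hx)) ((hB1 x hx).trans (by linarith)) (norm_nonneg _) (by positivity)
    calc _ ≤ C * (2 * ‖u x - v n x‖) := by gcongr
      _ < C * (2 * (ε / (2 * C))) := by gcongr
      _ = ε := by field_simp
  have hlim := sp_bd_tendsto hGc ht
  set S : Set ℂ := ball (0:ℂ) 1 ∩ {x | x.im ≠ 0} with hS
  have hSm : MeasurableSet S := 
    measurableSet_ball.inter (isOpen_ne_fun Complex.continuous_im continuous_const).measurableSet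
  classical
  set G' : ℕ → ℂ → ℂ →L[ℝ] ℂ := fun n x => if x ∈ S then fderiv ℝ (G n) x else 0 with hG'
  set H : ℕ → ℂ → ℂ := fun n x => Complex.I • G' n x 1 - G' n x Complex.I with hH
  have hHS : ∀ n, ∀ x ∈ S, H n x = 2 * Complex.I * (Complex.exp (-v n x) * F x * (a x - b n x)) := by
    intro n x hx
    have h1 := hFd x hx.1 hx.2
    have h2 := (sp_wD_mul h1.1 (hvd n x)).2
    rw [h1.2, hvb] at h2
    have h3 : H n x = 2 * Complex.I * wDzbar (G n) x := by
      simp only [hH, hG', if_pos hx, wDzbar, smul_eq_mul]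
      linear_combination (- fderiv ℝ (G n) x Complex.I) * Complex.I_sq
    rw [h3, show wDzbar (G n) x = _ from h2]
    ring
  have hHn : ∀ n, ∀ x, x ∉ S → H n x = 0 := fun n x hx => by
    simp [hH, hG', if_neg hx]
  have hHm : ∀ n, Measurable (H n) := by
    intro n
    have : H n = S.indicator (fun x => Complex.I * fderiv ℝ (G n) x 1 - fderiv ℝ (G n) x Complex.I) := by
      ext x
      by_cases hx : x ∈ S
      · simp [hH, hG', hx]
      · rw [hHn n x hx, indicator_of_notMem hx]
    rw [this]
    exact (((measurable_fderiv_apply_const ℝ (G n) 1).const_mul _).sub 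
      (measurable_fderiv_apply_const ℝ (G n) Complex.I)).indicator hSm
  have hzero : Tendsto (fun n => spBd (G n) z w) atTop (𝓝 0) := by
    set B := 2 * (Real.exp (B2 + 1) * B1) with hB
    have hB0 : 0 ≤ B := by positivity
    have hlim0 : Tendsto (fun n => B * ∫ z, ‖b n z - a z‖) atTop (𝓝 0) := by
      simpa using hbt.const_mul B
    refine squeeze_zero_norm' ?_ hlim0
    filter_upwards [Metric.tendstoUniformly_iff.1 htu 1 one_pos] with n hn
    have hbd : ∀ x ∈ K, ‖H n x‖ ≤ B * ‖b n x - a x‖ := by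
      intro x hx
      by_cases hxS : x ∈ S
      · rw [hHS n x hxS, norm_mul, norm_mul, norm_mul, norm_mul, norm_sub_rev (a x)]
        have h1 := hn x
        rw [dist_comm, dist_eq_norm] at h1
        have h2 : ‖v n x‖ ≤ B2 + 1 := by
          have := norm_add_le (u x) (v n x - u x)
          rw [add_sub_cancel] at this
          linarith [hB2 x hx]
        simp only [Complex.norm_ofNat, Complex.norm_I, mul_one]
        rw [hB, mul_assoc 2 (Real.exp (B2+1) * B1)]
        gcongr
        · exact hexp _ _ h2
        · exact hB1 x hx
      · rw [hHn n x hxS, norm_zero]; positivity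
    have hdi : IntegrableOn (fun x => B * ‖b n x - a x‖) K := ((hbi n).norm.const_mul B).integrableOn
    have hHi : IntegrableOn (H n) K := 
      Integrable.mono' hdi (hHm n).aestronglyMeasurable 
        ((ae_restrict_iff' hKm).2 (Eventually.of_forall hbd))
    have hst := Complex.integral_boundary_rect_of_continuousOn_of_hasFDerivAt_real (G n) (G' n) z w
      (hGc n) (by
        intro x hx
        have hxK : x ∈ K := ⟨Ioo_subset_Icc_self hx.1, Ioo_subset_Icc_self hx.2⟩
        have hxS : x ∈ S := ⟨hK hxK, him x hx⟩
        simp only [hG', if_pos hxS]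
        exact (sp_wD_mul (hFd x hxS.1 hxS.2).1 (hvd n x)).1.hasFDerivAt) hHi
    change spBd (G n) z w = _ at hst
    rw [hst]
    refine (sp_iter_bound hHi).trans ?_
    calc ∫ x in K, ‖H n x‖ ≤ ∫ x in K, B * ‖b n x - a x‖ := 
          setIntegral_mono_on hHi.norm hdi hKm hbd
      _ ≤ ∫ x, B * ‖b n x - a x‖ := 
          setIntegral_le_integral ((hbi n).norm.const_mul B) (Eventually.of_forall fun x => by positivity)
      _ = _ := integral_const_mul _ _
  exact tendsto_nhds_unique hlim hzero

lemma sp_holo {F : ℂ → ℂ} {M : ℝ} (hM : 0 ≤ M) (hFc : ContinuousOn F (ball 0 1))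
    (hFd : ∀ x ∈ ball (0:ℂ) 1, x.im ≠ 0 → DifferentiableAt ℝ F x ∧ ‖wDzbar F x‖ ≤ M * ‖F x‖) :
    ∃ u : ℂ → ℂ, Continuous u ∧ DifferentiableOn ℂ (fun x => Complex.exp (-u x) * F x) (ball 0 1) := by
  classical
  set S : Set ℂ := ball (0:ℂ) 1 ∩ {x | x.im ≠ 0} with hS
  have hSm : MeasurableSet S := 
    measurableSet_ball.inter (isOpen_ne_fun Complex.continuous_im continuous_const).measurableSet
  set F0 : ℂ → ℂ := (ball (0:ℂ) 1).piecewise F (fun _ => 0) with hF0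
  have hF0m : Measurable F0 := hFc.measurable_piecewise continuousOn_const measurableSet_ball
  set a : ℂ → ℂ := S.indicator (fun x => wDzbar F x / F0 x) with ha
  have haS : ∀ x ∈ S, a x = wDzbar F x / F x := fun x hx => by
    rw [ha, indicator_of_mem hx, hF0, piecewise_eq_of_mem _ _ _ hx.1]
  have ham : Measurable a := by
    refine Measurable.indicator (Measurable.div ?_ hF0m) hSm
    unfold wDzbar
    exact ((measurable_fderiv_apply_const ℝ F 1).add 
      ((measurable_fderiv_apply_const ℝ F Complex.I).const_mul _)).div_const _
  have haM : ∀ x, ‖a x‖ ≤ M := by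
    intro x
    by_cases hx : x ∈ S
    · rw [haS x hx, norm_div]
      exact div_le_of_le_mul₀ (norm_nonneg _) hM (hFd x hx.1 hx.2).2
    · rw [ha, indicator_of_notMem hx, norm_zero]; exact hM
  have has : ∀ x, x ∉ ball (0:ℂ) 1 → a x = 0 := fun x hx => 
    indicator_of_notMem (fun h => hx h.1) _
  have hFd' : ∀ x ∈ ball (0:ℂ) 1, x.im ≠ 0 → DifferentiableAt ℝ F x ∧ wDzbar F x = a x * F x := by
    intro x hx hi
    obtain ⟨h1, h2⟩ := hFd x hx hi
    refine ⟨h1, ?_⟩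
    rw [haS x ⟨hx, hi⟩]
    by_cases h0 : F x = 0
    · rw [h0, norm_zero, mul_zero] at h2
      rw [h0, mul_zero]; exact norm_le_zero_iff.1 h2
    · rw [div_mul_cancel₀ _ h0]
  obtain ⟨u, v, b, hu, hvd, hvb, htu, hbc, hbi, hbt⟩ := sp_dbar ham haM has
  have hGc : ContinuousOn (fun x => Complex.exp (-u x) * F x) (ball 0 1) := 
    (hu.neg.cexp.continuousOn).mul hFc
  refine ⟨u, hu, ?_⟩
  have hcons : Complex.IsConservativeOn (fun x => Complex.exp (-u x) * F x) (ball 0 1) := by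
    intro z w hzw
    rw [← add_eq_zero_iff_eq_neg, Complex.wedgeIntegral_add_wedgeIntegral_eq]
    change spBd (fun x => Complex.exp (-u x) * F x) z w = 0
    have hK : (uIcc z.re w.re) ×ℂ (uIcc z.im w.im) ⊆ ball (0:ℂ) 1 := hzw
    by_cases h0 : (0:ℝ) ∈ uIcc z.im w.im
    · rw [sp_bd_split h0 (hGc.mono hK)]
      rw [sp_rect (w := w.re + (0:ℝ) * Complex.I) ?_ hFc hFd' ?_ hu hvd hvb htu hbi hbt, 
        sp_rect (z := z.re + (0:ℝ) * Complex.I) ?_ hFc hFd' ?_ hu hvd hvb htu hbi hbt, add_zero]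
      · refine Subset.trans ?_ hK
        rintro x ⟨h1, h2⟩
        exact ⟨by simpa using h1, uIcc_subset_uIcc_right h0 (by simpa using h2)⟩
      · rintro x ⟨h1, h2⟩ hx
        simp [hx] at h2
        grind
      · refine Subset.trans ?_ hK
        rintro x ⟨h1, h2⟩
        exact ⟨by simpa using h1, uIcc_subset_uIcc_left h0 (by simpa using h2)⟩
      · rintro x ⟨h1, h2⟩ hx
        simp [hx] at h2
        grind
    · refine sp_rect hK hFc hFd' ?_ hu hvd hvb htu hbi hbt
      rintro x ⟨h1, h2⟩ hx
      apply h0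
      have : x.im ∈ uIcc z.im w.im := Ioo_subset_Icc_self h2
      rwa [hx] at this
  exact (hcons.isExactOn_ball hGc).differentiableOn isOpen_ball

lemma sp_mem_closure {z : ℂ} (hz : z ∈ ball (0:ℂ) 1) (hi : 0 ≤ z.im) :
    z ∈ closure {z ∈ ball (0:ℂ) 1 | 0 < z.im} := by
  have ht : Tendsto (fun t : ℝ => z + t * Complex.I) (𝓝[>] 0) (𝓝 z) := by
    have : Continuous (fun t : ℝ => z + t * Complex.I) := by fun_prop
    have h1 := this.tendsto 0
    simp only [Complex.ofReal_zero, zero_mul, add_zero] at h1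
    exact h1.mono_left nhdsWithin_le_nhds
  refine mem_closure_of_tendsto ht ?_
  filter_upwards [ht.eventually (isOpen_ball.mem_nhds hz), self_mem_nhdsWithin] with t h1 h2
  refine ⟨h1, ?_⟩
  have : (0:ℝ) < t := h2
  simp; linarith

lemma sp_closure_im {z : ℂ} (hz : z ∈ closure {z ∈ ball (0:ℂ) 1 | 0 < z.im}) : 0 ≤ z.im := by
  have hc : IsClosed {z : ℂ | 0 ≤ z.im} := isClosed_le continuous_const Complex.continuous_im
  exact closure_minimal (fun x hx => le_of_lt hx.2) hc hz

lemma sp_wD_conj {f : ℂ → ℂ} {z : ℂ} (hf : DifferentiableAt ℝ f (starRingEnd ℂ z)) :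
    DifferentiableAt ℝ (fun x => starRingEnd ℂ (f (starRingEnd ℂ x))) z ∧
    wDzbar (fun x => starRingEnd ℂ (f (starRingEnd ℂ x))) z = 
      starRingEnd ℂ (wDzbar f (starRingEnd ℂ z)) := by
  have hc : ∀ y : ℂ, HasFDerivAt (fun x : ℂ => starRingEnd ℂ x) (Complex.conjCLE : ℂ →L[ℝ] ℂ) y := 
    fun y => (Complex.conjCLE : ℂ →L[ℝ] ℂ).hasFDerivAt
  have h1 : HasFDerivAt (fun x => starRingEnd ℂ (f (starRingEnd ℂ x))) _ z := 
    (hc _).comp z (hf.hasFDerivAt.comp z (hc z))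
  refine ⟨h1.differentiableAt, ?_⟩
  unfold wDzbar
  rw [h1.fderiv]
  have h2 : (starRingEnd ℂ) 2 = 2 := map_ofNat _ 2
  simp [h2]

lemma sp_refl {f : ℂ → ℂ} {M : ℝ}
    (hfc : ContinuousOn f (closure {z ∈ ball (0:ℂ) 1 | 0 < z.im}))
    (hf1 : ContDiffOn ℝ 1 f {z ∈ ball (0:ℂ) 1 | 0 < z.im})
    (hfreal : ∀ z ∈ ball (0:ℂ) 1, z.im = 0 → (f z).im = 0)
    (hineq : ∀ z ∈ ball (0:ℂ) 1, 0 < z.im → ‖wDzbar f z‖ ≤ M * ‖f z‖) :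
    ∃ F : ℂ → ℂ, (∀ z, 0 ≤ z.im → F z = f z) ∧ ContinuousOn F (ball 0 1) ∧
      ∀ x ∈ ball (0:ℂ) 1, x.im ≠ 0 → DifferentiableAt ℝ F x ∧ ‖wDzbar F x‖ ≤ M * ‖F x‖ := by
  classical
  set g : ℂ → ℂ := fun x => starRingEnd ℂ (f (starRingEnd ℂ x)) with hg
  set F : ℂ → ℂ := fun z => if 0 ≤ z.im then f z else g z with hF
  have hFu : ∀ z, 0 ≤ z.im → F z = f z := fun z hz => if_pos hz
  have hcb : ∀ z : ℂ, z ∈ ball (0:ℂ) 1 → starRingEnd ℂ z ∈ ball (0:ℂ) 1 := fun z hz => by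
    simpa using hz
  have hFl : ∀ z ∈ ball (0:ℂ) 1, z.im ≤ 0 → F z = g z := by
    intro z hz hi
    rcases hi.lt_or_eq with h | h
    · exact if_neg (not_le.2 h)
    · rw [hFu z h.ge]
      have h1 : starRingEnd ℂ z = z := Complex.conj_eq_iff_im.2 h
      simp only [hg, h1]
      exact (Complex.conj_eq_iff_im.2 (hfreal z hz h)).symm
  have hop : IsOpen {z : ℂ | z ∈ ball (0:ℂ) 1 ∧ 0 < z.im} := 
    isOpen_ball.inter (isOpen_lt continuous_const Complex.continuous_im)
  have hdf : ∀ z ∈ ball (0:ℂ) 1, 0 < z.im → DifferentiableAt ℝ f z := fun z hz hi => 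
    ((hf1.differentiableOn (by norm_num)) z ⟨hz, hi⟩).differentiableAt (hop.mem_nhds ⟨hz, hi⟩)
  refine ⟨F, hFu, ?_, ?_⟩
  · set A : Set ℂ := ball (0:ℂ) 1 ∩ {z | 0 ≤ z.im} with hA
    set B : Set ℂ := ball (0:ℂ) 1 ∩ {z | z.im ≤ 0} with hB
    have hAc : ContinuousOn F A := 
      (hfc.mono fun x hx => sp_mem_closure hx.1 hx.2).congr fun x hx => hFu x hx.2
    have hBc : ContinuousOn F B := by
      have : ContinuousOn g B := by
        refine Complex.continuous_conj.comp_continuousOn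
          (hfc.comp Complex.continuous_conj.continuousOn fun x hx => ?_)
        have h2 : x.im ≤ 0 := hx.2
        exact sp_mem_closure (hcb x hx.1) (by simpa using h2)
      exact this.congr fun x hx => hFl x hx.1 hx.2
    intro z hz
    have hAB : ball (0:ℂ) 1 = A ∪ B := by
      rw [hA, hB, ← inter_union_distrib_left]
      refine (inter_eq_left.2 fun x _ => ?_).symm
      exact le_total 0 x.im
    rw [hAB]
    refine ContinuousWithinAt.union ?_ ?_
    · by_cases hi : 0 ≤ z.im
      · exact hAc z ⟨hz, hi⟩
      · refine continuousWithinAt_of_notMem_closure fun hcl => hi ?_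
        exact closure_minimal (fun x hx => hx.2) 
          (isClosed_le continuous_const Complex.continuous_im) hcl
    · by_cases hi : z.im ≤ 0
      · exact hBc z ⟨hz, hi⟩
      · refine continuousWithinAt_of_notMem_closure fun hcl => hi ?_
        exact closure_minimal (fun x hx => hx.2) 
          (isClosed_le Complex.continuous_im continuous_const) hcl
  · intro z hz hi
    rcases lt_or_gt_of_ne hi with hl | hu
    · have hev : F =ᶠ[𝓝 z] g := by
        filter_upwards [isOpen_ball.mem_nhds hz, 
          (isOpen_lt Complex.continuous_im continuous_const).mem_nhds hl] with x h1 h2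
        exact hFl x h1 (le_of_lt h2)
      have hl' : 0 < (starRingEnd ℂ z).im := by simpa using hl
      have h3 := sp_wD_conj (hdf _ (hcb z hz) hl')
      refine ⟨h3.1.congr_of_eventuallyEq hev, ?_⟩
      have h4 : wDzbar F z = wDzbar g z := by
        unfold wDzbar; rw [hev.fderiv_eq]
      rw [h4, show wDzbar g z = _ from h3.2, hev.eq_of_nhds, hg]
      simp only [RCLike.norm_conj]
      exact hineq _ (hcb z hz) hl'
    · have hev : F =ᶠ[𝓝 z] f := by
        filter_upwards [(isOpen_lt continuous_const Complex.continuous_im).mem_nhds hu] with x h2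
        exact hFu x (le_of_lt h2)
      refine ⟨(hdf z hz hu).congr_of_eventuallyEq hev, ?_⟩
      have h4 : wDzbar F z = wDzbar f z := by
        unfold wDzbar; rw [hev.fderiv_eq]
      rw [h4, hev.eq_of_nhds]
      exact hineq z hz hu

end SimilarityPrinciple

/-- Boundary variant of the similarity principle: if `f` is continuous on the closed upper
half-disk, `C¹` and satisfying `|∂_z̄ f| ≤ h |f|` on the open upper half-disk, real on the
real diameter, and `f(0) = 0`, then either `f ≡ 0` near `0` or `f(z) = z^k f̃(z)` with `f̃`
continuous and `f̃(0) ≠ 0`. -/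
theorem stmt16
    (D : Set ℂ) (hD : D = Metric.ball (0:ℂ) 1)
    (Dp : Set ℂ) (hDp : Dp = {z ∈ D | 0 < z.im})
    (f : ℂ → ℂ)
    (hfc : ContinuousOn f (closure Dp))
    (hf1 : ContDiffOn ℝ 1 f Dp)
    (hfreal : ∀ z ∈ D, z.im = 0 → (f z).im = 0)
    (h : ℂ → ℝ) (hh : ContinuousOn h (closure D))
    (hhnn : ∀ z ∈ closure D, 0 ≤ h z)
    (hineq : ∀ z ∈ Dp, ‖wDzbar f z‖ ≤ h z * ‖f z‖)
    (hf0 : f 0 = 0) :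
    (∃ V : Set ℂ, IsOpen V ∧ (0:ℂ) ∈ V ∧ ∀ z ∈ V ∩ closure Dp, f z = 0) ∨
    (∃ k : ℕ, 1 ≤ k ∧ ∃ V : Set ℂ, IsOpen V ∧ (0:ℂ) ∈ V ∧
      ∃ ft : ℂ → ℂ, ContinuousOn ft (V ∩ closure Dp) ∧ ft 0 ≠ 0 ∧
        ∀ z ∈ V ∩ closure Dp, f z = z ^ k * ft z) := by
  subst hD hDp
  have hcl : closure (Metric.ball (0:ℂ) 1) = Metric.closedBall 0 1 := closure_ball _ one_ne_zero
  have hcomp : IsCompact (closure (Metric.ball (0:ℂ) 1)) := by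
    rw [hcl]; exact isCompact_closedBall _ _
  obtain ⟨M, hM⟩ := hcomp.exists_bound_of_continuousOn hh
  have h0b : (0:ℂ) ∈ Metric.ball (0:ℂ) 1 := Metric.mem_ball_self one_pos
  have hM0 : 0 ≤ M := (norm_nonneg _).trans (hM 0 (subset_closure h0b))
  obtain ⟨F, hFu, hFc, hFd⟩ := sp_refl (M := M) hfc hf1 hfreal (fun z hz hi => by
    refine (hineq z ⟨hz, hi⟩).trans ?_
    gcongr
    exact (le_abs_self _).trans (hM z (subset_closure hz)))
  obtain ⟨u, hu, hG⟩ := sp_holo hM0 hFc hFd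
  have hana : AnalyticAt ℂ (fun x => Complex.exp (-u x) * F x) 0 := 
    hG.analyticAt (Metric.isOpen_ball.mem_nhds h0b)
  rcases hana.eventually_eq_zero_or_eventually_ne_zero with hz | hnz
  · left
    obtain ⟨V, hV, hVo, h0V⟩ := eventually_nhds_iff.1 hz
    refine ⟨V, hVo, h0V, fun z hzV => ?_⟩
    have h1 := hV z hzV.1
    rw [hFu z (sp_closure_im hzV.2)] at h1
    exact (mul_eq_zero.1 h1).resolve_left (Complex.exp_ne_zero _)
  · right
    have hne : ¬ ∀ᶠ z in nhds (0:ℂ), Complex.exp (-u z) * F z = 0 := fun hz => by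
      obtain ⟨z, h1, h2⟩ := ((hz.filter_mono nhdsWithin_le_nhds).and hnz).exists
      exact h2 h1
    obtain ⟨k, g, hg, hg0, hev⟩ := hana.exists_eventuallyEq_pow_smul_nonzero_iff.2 hne
    obtain ⟨V, hV, hVo, h0V⟩ := eventually_nhds_iff.1 (hev.and hg.eventually_analyticAt)
    refine ⟨k, ?_, V, hVo, h0V, fun z => Complex.exp (u z) * g z, ?_, ?_, ?_⟩
    · rcases Nat.eq_zero_or_pos k with hk | hk
      · exfalso
        have h1 := (hV 0 h0V).1
        rw [hFu 0 le_rfl, hf0, hk] at h1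
        simp at h1
        exact hg0 h1.symm
      · exact hk
    · intro z hz
      exact (hu.cexp.continuousAt.mul (hV z hz.1).2.continuousAt).continuousWithinAt
    · exact mul_ne_zero (Complex.exp_ne_zero _) hg0
    · intro z hz
      have h1 := (hV z hz.1).1
      rw [hFu z (sp_closure_im hz.2)] at h1
      simp only [sub_zero, smul_eq_mul] at h1
      calc f z = Complex.exp (u z) * (Complex.exp (-u z) * f z) := by
            rw [← mul_assoc, ← Complex.exp_add]; simp
        _ = _ := by rw [h1]; ring
end
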